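/- arXiv:2211.11023 — 2 statements merged into one kernel-verified Lean document; each statement's English description precedes it below -/
import Mathlib

section
/- There exists an absolute constant C > 0 such that for all integers n > m ≥ 1, writing u = n/m, there is a real number E with |E| ≤ C·( n^{−1/m}/(1 − n^{−1/m}) + (m/n)/(1 − (m/n)^{1/m}) ) such that | p_{n,m} · √(2π·n·m) · exp( u·log n − u − ∑_{i=1}^{m} d_{m,i}·n^{1−i/m} − E ) − 1 | ≤ C / max{ log u, n^{1/m} }. -/
open Real

noncomputable section

/-- Predicate characterizing the Dickman function `ρ : [0,∞) → (0,∞)`: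
continuous on `[0,∞)`, positive, equal to `1` on `[0,1]`, and satisfying the
delay differential equation `t·ρ'(t) + ρ(t-1) = 0` for `t > 1`. -/
def IsDickman (ρ : ℝ → ℝ) : Prop :=
  ContinuousOn ρ (Set.Ici 0) ∧
  (∀ t : ℝ, 0 ≤ t → 0 < ρ t) ∧
  (∀ t ∈ Set.Icc (0:ℝ) 1, ρ t = 1) ∧
  (∀ t : ℝ, 1 < t → HasDerivAt ρ (-(ρ (t - 1)) / t) t)

/-- `ξ(u)`: for `u > 1`, the unique positive solution of `e^ξ = 1 + u·ξ`; otherwise `0`. -/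
def xi (u : ℝ) : ℝ :=
  open Classical in
  if h : ∃ x : ℝ, 0 < x ∧ Real.exp x = 1 + u * x then h.choose else 0

/-- `p_{n,m}`: probability that a uniformly random permutation of `{1,…,n}` is `m`-friable,
i.e. has no cycle of length greater than `m`. -/
def permProb (n m : ℕ) : ℝ :=
  (Nat.card {σ : Equiv.Perm (Fin n) // ∀ c ∈ σ.cycleType, c ≤ m} : ℝ) /
    (Nat.factorial n : ℝ)

/-- `p_{n,m,q}`: proportion of monic polynomials of degree `n` over a finite field `F`
(of cardinality `q`) that are `m`-friable, i.e. all of whose monic irreducible factors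
have degree at most `m`. -/
def polyProb (F : Type) [Field F] [Fintype F] (n m : ℕ) : ℝ :=
  (Nat.card {f : Polynomial F // f.Monic ∧ f.natDegree = n ∧
      ∀ p : Polynomial F, p.Monic → Irreducible p → p ∣ f → p.natDegree ≤ m} : ℝ) /
    (Fintype.card F : ℝ) ^ n

/-- `F_q(z) = ∏_{deg P ≤ m} (1 - (z/q)^{deg P})⁻¹`, the product over monic irreducible
polynomials `P` over `F` of degree at most `m`. -/
def FqFun (F : Type) [Field F] [Fintype F] (m : ℕ) (z : ℝ) : ℝ :=
  ∏ᶠ p ∈ {p : Polynomial F | p.Monic ∧ Irreducible p ∧ p.natDegree ≤ m},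
    (1 - (z / (Fintype.card F : ℝ)) ^ p.natDegree)⁻¹

/-- `G_q(z) = F_q(z) · exp(-∑_{i=1}^m z^i/i)`. -/
def Gq (F : Type) [Field F] [Fintype F] (m : ℕ) (z : ℝ) : ℝ :=
  FqFun F m z * Real.exp (-(∑ i ∈ Finset.Icc 1 m, z ^ i / (i : ℝ)))

/-- The coefficients `d_{m,i}`. -/
def dcoef (m i : ℕ) : ℝ :=
  if i = m then -(1 / (m : ℝ)) * ∑ j ∈ Finset.Icc 2 m, (1 : ℝ) / (j : ℝ)
  else Real.Gamma ((i : ℝ) + (i : ℝ) / (m : ℝ)) /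
    (((m : ℝ) - (i : ℝ)) * (Nat.factorial i : ℝ) * Real.Gamma (1 + (i : ℝ) / (m : ℝ)))

/-- `T(s) = ∫₀^s ((e^t - 1)/t)·((t/m)/(1 - e^{-t/m}) - 1) dt`, integrand extended by `0` at `t = 0`. -/
def Tfun (m : ℕ) (s : ℝ) : ℝ :=
  ∫ t in (0:ℝ)..s,
    if t = 0 then 0 else
      ((Real.exp t - 1) / t) * ((t / (m : ℝ)) / (1 - Real.exp (-t / (m : ℝ))) - 1)

end


/-! ## Part 1: combinatorics -/
section Part1
open PowerSeries Finset
open scoped PowerSeries.WithPiTopology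

/-- exponential series of `X^i/i` -/
noncomputable def Efac (i : ℕ) : PowerSeries ℝ :=
  PowerSeries.mk fun k => if i ∣ k then (1 / (i:ℝ)) ^ (k / i) / ((k / i).factorial : ℝ) else 0

noncomputable def Pser (m : ℕ) : PowerSeries ℝ := ∏ i ∈ Finset.range m, Efac (i + 1)

noncomputable def pc (m n : ℕ) : ℝ := PowerSeries.coeff n (Pser m)

noncomputable def fchar (m i c : ℕ) : ℝ := if i ≤ m then (1 / (i:ℝ)) ^ c / (c.factorial : ℝ) else 0

lemma tsum_factor (i : ℕ) (g : ℕ → ℝ) (hg0 : g 0 = 1) :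
    (1 : PowerSeries ℝ) + ∑' j, g (j + 1) • X ^ ((i + 1) * (j + 1)) =
    PowerSeries.mk fun k => if (i+1) ∣ k then g (k / (i+1)) else 0 := by
  ext k
  have hs := Nat.Partition.summable_genFun_term (R := ℝ) (fun _ c => g c) i
  rw [map_add, hs.map_tsum _ (WithPiTopology.continuous_coeff _ _), coeff_mk]
  simp only [coeff_smul, coeff_X_pow, smul_eq_mul, mul_ite, mul_one, mul_zero]
  by_cases hd : (i + 1) ∣ k
  · obtain ⟨c, rfl⟩ := hd
    rcases c with _ | c
    · simp [hg0]
    · rw [tsum_eq_single c]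
      · simp
      · intro b hb
        rw [if_neg]
        intro h
        have := Nat.eq_of_mul_eq_mul_left (Nat.succ_pos i) h
        omega
  · rw [if_neg hd]
    have hk : k ≠ 0 := by rintro rfl; simp at hd
    have : ∀ j, ¬ (k = (i+1) * (j+1)) := fun j h => hd ⟨_, h⟩
    simp [this, coeff_one, hk]

lemma genFun_eq (m : ℕ) : Nat.Partition.genFun (fchar m) = Pser m := by
  have h1 := Nat.Partition.hasProd_genFun (fchar m)
  have hf : ∀ i, (1 : PowerSeries ℝ) + ∑' j, fchar m (i + 1) (j + 1) • X ^ ((i + 1) * (j + 1)) =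
      if i < m then Efac (i+1) else 1 := by
    intro i
    split_ifs with h
    · rw [tsum_factor i (fun c => fchar m (i+1) c) (by simp [fchar, h])]
      unfold Efac fchar
      have : i + 1 ≤ m := h
      simp [this]
    · have : ∀ j, fchar m (i+1) (j+1) = 0 := by
        intro j; unfold fchar; rw [if_neg]; omega
      simp [this]
  simp only [hf] at h1
  have h2 : HasProd (fun i => if i < m then Efac (i+1) else 1) (Pser m) := by
    have := hasProd_prod_of_ne_finset_one (f := fun i => if i < m then Efac (i+1) else 1)
      (s := Finset.range m) (L := SummationFilter.unconditional ℕ) (by intro b hb; simp at hb; simp [hb])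
    convert this using 1
    unfold Pser
    exact Finset.prod_congr rfl fun i hi => by simp [Finset.mem_range.1 hi]
  exact h1.unique h2

lemma parts_decomp {N : ℕ} (p : N.Partition) :
    p.parts = p.parts.filter (fun n => 2 ≤ n) + Multiset.replicate (p.parts.count 1) 1 := by
  conv_lhs => rw [← Multiset.filter_add_not (fun n => 2 ≤ n) p.parts]
  congr 1
  rw [← Multiset.filter_eq', ]
  apply Multiset.filter_congr
  intro x hx
  have := p.parts_pos hx
  omega

lemma partition_eq_iff (n : ℕ) (p : (Fintype.card (Fin n)).Partition) (σ : Equiv.Perm (Fin n)) :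
    σ.partition = p ↔ σ.cycleType = p.parts.filter (fun n => 2 ≤ n) := by
  constructor
  · rintro rfl
    exact Equiv.Perm.filter_parts_partition_eq_cycleType.symm
  · intro h
    have h1 := parts_decomp p
    have h2 := parts_decomp σ.partition
    rw [Equiv.Perm.filter_parts_partition_eq_cycleType, h] at h2
    have s1 := p.parts_sum
    have s2 := σ.partition.parts_sum
    rw [h1] at s1
    rw [h2] at s2
    simp only [Multiset.sum_add, Multiset.sum_replicate, smul_eq_mul, mul_one] at s1 s2
    have h3 : σ.partition.parts.count 1 = p.parts.count 1 := by omega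
    ext1
    rw [h2, h3, ← h1]

lemma card_partition (n : ℕ) (p : (Fintype.card (Fin n)).Partition) :
    ((Finset.univ.filter (fun σ : Equiv.Perm (Fin n) => σ.partition = p)).card : ℝ) / n.factorial =
      ∏ i ∈ p.parts.toFinset, ((1 / (i:ℝ)) ^ (p.parts.count i) / ((p.parts.count i).factorial : ℝ)) := by
  simp only [partition_eq_iff]
  set M := p.parts.filter (fun n => 2 ≤ n) with hM
  have h1 := parts_decomp p
  rw [← hM] at h1
  have s1 := p.parts_sum
  rw [h1] at s1
  simp only [Multiset.sum_add, Multiset.sum_replicate, smul_eq_mul, mul_one] at s1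
  have key := Equiv.Perm.card_of_cycleType_mul_eq (α := Fin n) M
  rw [if_pos ⟨by omega, by intro a ha; exact (Multiset.mem_filter.1 ha).2⟩] at key
  have e1 : Fintype.card (Fin n) - M.sum = p.parts.count 1 := by omega
  rw [e1] at key
  have e2 : p.parts.prod = M.prod := by
    conv_lhs => rw [h1]
    simp
  have e3 : ∏ i ∈ p.parts.toFinset, i ^ p.parts.count i = M.prod := by
    rw [← e2, Finset.prod_multiset_count]
  have h1M : 1 ∉ M.toFinset := by simp [hM]
  have e4 : ∏ i ∈ p.parts.toFinset, (p.parts.count i).factorial =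
      (p.parts.count 1).factorial * ∏ i ∈ M.toFinset, (M.count i).factorial := by
    have : ∀ i ∈ M.toFinset, (M.count i).factorial = (p.parts.count i).factorial := by
      intro i hi
      have : 2 ≤ i := by
        rw [Multiset.mem_toFinset] at hi
        exact (Multiset.mem_filter.1 hi).2
      rw [hM, Multiset.count_filter_of_pos this]
    rw [Finset.prod_congr rfl this, ← Finset.prod_insert (f := fun i => (p.parts.count i).factorial) h1M]
    apply Finset.prod_subset
    · intro i hi
      rw [Multiset.mem_toFinset] at hi
      have hp := p.parts_pos hi
      rw [Finset.mem_insert, Multiset.mem_toFinset]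
      by_cases h : i = 1
      · left; exact h
      · right
        exact Multiset.mem_filter.2 ⟨hi, by omega⟩
    · intro i _ hi
      rw [Multiset.mem_toFinset] at hi
      rw [Multiset.count_eq_zero_of_notMem hi]; rfl
  rw [Finset.prod_div_distrib]
  have e5 : ∏ i ∈ p.parts.toFinset, (1 / (i:ℝ)) ^ p.parts.count i = 1 / (M.prod : ℝ) := by
    rw [← e3]; push_cast
    rw [one_div, ← Finset.prod_inv_distrib]
    apply Finset.prod_congr rfl
    intro i _
    rw [one_div, inv_pow]
  have hMp : (M.prod : ℝ) ≠ 0 := by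
    have : M.prod ≠ 0 := by
      rw [Ne, Multiset.prod_eq_zero_iff]; simp [hM]
    exact_mod_cast this
  have e4' : (∏ i ∈ p.parts.toFinset, ((p.parts.count i).factorial : ℝ)) =
      (p.parts.count 1).factorial * ∏ i ∈ M.toFinset, ((M.count i).factorial : ℝ) := by
    exact_mod_cast e4
  rw [e5, e4']
  have hF : (∏ i ∈ M.toFinset, ((M.count i).factorial : ℝ)) ≠ 0 :=
    Finset.prod_ne_zero_iff.2 fun i _ => by positivity
  have h7 : ((p.parts.count 1).factorial : ℝ) ≠ 0 := by positivity
  have h8 : (n.factorial : ℝ) ≠ 0 := by positivity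
  replace key := key.trans (congrArg Nat.factorial (Fintype.card_fin n))
  have key' := congrArg (fun k : ℕ => (k : ℝ)) key
  simp only [Nat.cast_mul, Nat.cast_prod] at key'
  rw [div_eq_div_iff h8 (mul_ne_zero h7 hF), ← key']
  rw [one_div]
  generalize (∏ i ∈ M.toFinset, ((M.count i).factorial : ℝ)) = P at *
  generalize ((p.parts.count 1).factorial : ℝ) = Q at *
  generalize (M.prod : ℝ) = R at *
  have hR : R⁻¹ * R = 1 := inv_mul_cancel₀ hMp
  linear_combination (-(Finset.card {g : Equiv.Perm (Fin n) | g.cycleType = M} : ℝ) * Q * P) * hR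

lemma mem_parts_le {n m : ℕ} (hm : 1 ≤ m) (σ : Equiv.Perm (Fin n)) :
    (∀ c ∈ σ.cycleType, c ≤ m) ↔ ∀ c ∈ σ.partition.parts, c ≤ m := by
  rw [Equiv.Perm.parts_partition]
  constructor
  · intro h c hc
    rcases Multiset.mem_add.1 hc with h1 | h1
    · exact h c h1
    · rw [Multiset.eq_of_mem_replicate h1]; exact hm
  · intro h c hc
    exact h c (Multiset.mem_add.2 (Or.inl hc))

lemma permProb_eq' (n m : ℕ) (hm : 1 ≤ m) : permProb n m = pc m (Fintype.card (Fin n)) := by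
  classical
  rw [pc, ← genFun_eq, Nat.Partition.coeff_genFun, permProb, Nat.card_eq_fintype_card,
    Fintype.card_subtype]
  simp only [mem_parts_le hm]
  rw [Finset.card_eq_sum_card_fiberwise (t := Finset.univ) (f := fun σ => σ.partition)
    (by intro x _; simp)]
  rw [Nat.cast_sum, Finset.sum_div]
  apply Finset.sum_congr rfl
  intro p _
  rw [Finsupp.prod, Multiset.toFinsupp_support]
  simp only [Multiset.toFinsupp_apply]
  by_cases hp : ∀ c ∈ p.parts, c ≤ m
  · have e : ({a ∈ ({σ | ∀ c ∈ σ.partition.parts, c ≤ m} : Finset (Equiv.Perm (Fin n))) | a.partition = p})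
        = Finset.univ.filter (fun σ : Equiv.Perm (Fin n) => σ.partition = p) := by
      ext σ
      simp only [Finset.mem_filter, Finset.mem_univ, true_and]
      constructor
      · exact fun h => h.2
      · rintro rfl; exact ⟨hp, rfl⟩
    rw [e, card_partition]
    apply Finset.prod_congr rfl
    intro i hi
    rw [Multiset.mem_toFinset] at hi
    rw [fchar, if_pos (hp i hi)]
  · have e : ({a ∈ ({σ | ∀ c ∈ σ.partition.parts, c ≤ m} : Finset (Equiv.Perm (Fin n))) | a.partition = p})
        = ∅ := by
      ext σ
      simp only [Finset.mem_filter, Finset.mem_univ, true_and, Finset.notMem_empty, iff_false]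
      rintro ⟨h1, rfl⟩
      exact hp h1
    rw [e]
    push Not at hp
    obtain ⟨c, hc, hcm⟩ := hp
    rw [Finset.prod_eq_zero (Multiset.mem_toFinset.2 hc)]
    · simp
    · rw [fchar, if_neg (by omega)]

lemma permProb_eq (n m : ℕ) (hm : 1 ≤ m) : permProb n m = pc m n := by
  rw [permProb_eq' n m hm, Fintype.card_fin]

lemma pc_nonneg (m n : ℕ) (hm : 1 ≤ m) : 0 ≤ pc m n := by
  rw [← permProb_eq n m hm]; unfold permProb; positivity

lemma pc_le_one (m n : ℕ) (hm : 1 ≤ m) : pc m n ≤ 1 := by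
  rw [← permProb_eq n m hm]; unfold permProb
  rw [div_le_one (by positivity)]
  have : Nat.card {σ : Equiv.Perm (Fin n) // ∀ c ∈ σ.cycleType, c ≤ m} ≤ Nat.card (Equiv.Perm (Fin n)) :=
    Nat.card_le_card_of_injective _ Subtype.val_injective
  rw [Nat.card_perm, Nat.card_fin] at this
  exact_mod_cast this

lemma pc_small (m n : ℕ) (hm : 1 ≤ m) (h : n ≤ m) : pc m n = 1 := by
  rw [← permProb_eq n m hm]; unfold permProb
  rw [div_eq_one_iff_eq (by positivity)]
  have hall : ∀ σ : Equiv.Perm (Fin n), ∀ c ∈ σ.cycleType, c ≤ m := by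
    intro σ c hc
    have h1 := Equiv.Perm.le_card_support_of_mem_cycleType hc
    have h2 := σ.support.card_le_univ
    rw [Fintype.card_fin] at h2
    omega
  have : Nat.card {σ : Equiv.Perm (Fin n) // ∀ c ∈ σ.cycleType, c ≤ m} = Nat.card (Equiv.Perm (Fin n)) :=
    Nat.card_congr (Equiv.subtypeUnivEquiv hall)
  rw [this, Nat.card_perm, Nat.card_fin]

/-- derivative relation for each factor -/
lemma Efac_deriv (i : ℕ) (hi : 1 ≤ i) :
    X * derivative ℝ (Efac i) = X ^ i * Efac i := by
  ext k
  rw [coeff_X_pow_mul']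
  rcases k with _ | k
  · simp
    omega
  · rw [coeff_succ_X_mul, coeff_derivative]
    simp only [Efac, coeff_mk]
    by_cases hd : i ∣ k + 1
    · obtain ⟨c, hc⟩ := hd
      have hc0 : c ≠ 0 := by rintro rfl; simp at hc
      obtain ⟨c, rfl⟩ := Nat.exists_eq_succ_of_ne_zero hc0
      have e1 : (k:ℝ) + 1 = i * (c + 1) := by exact_mod_cast hc
      have e2 : i * (c+1) - i = i * c := by rw [Nat.mul_succ]; omega
      have hi0 : (i:ℝ) ≠ 0 := by positivity
      have hle : i ≤ i * (c+1) := Nat.le_mul_of_pos_right i (Nat.succ_pos c)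
      rw [e1, hc, Nat.succ_eq_add_one, if_pos (Dvd.intro _ rfl), if_pos hle, e2,
        if_pos (Dvd.intro _ rfl), Nat.mul_div_cancel_left _ (by omega), Nat.mul_div_cancel_left _ (by omega),
        Nat.factorial_succ]
      push_cast
      field_simp
      rw [pow_succ]; field_simp
    · rw [if_neg hd]
      split_ifs with h1 h2
      · exfalso; apply hd
        have := Nat.dvd_add h2 (dvd_refl i)
        simpa [Nat.sub_add_cancel h1] using this
      · simp
      · simp

lemma Pser_deriv (m : ℕ) :
    X * derivative ℝ (Pser m) = (∑ i ∈ Finset.range m, X ^ (i+1)) * Pser m := by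
  induction m with
  | zero => simp [Pser]
  | succ m ih =>
    have : Pser (m+1) = Pser m * Efac (m+1) := by
      unfold Pser; rw [Finset.prod_range_succ]
    rw [this, Derivation.leibniz, Finset.sum_range_succ]
    have h := Efac_deriv (m+1) (by omega)
    simp only [smul_eq_mul]
    linear_combination Pser m * h + Efac (m+1) * ih

lemma pc_rec (m n : ℕ) : (n : ℝ) * pc m n = ∑ i ∈ Finset.range m, if i + 1 ≤ n then pc m (n - (i+1)) else 0 := by
  have h := congrArg (PowerSeries.coeff n) (Pser_deriv m)
  rw [Finset.sum_mul, map_sum] at h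
  simp only [coeff_X_pow_mul'] at h
  unfold pc
  rw [← h]
  rcases n with _ | k
  · simp
  · rw [coeff_succ_X_mul, coeff_derivative]
    push_cast; ring

end Part1


section Part2
open Finset

lemma Efac_hasSum (i : ℕ) (hi : 1 ≤ i) (z : ℂ) :
    HasSum (fun k => ((PowerSeries.coeff k (Efac i) : ℝ) : ℂ) * z ^ k) (Complex.exp (z ^ i / i)) := by
  have hinj : Function.Injective (fun c : ℕ => i * c) := fun a b h => Nat.eq_of_mul_eq_mul_left hi h
  rw [← hinj.hasSum_iff]
  · have h := NormedSpace.expSeries_div_hasSum_exp (𝔸 := ℂ) (z ^ i / i)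
    rw [← Complex.exp_eq_exp_ℂ] at h
    have e : ((fun k => ((PowerSeries.coeff k (Efac i) : ℝ) : ℂ) * z ^ k) ∘ fun c => i * c) =
        fun n => (z ^ i / (i:ℂ)) ^ n / (n.factorial : ℂ) := by
     funext c
     simp only [Function.comp, Efac, PowerSeries.coeff_mk]
     rw [if_pos (Dvd.intro _ rfl), Nat.mul_div_cancel_left _ hi]
     push_cast
     rw [pow_mul, div_pow, div_pow, one_pow]
     ring
    rw [e]
    exact h
  · intro k hk
    simp only [Efac, PowerSeries.coeff_mk]
    rw [if_neg]
    · simp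
    · rintro ⟨c, rfl⟩
      exact hk ⟨c, rfl⟩

lemma pc_hasSum (m : ℕ) (z : ℂ) :
    HasSum (fun k => (pc m k : ℂ) * z ^ k) (Complex.exp (∑ j ∈ Finset.range m, z ^ (j+1) / ((j+1 : ℕ) : ℂ))) ∧
    Summable (fun k => ‖(pc m k : ℂ) * z ^ k‖) := by
  induction m with
  | zero =>
    have h0 : ∀ k, k ≠ 0 → (pc 0 k : ℂ) * z ^ k = 0 := by
      intro k hk
      simp [pc, Pser, PowerSeries.coeff_one, hk]
    constructor
    · have := hasSum_single (f := fun k => (pc 0 k : ℂ) * z ^ k) 0 h0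
      convert this using 1
      simp [pc, Pser]
    · refine summable_of_ne_finset_zero (s := {0}) ?_
      intro k hk
      rw [h0 k (by simpa using hk), norm_zero]
  | succ m ih =>
    have hE := Efac_hasSum (m+1) (by omega) z
    have hEs : Summable (fun k => ‖((PowerSeries.coeff k (Efac (m+1)) : ℝ) : ℂ) * z ^ k‖) := hE.summable.norm
    have e : ∀ n, ∑ kl ∈ antidiagonal n, ((pc m kl.1 : ℂ) * z ^ kl.1) *
        (((PowerSeries.coeff kl.2 (Efac (m+1)) : ℝ) : ℂ) * z ^ kl.2) = (pc (m+1) n : ℂ) * z ^ n := by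
      intro n
      have : Pser (m+1) = Pser m * Efac (m+1) := by
        unfold Pser; rw [Finset.prod_range_succ]
      unfold pc
      rw [this, PowerSeries.coeff_mul]
      push_cast
      rw [Finset.sum_mul]
      apply Finset.sum_congr rfl
      intro kl hkl
      rw [← mem_antidiagonal.1 hkl, pow_add]
      ring
    have h1 := summable_norm_sum_mul_antidiagonal_of_summable_norm ih.2 hEs
    have h2 := tsum_mul_tsum_eq_tsum_sum_antidiagonal_of_summable_norm ih.2 hEs
    simp only [e] at h1 h2
    refine ⟨?_, h1⟩
    rw [Finset.sum_range_succ, Complex.exp_add, ← ih.1.tsum_eq, ← hE.tsum_eq, h2]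
    exact h1.of_norm.hasSum

lemma pc_step (m n : ℕ) (hm : 1 ≤ m) (h : m ≤ n) : pc m (n - m) ≤ n * pc m n := by
  rw [pc_rec]
  have := Finset.single_le_sum (f := fun i => if i + 1 ≤ n then pc m (n - (i+1)) else 0)
    (s := Finset.range m) (a := m - 1) ?_ (by simp; omega)
  · have e : m - 1 + 1 = m := by omega
    simp only [e, if_pos h] at this
    exact this
  · intro i _
    split_ifs
    · exact pc_nonneg _ _ hm
    · exact le_rfl

lemma pc_pos (m n : ℕ) (hm : 1 ≤ m) : 0 < pc m n := by
  induction n using Nat.strong_induction_on with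
  | _ n ih =>
    by_cases h : n ≤ m
    · rw [pc_small m n hm h]; norm_num
    · have h1 := pc_step m n hm (by omega)
      have h2 := ih (n - m) (by omega)
      have h3 : (0:ℝ) < n := by exact_mod_cast (by omega : 0 < n)
      by_contra hc
      push Not at hc
      nlinarith

/-- lower bound `log p_n ≥ -(n/m+1) log N` for `1 ≤ n ≤ N`. -/
lemma log_pc_lower (m N n : ℕ) (hm : 1 ≤ m) (hN : 1 ≤ N) (hn : n ≤ N) :
    -((n:ℝ)/m) * Real.log N ≤ Real.log (pc m n) := by
  induction n using Nat.strong_induction_on with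
  | _ n ih =>
    have hlN : 0 ≤ Real.log N := Real.log_natCast_nonneg N
    by_cases h : n ≤ m
    · rw [pc_small m n hm h, Real.log_one]
      have : 0 ≤ (n:ℝ)/m * Real.log N := by positivity
      linarith
    · have h1 := pc_step m n hm (by omega)
      have h2 := ih (n - m) (by omega) (by omega)
      have h3 : (0:ℝ) < n := by exact_mod_cast (by omega : 0 < n)
      have h4 := Real.log_le_log (pc_pos m (n-m) hm) h1
      rw [Real.log_mul h3.ne' (pc_pos m n hm).ne'] at h4
      have h5 : Real.log n ≤ Real.log N := Real.log_le_log h3 (by exact_mod_cast hn)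
      rw [Nat.cast_sub (by omega)] at h2
      have hm0 : (m:ℝ) ≠ 0 := by positivity
      have h6 : ((n:ℝ) - m)/m = n/m - 1 := by field_simp
      rw [h6] at h2
      linarith
end Part2


section Part3
open Finset PowerSeries

/-- coefficients of `(1-y)^β` -/
noncomputable def bco (β : ℝ) (l : ℕ) : ℝ := ∏ t ∈ Finset.range l, (((t:ℝ) - β) / ((t:ℝ) + 1))

noncomputable def Bser (β : ℝ) : PowerSeries ℝ := PowerSeries.mk (bco β)

noncomputable def Gser : PowerSeries ℝ := PowerSeries.mk fun _ => 1

noncomputable def Lser : PowerSeries ℝ := PowerSeries.mk fun k => 1 / (k:ℝ)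

lemma bco_zero (β : ℝ) : bco β 0 = 1 := by simp [bco]
lemma bco_succ (β : ℝ) (l : ℕ) : bco β (l+1) = bco β l * (((l:ℝ) - β) / ((l:ℝ) + 1)) := by
  unfold bco; rw [Finset.prod_range_succ]

lemma bco_shift (β : ℝ) (l : ℕ) : ((l:ℝ)+1) * bco β (l+1) = -β * bco (β-1) l := by
  induction l with
  | zero => simp [bco]
  | succ l ih =>
    rw [bco_succ β (l+1), bco_succ (β-1) l]
    have h1 : ((l:ℝ)+1) ≠ 0 := by positivity
    have h2 : ((l:ℝ)+1+1) ≠ 0 := by positivity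
    push_cast
    field_simp
    linear_combination ((l:ℝ)+1-β) * ih

lemma bco_pascal (β : ℝ) (l : ℕ) : bco (β+1) (l+1) = bco β (l+1) - bco β l := by
  have h := bco_shift (β+1) l
  have h1 : ((l:ℝ)+1) ≠ 0 := by positivity
  rw [add_sub_cancel_right] at h
  have : bco (β+1) (l+1) = -(β+1) * bco β l / ((l:ℝ)+1) := by
    rw [← h]; field_simp
  rw [this, bco_succ]
  field_simp
  ring

lemma Bser_mul (β : ℝ) : (1 - X) * Bser β = Bser (β+1) := by
  ext k
  rw [sub_mul, one_mul, map_sub]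
  rcases k with _ | k
  · simp [Bser, bco_zero]
  · rw [coeff_succ_X_mul]
    simp only [Bser, coeff_mk]
    rw [bco_pascal]

lemma Bser_mul' (β : ℝ) : (1 - X) * Bser (β-1) = Bser β := by
  rw [Bser_mul]; congr 1; ring

lemma Bser_deriv (β : ℝ) : derivative ℝ (Bser β) = (-β) • Bser (β-1) := by
  ext k
  rw [coeff_derivative, coeff_smul]
  simp only [Bser, coeff_mk, smul_eq_mul]
  rw [← bco_shift]; ring

lemma Gser_mul : (1 - X) * Gser = 1 := by
  ext k
  rw [sub_mul, one_mul, map_sub]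
  rcases k with _ | k
  · simp [Gser]
  · rw [coeff_succ_X_mul]
    simp [Gser, coeff_one]

lemma coeff_Gser_mul (V : PowerSeries ℝ) (q : ℕ) :
    coeff q (Gser * V) = ∑ k ∈ Finset.range (q+1), coeff k V := by
  rw [mul_comm, coeff_mul, Finset.Nat.sum_antidiagonal_eq_sum_range_succ_mk]
  simp [Gser]

lemma coeff_XGser_mul (V : PowerSeries ℝ) (q : ℕ) :
    coeff q (X * (Gser * V)) = ∑ k ∈ Finset.range q, coeff k V := by
  rcases q with _ | q
  · simp
  · rw [coeff_succ_X_mul, coeff_Gser_mul]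

lemma Lser_deriv : derivative ℝ Lser = Gser := by
  ext k
  rw [coeff_derivative]
  simp only [Lser, Gser, coeff_mk]
  have h1 : ((k:ℝ)+1) ≠ 0 := by positivity
  push_cast
  field_simp

lemma Gser_deriv : (1 - X) * derivative ℝ Gser = Gser := by
  have h := congrArg (derivative ℝ) Gser_mul
  rw [Derivation.leibniz] at h
  simp only [map_sub, smul_eq_mul] at h
  have h1 : derivative ℝ (1 : PowerSeries ℝ) = 0 := by simp
  have h2 : derivative ℝ (X : PowerSeries ℝ) = 1 := by simp
  rw [h1, h2] at h
  linear_combination h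

/-- numbers `g_i` with `d_i = g_i/(m-i)` -/
noncomputable def gco (a : ℝ) (i : ℕ) : ℝ :=
  (∏ t ∈ Finset.range (i-1), ((i:ℝ) * a + ((t:ℝ) + 1))) / (i.factorial : ℝ)

lemma gco_nonneg (a : ℝ) (ha : 0 ≤ a) (i : ℕ) : 0 ≤ gco a i := by
  unfold gco; positivity

lemma prod_range_succ_fact (k : ℕ) : ∏ t ∈ Finset.range k, ((t:ℝ)+1+1) = ((k+1).factorial : ℝ) := by
  induction k with
  | zero => simp
  | succ k ih =>
    rw [Finset.prod_range_succ, ih, Nat.factorial_succ (k+1)]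
    push_cast; ring

lemma gco_le_one (a : ℝ) (ha : 0 ≤ a) (i : ℕ) (h : (i:ℝ) * a ≤ 1) : gco a i ≤ 1 := by
  unfold gco
  rw [div_le_one (by positivity)]
  rcases i with _ | i
  · simp
  · rw [← prod_range_succ_fact, Nat.add_sub_cancel]
    apply Finset.prod_le_prod
    · intro t _; positivity
    · intro t _; linarith

lemma gco_top (m : ℕ) (hm : 1 ≤ m) : gco (1/(m:ℝ)) m = 1 := by
  unfold gco
  obtain ⟨k, rfl⟩ : ∃ k, m = k + 1 := ⟨m-1, by omega⟩
  have h : ((k+1 : ℕ):ℝ) ≠ 0 := by positivity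
  rw [div_eq_one_iff_eq (by positivity), ← prod_range_succ_fact, Nat.add_sub_cancel]
  apply Finset.prod_congr rfl
  intro t _
  rw [mul_one_div_cancel h]; ring

/-- the finite-difference polynomial -/
noncomputable def fpoly (a : ℝ) (k : ℕ) : Polynomial ℝ :=
  ∏ l ∈ Finset.range (k-1), (Polynomial.C (1+a) * Polynomial.X - Polynomial.C ((l:ℝ)+1))

lemma fpoly_degree (a : ℝ) (k : ℕ) (hk : 1 ≤ k) : (fpoly a k).natDegree < k := by
  have : (fpoly a k).natDegree ≤ ∑ l ∈ Finset.range (k-1), 1 := by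
    unfold fpoly
    refine (Polynomial.natDegree_prod_le _ _).trans (Finset.sum_le_sum ?_)
    intro l _
    compute_degree
  simp at this
  omega

lemma fpoly_eval (a : ℝ) (k : ℕ) (x : ℝ) :
    (fpoly a k).eval x = ∏ l ∈ Finset.range (k-1), ((1+a)*x - ((l:ℝ)+1)) := by
  unfold fpoly
  rw [Polynomial.eval_prod]
  simp

lemma term_id (a : ℝ) (i s : ℕ) (hi : 1 ≤ i) :
    gco a i * bco ((i:ℝ)*a) s =
      (1/((i+s).factorial : ℝ)) * (((-1:ℝ)^s * ((i+s).choose i : ℝ)) * (fpoly a (i+s)).eval (i:ℝ)) := by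
  rw [fpoly_eval]
  obtain ⟨j, rfl⟩ : ∃ k, i = k + 1 := ⟨i-1, by omega⟩
  unfold gco bco
  have e1 : j + 1 + s - 1 = j + s := by omega
  have hch : (((j+1+s).choose (j+1) : ℕ) : ℝ) * ((j+1).factorial : ℝ) * (s.factorial:ℝ) = ((j+1+s).factorial : ℝ) := by
    have := Nat.choose_mul_factorial_mul_factorial (Nat.le_add_right (j+1) s)
    rw [Nat.add_sub_cancel_left] at this
    exact_mod_cast this
  have hfs : (∏ x ∈ range s, ((x:ℝ) + 1)) = (s.factorial : ℝ) := by
    rw [← Finset.prod_range_add_one_eq_factorial]; push_cast; rfl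
  have hp1 : ∏ x ∈ range j, ((1 + a) * ((j+1 : ℕ):ℝ) - ((x:ℝ) + 1)) =
      ∏ t ∈ range j, (((j + 1 : ℕ):ℝ) * a + (↑t + 1)) := by
    rw [← Finset.prod_range_reflect]
    apply Finset.prod_congr rfl
    intro t ht
    have ht := Finset.mem_range.1 ht
    rw [Nat.cast_sub (by omega), Nat.cast_sub (by omega)]
    push_cast; ring
  have hp2 : ∏ x ∈ range s, ((1 + a) * ((j+1 : ℕ):ℝ) - (((j + x : ℕ):ℝ) + 1)) =
      (-1:ℝ)^s * ∏ x ∈ range s, ((x:ℝ) - ((j + 1 : ℕ):ℝ) * a) := by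
    rw [Finset.pow_eq_prod_const, ← Finset.prod_mul_distrib]
    apply Finset.prod_congr rfl
    intro t ht
    push_cast; ring
  rw [e1, Nat.add_sub_cancel, Finset.prod_div_distrib, hfs, Finset.prod_range_add, hp1, hp2]
  have h1 : ((j+1).factorial : ℝ) ≠ 0 := by positivity
  have h2 : (s.factorial : ℝ) ≠ 0 := by positivity
  have h3 : ((j+1+s).choose (j+1) : ℝ) ≠ 0 := by
    have := Nat.choose_pos (Nat.le_add_right (j+1) s)
    positivity
  have h4 : (-1:ℝ)^s * (-1:ℝ)^s = 1 := by rw [← mul_pow]; norm_num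
  rw [← hch]
  field_simp
  rw [sq, h4, mul_one]

lemma sum_gb (a : ℝ) (k : ℕ) (hk : 1 ≤ k) :
    ∑ i ∈ Finset.Icc 1 k, gco a i * bco ((i:ℝ)*a) (k - i) = 1 / (k:ℝ) := by
  have h := congrFun (Polynomial.fwdDiff_iter_eq_zero_of_degree_lt (fpoly_degree a k hk)) 0
  rw [fwdDiff_iter_eq_sum_shift] at h
  simp only [zero_add, nsmul_eq_mul, mul_one, Pi.zero_apply, zsmul_eq_mul] at h
  rw [Finset.sum_range_succ'] at h
  have e : ∑ i ∈ Finset.Icc 1 k, gco a i * bco ((i:ℝ)*a) (k - i) =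
      (1/(k.factorial:ℝ)) * ∑ j ∈ Finset.range k, (((((-1:ℤ)^(k-(j+1)) * (k.choose (j+1) : ℤ)) : ℤ) : ℝ) *
        (fpoly a k).eval ((j+1 : ℕ):ℝ)) := by
    rw [Finset.mul_sum, Finset.range_eq_Ico, Finset.sum_Ico_add' (fun i => (1/(k.factorial:ℝ)) * (((((-1:ℤ)^(k-i) * (k.choose i : ℤ)) : ℤ) : ℝ) *
        (fpoly a k).eval ((i : ℕ):ℝ))) 0 k 1]
    apply Finset.sum_congr (by ext; simp [Nat.lt_succ_iff])
    intro i hi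
    have hi := Finset.mem_Icc.1 hi
    obtain ⟨s, rfl⟩ := Nat.exists_eq_add_of_le hi.2
    rw [Nat.add_sub_cancel_left, term_id a i s hi.1]
    push_cast; ring
  rw [e, eq_neg_of_add_eq_zero_left h, fpoly_eval]
  obtain ⟨j, rfl⟩ : ∃ j, k = j + 1 := ⟨k-1, by omega⟩
  have : ∏ l ∈ Finset.range (j+1-1), ((1+a)*((0:ℕ):ℝ) - ((l:ℝ)+1)) = (-1)^j * (j.factorial : ℝ) := by
    rw [← Finset.prod_range_add_one_eq_factorial, Finset.pow_eq_prod_const]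
    push_cast
    rw [← Finset.prod_mul_distrib]
    apply Finset.prod_congr rfl
    intro t _
    ring
  rw [this, Nat.factorial_succ]
  have h4 : (-1:ℝ)^j * (-1:ℝ)^j = 1 := by rw [← mul_pow]; norm_num
  have h2 : (j.factorial : ℝ) ≠ 0 := by positivity
  have h1 : ((j:ℝ)+1) ≠ 0 := by positivity
  simp only [Nat.sub_zero, Nat.choose_zero_right]
  push_cast
  field_simp
  rw [pow_succ]
  linear_combination h4

end Part3


section Part4
open Finset PowerSeries

lemma Gamma_prod (x : ℝ) (hx : 0 ≤ x) (k : ℕ) :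
    Real.Gamma (1 + x + k) = Real.Gamma (1 + x) * ∏ t ∈ Finset.range k, (x + ((t:ℝ)+1)) := by
  induction k with
  | zero => simp
  | succ k ih =>
    rw [Finset.prod_range_succ, ← mul_assoc, ← ih]
    have : 1 + x + ((k+1 : ℕ):ℝ) = (1 + x + k) + 1 := by push_cast; ring
    rw [this, Real.Gamma_add_one (by positivity)]
    ring

lemma dcoef_eq (m i : ℕ) (hi : 1 ≤ i) (him : i < m) :
    dcoef m i = gco (1/(m:ℝ)) i / ((m:ℝ) - i) := by
  unfold dcoef gco
  rw [if_neg him.ne]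
  obtain ⟨j, rfl⟩ : ∃ k, i = k + 1 := ⟨i-1, by omega⟩
  have h1 := Gamma_prod (((j+1:ℕ):ℝ)/m) (by positivity) j
  have e : ((j+1:ℕ):ℝ) + ((j+1:ℕ):ℝ)/m = 1 + ((j+1:ℕ):ℝ)/m + j := by push_cast; ring
  have hG : Real.Gamma (1 + ((j+1:ℕ):ℝ)/m) ≠ 0 := (Real.Gamma_pos_of_pos (by positivity)).ne'
  have h3 : ((m:ℝ) - ((j+1:ℕ):ℝ)) ≠ 0 := by
    have : ((j+1:ℕ):ℝ) < m := by exact_mod_cast him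
    linarith
  have h4 : ((j+1).factorial : ℝ) ≠ 0 := by positivity
  rw [e, h1, Nat.add_sub_cancel]
  simp only [mul_one_div]
  field_simp

/-- `(1-X)^2 (X d/dX - c)` -/
noncomputable def TopL (c : ℝ) : PowerSeries ℝ →ₗ[ℝ] PowerSeries ℝ where
  toFun V := (1 - X)^2 * (X * derivative ℝ V - c • V)
  map_add' U V := by simp only [map_add, smul_add]; ring
  map_smul' r V := by
    rw [Derivation.map_smul]
    simp only [smul_eq_C_mul, RingHom.id_apply]; ring

lemma TopL_apply (c : ℝ) (V : PowerSeries ℝ) : TopL c V = (1 - X)^2 * (X * derivative ℝ V - c • V) := rfl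

lemma deriv_Xpow (k : ℕ) : X * derivative ℝ (X^k : PowerSeries ℝ) = (k:ℝ) • X^k := by
  rw [derivative_pow, derivative_X, smul_eq_C_mul]
  rcases k with _ | k
  · simp
  · rw [Nat.add_sub_cancel, pow_succ]
    have : (C ((k+1:ℕ):ℝ) : PowerSeries ℝ) = ((k+1:ℕ) : PowerSeries ℝ) := by simp
    rw [this]; ring

lemma TopL_Xpow (m j : ℕ) (h : j ≤ m) : TopL m (X^(m-j)) = (-(j:ℝ)) • ((1-X)^2 * X^(m-j)) := by
  rw [TopL_apply, deriv_Xpow, Nat.cast_sub h, ← sub_smul, mul_smul_comm]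
  congr 1; ring

lemma TopL_LG (c : ℝ) : TopL c ((Lser - 1) * Gser) = X * Lser - c • ((Lser - 1) * (1 - X)) := by
  rw [TopL_apply, Derivation.leibniz]
  simp only [map_sub, smul_eq_mul, Lser_deriv]
  have h1 : derivative ℝ (1 : PowerSeries ℝ) = 0 := by simp
  rw [h1, smul_eq_C_mul, smul_eq_C_mul]
  have hG := Gser_mul
  have hG' := Gser_deriv
  linear_combination ((1-X)*X*(Lser-1)) * hG' + (X * (Lser-1) + X*((1-X)*Gser + 1) - C c * (Lser-1)*(1-X)) * hG

lemma TopL_B (c : ℝ) (i : ℕ) (β : ℝ) :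
    TopL c (X^i * Bser (β-1)) = X^i * Bser β * (C ((i:ℝ) - c) * (1 - X) + C (1-β) * X) := by
  rw [TopL_apply, Derivation.leibniz]
  simp only [smul_eq_mul, Bser_deriv]
  have h1 := deriv_Xpow i
  have h2 := Bser_mul' β
  have h3 := Bser_mul' (β-1)
  rw [smul_eq_C_mul] at h1 ⊢
  rw [smul_eq_C_mul]
  simp only [map_sub, map_neg, map_one] at *
  linear_combination ((1-X)^2 * Bser (β-1)) * h1 + (X^i * (1-X) * (C (i:ℝ) - C c)) * h2 +
    ((1-X) * X^i * X * (1 - C β)) * h3 + (X^i * X * (1 - C β)) * h2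

noncomputable def Qser (m : ℕ) : PowerSeries ℝ :=
  Lser - ∑ i ∈ Finset.Ico 1 m, gco (1/(m:ℝ)) i • (X^i * Bser ((i:ℝ) * (1/(m:ℝ))))

noncomputable def User (m : ℕ) : PowerSeries ℝ :=
  ∑ j ∈ Finset.Icc 1 m, (1/(j:ℝ)) • X^(m-j) + (1/(m:ℝ)) • ((Lser - 1) * Gser) -
    ∑ i ∈ Finset.Ico 1 m, dcoef m i • (X^i * Bser ((i:ℝ) * (1/(m:ℝ)) - 1))

lemma sum_Xpow (m : ℕ) : (1 - X) * ∑ j ∈ Finset.Icc 1 m, (X:PowerSeries ℝ)^(m-j) = 1 - X^m := by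
  rw [← mul_neg_geom_sum]
  congr 1
  apply Finset.sum_nbij' (fun j => m - j) (fun t => m - t)
  · intro j hj; simp at hj ⊢; omega
  · intro j hj; simp at hj ⊢; omega
  · intro j hj; simp at hj ⊢; omega
  · intro j hj; simp at hj ⊢; omega
  · intro j _; rfl

lemma TopL_User (m : ℕ) (hm : 1 ≤ m) :
    TopL m (User m) = X^m * (1 - X) + (C (1/(m:ℝ)) * X - (1 - X)) * Qser m := by
  have hm0 : (m:ℝ) ≠ 0 := by positivity
  unfold User Qser
  rw [map_sub, map_add, map_sum, map_sum]
  simp only [map_smul]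
  rw [TopL_LG]
  have e1 : ∑ j ∈ Finset.Icc 1 m, (1/(j:ℝ)) • (TopL m (X^(m-j))) = - ((1-X) * (1 - X^m)) := by
    rw [← sum_Xpow, ← mul_assoc, ← sq, Finset.mul_sum, ← Finset.sum_neg_distrib]
    apply Finset.sum_congr rfl
    intro j hj
    have hj := Finset.mem_Icc.1 hj
    have hj0 : (j:ℝ) ≠ 0 := by have : 1 ≤ j := hj.1
                               positivity
    rw [TopL_Xpow m j hj.2, smul_smul]
    have : 1 / (j:ℝ) * -(j:ℝ) = -1 := by field_simp
    rw [this, neg_one_smul]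
  have e2 : ∑ i ∈ Finset.Ico 1 m, dcoef m i • (TopL m (X^i * Bser ((i:ℝ) * (1/(m:ℝ)) - 1))) =
      (C (1/(m:ℝ)) * X - (1 - X)) * ∑ i ∈ Finset.Ico 1 m, gco (1/(m:ℝ)) i • (X^i * Bser ((i:ℝ) * (1/(m:ℝ)))) := by
    rw [Finset.mul_sum]
    apply Finset.sum_congr rfl
    intro i hi
    have hi := Finset.mem_Ico.1 hi
    have h3 : ((m:ℝ) - (i:ℝ)) ≠ 0 := by
      have : (i:ℝ) < m := by exact_mod_cast hi.2
      linarith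
    rw [TopL_B, dcoef_eq m i hi.1 hi.2]
    have h4 : (C (1 - (i:ℝ)*(1/(m:ℝ))) : PowerSeries ℝ) = C ((m:ℝ)-i) * C (1/(m:ℝ)) := by
      rw [← map_mul]; congr 1; field_simp
    have h5 : (C ((i:ℝ) - m) : PowerSeries ℝ) = - C ((m:ℝ)-i) := by
      rw [← map_neg]; congr 1; ring
    have h6 : (C (gco (1/(m:ℝ)) i) : PowerSeries ℝ) = C (gco (1/(m:ℝ)) i / ((m:ℝ) - i)) * C ((m:ℝ)-i) := by
      rw [← map_mul]; congr 1; field_simp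
    rw [smul_eq_C_mul, smul_eq_C_mul, h4, h5, h6]
    ring
  rw [e1, e2]
  have h7 : (C (1/(m:ℝ)) : PowerSeries ℝ) * C (m:ℝ) = 1 := by
    rw [← map_mul, one_div_mul_cancel hm0, map_one]
  rw [smul_eq_C_mul, smul_eq_C_mul]
  linear_combination (-(Lser-1) * (1-X)) * h7

end Part4


section Part5
open Finset PowerSeries

lemma bco_bound (α : ℝ) (h0 : 0 ≤ α) (h1 : α ≤ 1) (l : ℕ) :
    0 ≤ -bco α (l+2) ∧ -bco α (l+2) ≤ (1-α)/((l:ℝ)+2) := by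
  induction l with
  | zero =>
    have : bco α (0+2) = -(α*(1-α)/2) := by
      simp [bco, Finset.prod_range_succ]; ring
    rw [this]
    constructor
    · have := mul_nonneg h0 (sub_nonneg.2 h1); linarith
    · simp; nlinarith
  | succ l ih =>
    rw [show l + 1 + 2 = (l+2)+1 by ring, bco_succ]
    have hl : (0:ℝ) ≤ l := Nat.cast_nonneg l
    push_cast
    have e : -(bco α (l+2) * (((l:ℝ)+2-α)/((l:ℝ)+2+1))) = -bco α (l+2) * (((l:ℝ)+2-α)/((l:ℝ)+2+1)) := by ring
    rw [e]
    have hf : 0 ≤ ((l:ℝ)+2-α)/((l:ℝ)+2+1) := div_nonneg (by linarith) (by linarith)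
    constructor
    · exact mul_nonneg ih.1 hf
    · calc -bco α (l+2) * (((l:ℝ)+2-α)/((l:ℝ)+2+1)) ≤ (1-α)/((l:ℝ)+2) * (((l:ℝ)+2)/((l:ℝ)+2+1)) := by
            apply mul_le_mul ih.2 _ hf (div_nonneg (by linarith) (by linarith))
            gcongr; linarith
        _ = (1-α)/((l:ℝ)+1+2) := by
            field_simp; ring

lemma coeff_Qser (m k : ℕ) : coeff k (Qser m) =
    1/(k:ℝ) - ∑ i ∈ Finset.Ico 1 m, gco (1/(m:ℝ)) i * (if i ≤ k then bco ((i:ℝ)*(1/(m:ℝ))) (k-i) else 0) := by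
  unfold Qser
  rw [map_sub, map_sum]
  simp only [coeff_smul, coeff_X_pow_mul', smul_eq_mul, Bser, Lser, coeff_mk]

lemma Qser_low (m k : ℕ) (hk : k < m) : coeff k (Qser m) = 0 := by
  rw [coeff_Qser]
  rcases Nat.eq_zero_or_pos k with rfl | h
  · rw [Finset.sum_eq_zero]
    · simp
    intro i hi
    have := Finset.mem_Ico.1 hi
    rw [if_neg (by omega), mul_zero]
  · rw [← sum_gb (1/(m:ℝ)) k h, sub_eq_zero]
    symm
    rw [← Finset.sum_subset (s₁ := Finset.Icc 1 k) (s₂ := Finset.Ico 1 m)]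
    · apply Finset.sum_congr rfl
      intro i hi
      rw [if_pos (Finset.mem_Icc.1 hi).2]
    · intro i hi; simp at hi ⊢; omega
    · intro i hi hi'
      simp at hi hi'
      rw [if_neg (by omega), mul_zero]

lemma Qser_mid (m : ℕ) (hm : 1 ≤ m) : coeff m (Qser m) = 1 := by
  have hs := sum_gb (1/(m:ℝ)) m hm
  rw [coeff_Qser]
  have : Finset.Icc 1 m = insert m (Finset.Ico 1 m) := by ext i; simp; omega
  rw [this, Finset.sum_insert (by simp), gco_top m hm, Nat.sub_self, bco_zero] at hs
  have : ∑ i ∈ Finset.Ico 1 m, gco (1/(m:ℝ)) i * (if i ≤ m then bco ((i:ℝ)*(1/(m:ℝ))) (m-i) else 0) =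
    ∑ i ∈ Finset.Ico 1 m, gco (1/(m:ℝ)) i * bco ((i:ℝ)*(1/(m:ℝ))) (m-i) := by
    apply Finset.sum_congr rfl
    intro i hi
    rw [if_pos (Finset.mem_Ico.1 hi).2.le]
  rw [this]; linarith

lemma Qser_high (m k : ℕ) (hm : 1 ≤ m) (hk : m < k) : |coeff k (Qser m)| ≤ 2 := by
  rw [coeff_Qser]
  have hm0 : (0:ℝ) < m := by positivity
  have hk' : 0 < k := by omega
  have hk1 : 1/(k:ℝ) ≤ 1 := by
    rw [div_le_one (by positivity)]; exact_mod_cast (by omega : 1 ≤ k)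
  have hk0 : 0 ≤ 1/(k:ℝ) := by positivity
  have hb : ∀ i ∈ Finset.Ico 1 m, |gco (1/(m:ℝ)) i * (if i ≤ k then bco ((i:ℝ)*(1/(m:ℝ))) (k-i) else 0)| ≤ 1/(m:ℝ) := by
    intro i hi
    have hi := Finset.mem_Ico.1 hi
    have him : (i:ℝ) ≤ m := by exact_mod_cast hi.2.le
    have hia : (i:ℝ)*(1/(m:ℝ)) ≤ 1 := by rw [mul_one_div, div_le_one hm0]; exact him
    have hi0 : 0 ≤ (i:ℝ)*(1/(m:ℝ)) := by positivity
    rw [if_pos (by omega), abs_mul, abs_of_nonneg (gco_nonneg _ (by positivity) i)]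
    have h1 := gco_le_one (1/(m:ℝ)) (by positivity) i hia
    obtain ⟨l, hl⟩ : ∃ l, k - i = l + 2 := ⟨k-i-2, by omega⟩
    have h2 := bco_bound ((i:ℝ)*(1/(m:ℝ))) hi0 hia l
    rw [hl, abs_of_nonpos (by linarith [h2.1])]
    have hl' : (m:ℝ) - i ≤ (l:ℝ)+2 := by
      have : m ≤ l + 2 + i := by omega
      have : (m:ℝ) ≤ l + 2 + i := by exact_mod_cast this
      linarith
    calc gco (1/(m:ℝ)) i * -bco ((i:ℝ)*(1/(m:ℝ))) (l+2) ≤ 1 * ((1-(i:ℝ)*(1/(m:ℝ)))/((l:ℝ)+2)) :=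
          mul_le_mul h1 h2.2 h2.1 zero_le_one
      _ ≤ 1/(m:ℝ) := by
        rw [one_mul, div_le_div_iff₀ (by positivity) hm0]
        have : (1-(i:ℝ)*(1/(m:ℝ)))*m = m - i := by field_simp
        rw [this, one_mul]; exact hl'
  have hs : |∑ i ∈ Finset.Ico 1 m, gco (1/(m:ℝ)) i * (if i ≤ k then bco ((i:ℝ)*(1/(m:ℝ))) (k-i) else 0)| ≤ 1 := by
    refine (Finset.abs_sum_le_sum_abs _ _).trans ((Finset.sum_le_sum hb).trans ?_)
    rw [Finset.sum_const, Nat.card_Ico, nsmul_eq_mul, mul_one_div, div_le_one hm0]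
    exact_mod_cast Nat.sub_le m 1
  rw [abs_le] at hs ⊢
  constructor <;> linarith [hs.1, hs.2]

noncomputable def Rser (m : ℕ) : PowerSeries ℝ := PowerSeries.mk fun q => coeff (m+1+q) (Qser m)

lemma Qser_eq (m : ℕ) (hm : 1 ≤ m) : Qser m = X^m + X^(m+1) * Rser m := by
  ext k
  rw [map_add, coeff_X_pow, coeff_X_pow_mul']
  rcases lt_trichotomy k m with h | h | h
  · rw [Qser_low m k h, if_neg (by omega), if_neg (by omega)]; simp
  · subst h
    rw [Qser_mid k hm, if_pos rfl, if_neg (by omega)]; simp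
  · rw [if_neg (by omega), if_pos (by omega), Rser, coeff_mk]
    rw [show m + 1 + (k - (m+1)) = k by omega, zero_add]

noncomputable def Sser (m : ℕ) : PowerSeries ℝ :=
  C (1/(m:ℝ)) * (Gser * Gser) + C (1/(m:ℝ)) * (X * (Gser * (Gser * Rser m))) - Gser * Rser m

lemma User_rel (m : ℕ) (hm : 1 ≤ m) :
    X * derivative ℝ (User m) - (m:ℝ) • User m = X^(m+1) * Sser m := by
  have h := TopL_User m hm
  rw [TopL_apply, Qser_eq m hm] at h
  have hG := Gser_mul
  have h2 : Gser^2 * (1 - X)^2 = 1 := by rw [← mul_pow, mul_comm, hG, one_pow]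
  unfold Sser
  set V := X * derivative ℝ (User m) - (m:ℝ) • User m
  have : V = Gser^2 * ((1-X)^2 * V) := by rw [← mul_assoc, h2, one_mul]
  rw [this, h]
  linear_combination (-(X^(m+1)) * Rser m * Gser) * hG

lemma coeff_User_rel (m k : ℕ) (hm : 1 ≤ m) :
    ((k:ℝ) - m) * coeff k (User m) = coeff k (X^(m+1) * Sser m) := by
  rw [← User_rel m hm, map_sub, coeff_smul]
  rcases k with _ | k
  · simp
  · rw [coeff_succ_X_mul, coeff_derivative, smul_eq_mul]
    push_cast; ring

lemma User_low (m k : ℕ) (hk : k < m) : coeff k (User m) = 0 := by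
  have h := coeff_User_rel m k (by omega)
  rw [coeff_X_pow_mul', if_neg (by omega)] at h
  have : (k:ℝ) - m ≠ 0 := by
    have : (k:ℝ) < m := by exact_mod_cast hk
    linarith
  exact (mul_eq_zero.1 h).resolve_left this

lemma Sser_bound (m q : ℕ) (hm : 1 ≤ m) :
    |coeff q (Sser m)| ≤ ((q:ℝ)+1) * (3 + 2 * (1/(m:ℝ)) * ((q:ℝ)+1)) := by
  have hm1 : 1/(m:ℝ) ≤ 1 := by
    rw [div_le_one (by positivity)]; exact_mod_cast hm
  have hm0 : 0 ≤ 1/(m:ℝ) := by positivity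
  have hq : (0:ℝ) ≤ q := Nat.cast_nonneg q
  have hR : ∀ k, |coeff k (Rser m)| ≤ 2 := by
    intro k; rw [Rser, coeff_mk]; exact Qser_high m _ hm (by omega)
  have hGR : ∀ k, |coeff k (Gser * Rser m)| ≤ 2 * ((k:ℝ)+1) := by
    intro k
    rw [coeff_Gser_mul]
    refine (Finset.abs_sum_le_sum_abs _ _).trans ((Finset.sum_le_sum fun i _ => hR i).trans ?_)
    rw [Finset.sum_const, Finset.card_range, nsmul_eq_mul]
    push_cast; linarith
  have hXG : |coeff q (X * (Gser * (Gser * Rser m)))| ≤ 2 * ((q:ℝ)+1)^2 := by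
    rw [coeff_XGser_mul]
    have : ∀ i ∈ Finset.range q, |coeff i (Gser * Rser m)| ≤ 2 * ((q:ℝ)+1) := by
      intro i hi
      refine (hGR i).trans ?_
      have : (i:ℝ) ≤ q := by exact_mod_cast (Finset.mem_range.1 hi).le
      linarith
    refine (Finset.abs_sum_le_sum_abs _ _).trans ((Finset.sum_le_sum this).trans ?_)
    rw [Finset.sum_const, Finset.card_range, nsmul_eq_mul]
    nlinarith
  have hGG : coeff q (Gser * Gser) = (q:ℝ)+1 := by
    rw [coeff_Gser_mul]; simp [Gser]
  unfold Sser
  rw [map_sub, map_add, coeff_C_mul, coeff_C_mul, hGG]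
  have h1 := hGR q
  rw [abs_le] at h1 hXG ⊢
  generalize coeff q (X * (Gser * (Gser * Rser m))) = A at *
  generalize coeff q (Gser * Rser m) = B at *
  generalize 1/(m:ℝ) = a at *
  constructor <;> nlinarith [mul_le_mul_of_nonneg_left hXG.1 hm0, mul_le_mul_of_nonneg_left hXG.2 hm0]

lemma User_high (m q : ℕ) (hm : 1 ≤ m) :
    |coeff (m+1+q) (User m)| ≤ 3 + 2 * (1/(m:ℝ)) * ((q:ℝ)+1) := by
  have h := coeff_User_rel m (m+1+q) hm
  rw [coeff_X_pow_mul', if_pos (by omega), Nat.add_sub_cancel_left] at h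
  have hq : (0:ℝ) < (q:ℝ)+1 := by positivity
  have e : (((m+1+q : ℕ):ℝ) - m) = (q:ℝ)+1 := by push_cast; ring
  rw [e] at h
  have h2 := Sser_bound m q hm
  rw [← h, abs_mul, abs_of_pos hq] at h2
  exact le_of_mul_le_mul_left h2 hq

lemma sum_harm (m : ℕ) : ∑ k ∈ Finset.range m, (∑ j ∈ Finset.range (k+1), 1/(j:ℝ)) =
    m * (∑ j ∈ Finset.range (m+1), 1/(j:ℝ)) - m := by
  induction m with
  | zero => simp
  | succ m ih =>
    rw [Finset.sum_range_succ, ih, Finset.sum_range_succ _ (m+1)]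
    have : ((m+1:ℕ):ℝ) ≠ 0 := by positivity
    field_simp
    push_cast
    ring

lemma bco_res (l : ℕ) (a : ℝ) : bco (-(((l+1:ℕ):ℝ) * a)) (l+1) = a * bco (-(((l+1:ℕ):ℝ) * a) - 1) l := by
  have h := bco_shift (-(((l+1:ℕ):ℝ) * a)) l
  have : (l:ℝ)+1 ≠ 0 := by positivity
  apply mul_left_cancel₀ this
  rw [h]; push_cast; ring

/-- functional `V ↦ [X^m](V - a X G V)` -/
noncomputable def resf (m : ℕ) (V : PowerSeries ℝ) : ℝ :=
  coeff m V - (1/(m:ℝ)) * ∑ k ∈ Finset.range m, coeff k V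

lemma User_mid (m : ℕ) (hm : 1 ≤ m) : coeff m (User m) = dcoef m m := by
  have hm0 : (m:ℝ) ≠ 0 := by positivity
  have h0 : coeff m (User m) = resf m (User m) := by
    unfold resf
    rw [Finset.sum_eq_zero, mul_zero, sub_zero]
    intro k hk
    exact User_low m k (Finset.mem_range.1 hk)
  have radd : ∀ U V, resf m (U + V) = resf m U + resf m V := by
    intro U V; simp only [resf, map_add, Finset.sum_add_distrib]; ring
  have rsub : ∀ U V, resf m (U - V) = resf m U - resf m V := by
    intro U V; simp only [resf, map_sub, Finset.sum_sub_distrib]; ring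
  have rsmul : ∀ (c:ℝ) V, resf m (c • V) = c * resf m V := by
    intro c V; simp only [resf, coeff_smul, smul_eq_mul, ← Finset.mul_sum]; ring
  have rsum : ∀ (s : Finset ℕ) (f : ℕ → PowerSeries ℝ), resf m (∑ i ∈ s, f i) = ∑ i ∈ s, resf m (f i) := by
    intro s f
    induction s using Finset.induction_on with
    | empty => simp [resf]
    | insert a s ha ih => rw [Finset.sum_insert ha, Finset.sum_insert ha, radd, ih]
  rw [h0]
  unfold User
  rw [rsub, radd, rsum, rsum, rsmul]
  have e1 : ∀ j ∈ Finset.Icc 1 m, resf m ((1/(j:ℝ)) • X^(m-j)) = -(1/(m:ℝ)) * (1/(j:ℝ)) := by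
    intro j hj
    have hj := Finset.mem_Icc.1 hj
    rw [rsmul]
    unfold resf
    simp only [coeff_X_pow]
    rw [if_neg (by omega), Finset.sum_ite_eq', if_pos (by simp; omega)]
    ring
  have e2 : ∀ i ∈ Finset.Ico 1 m, resf m (dcoef m i • (X^i * Bser ((i:ℝ) * (1/(m:ℝ)) - 1))) = 0 := by
    intro i hi
    have hi := Finset.mem_Ico.1 hi
    rw [rsmul]
    unfold resf
    rw [← coeff_XGser_mul]
    have hG : X * (Gser * (X^i * Bser ((i:ℝ) * (1/(m:ℝ)) - 1))) = X^(i+1) * Bser ((i:ℝ) * (1/(m:ℝ)) - 1 - 1) := by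
      rw [← Bser_mul' ((i:ℝ) * (1/(m:ℝ)) - 1)]
      linear_combination (X^(i+1) * Bser ((i:ℝ) * (1/(m:ℝ)) - 1 - 1)) * Gser_mul
    rw [hG, coeff_X_pow_mul', coeff_X_pow_mul', if_pos hi.2.le, if_pos (by omega)]
    simp only [Bser, coeff_mk]
    obtain ⟨l, rfl⟩ : ∃ l, m = i + (l+1) := ⟨m-i-1, by omega⟩
    have e3 : (i:ℝ) * (1/((i+(l+1) : ℕ):ℝ)) - 1 = -(((l+1:ℕ):ℝ) * (1/((i+(l+1) : ℕ):ℝ))) := by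
      field_simp; push_cast; ring
    rw [e3, show i + (l+1) - i = l+1 by omega, show i + (l+1) - (i+1) = l by omega, bco_res]
    ring
  have e4 : resf m ((Lser - 1) * Gser) = 1 := by
    have hc : ∀ k, coeff k ((Lser - 1) * Gser) = (∑ j ∈ Finset.range (k+1), 1/(j:ℝ)) - 1 := by
      intro k
      rw [mul_comm, mul_sub, map_sub, coeff_Gser_mul, mul_one]
      simp [Lser, Gser]
    unfold resf
    simp only [hc]
    rw [Finset.sum_sub_distrib, sum_harm]
    simp only [Finset.sum_const, Finset.card_range, nsmul_eq_mul]
    field_simp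
    ring
  rw [Finset.sum_congr rfl e1, Finset.sum_congr rfl e2, e4, ← Finset.mul_sum, dcoef, if_pos rfl]
  have : Finset.Icc 1 m = insert 1 (Finset.Icc 2 m) := by ext i; simp; omega
  rw [this, Finset.sum_insert (by simp)]
  simp
  ring

end Part5


section Part6
open Finset PowerSeries

lemma choose_bco (β : ℝ) (k : ℕ) : Ring.choose β k * (-1)^k = bco β k := by
  rw [Ring.choose_eq_smul, ← Polynomial.aeval_eq_smeval, Polynomial.aeval_def, Polynomial.eval₂_eq_eval_map, descPochhammer_map,
    descPochhammer_eval_eq_prod_range]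
  unfold bco
  rw [Finset.prod_div_distrib, ← Finset.prod_range_add_one_eq_factorial, Finset.pow_eq_prod_const]
  push_cast
  rw [smul_eq_mul, mul_assoc, ← Finset.prod_mul_distrib, inv_mul_eq_div]
  congr 1
  apply Finset.prod_congr rfl
  intros; ring

lemma Bser_hasSum (β y : ℝ) (hy : |y| < 1) :
    HasSum (fun k => coeff k (Bser β) * y ^ k) ((1 - y) ^ β) := by
  have h := (Real.one_add_rpow_hasFPowerSeriesOnBall_zero (a := β)).hasSum (y := -y) (by
    simp [Metric.mem_eball, edist_zero_right]
    rw [← Real.norm_eq_abs] at hy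
    rw [← ofReal_norm]
    simpa using hy)
  rw [zero_add, ← sub_eq_add_neg] at h
  have e : (fun k => coeff k (Bser β) * y ^ k) = fun n => (_root_.binomialSeries ℝ β n) fun _ => -y := by
    funext k
    rw [binomialSeries_apply, Bser, coeff_mk, ← choose_bco, List.ofFn_const, List.prod_replicate, smul_eq_mul,
      neg_pow]
    ring
  rw [e]
  exact h

/-- `P` evaluates to `s` at `y` -/
def EvalTo (y : ℝ) (P : PowerSeries ℝ) (s : ℝ) : Prop := HasSum (fun k => coeff k P * y ^ k) s

lemma EvalTo.add {y s t : ℝ} {P Q : PowerSeries ℝ} (h : EvalTo y P s) (k : EvalTo y Q t) : EvalTo y (P+Q) (s+t) := by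
  unfold EvalTo at *
  simpa only [map_add, add_mul] using HasSum.add h k
lemma EvalTo.sub {y s t : ℝ} {P Q : PowerSeries ℝ} (h : EvalTo y P s) (k : EvalTo y Q t) : EvalTo y (P-Q) (s-t) := by
  unfold EvalTo at *
  simpa only [map_sub, sub_mul] using HasSum.sub h k
lemma EvalTo.smul {y s : ℝ} {P : PowerSeries ℝ} (c : ℝ) (h : EvalTo y P s) : EvalTo y (c • P) (c * s) := by
  unfold EvalTo at *
  simpa only [coeff_smul, smul_eq_mul, mul_assoc] using HasSum.mul_left c h
lemma EvalTo.sum {y : ℝ} {ι : Type} (S : Finset ι) (P : ι → PowerSeries ℝ) (s : ι → ℝ)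
    (h : ∀ i ∈ S, EvalTo y (P i) (s i)) : EvalTo y (∑ i ∈ S, P i) (∑ i ∈ S, s i) := by
  unfold EvalTo at *
  simpa only [map_sum, Finset.sum_mul] using hasSum_sum h
lemma EvalTo.mul {y s t : ℝ} {P Q : PowerSeries ℝ} (h : EvalTo y P s) (k : EvalTo y Q t) : EvalTo y (P*Q) (s*t) := by
  unfold EvalTo at *
  have h1 := tsum_mul_tsum_eq_tsum_sum_antidiagonal_of_summable_norm h.summable.norm k.summable.norm
  have h2 := summable_norm_sum_mul_antidiagonal_of_summable_norm h.summable.norm k.summable.norm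
  have e : ∀ n, ∑ kl ∈ antidiagonal n, (coeff kl.1 P * y ^ kl.1) * (coeff kl.2 Q * y ^ kl.2) = coeff n (P*Q) * y^n := by
    intro n
    rw [coeff_mul, Finset.sum_mul]
    apply Finset.sum_congr rfl
    intro kl hkl
    rw [← mem_antidiagonal.1 hkl, pow_add]
    ring
  simp only [e] at h1 h2
  rw [← h.tsum_eq, ← k.tsum_eq, h1]
  exact h2.of_norm.hasSum
lemma EvalTo.Xpow (y : ℝ) (i : ℕ) : EvalTo y (X^i) (y^i) := by
  unfold EvalTo
  have := hasSum_single (f := fun k => coeff k (X^i : PowerSeries ℝ) * y^k) i (by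
    intro k hk; simp [coeff_X_pow, hk])
  simpa [coeff_X_pow] using this
lemma EvalTo.one (y : ℝ) : EvalTo y 1 1 := by simpa using EvalTo.Xpow y 0
lemma EvalTo.G (y : ℝ) (hy : |y| < 1) : EvalTo y Gser (1-y)⁻¹ := by
  unfold EvalTo
  simpa [Gser] using hasSum_geometric_of_abs_lt_one hy
lemma EvalTo.L (y : ℝ) (hy : |y| < 1) : EvalTo y Lser (-Real.log (1-y)) := by
  unfold EvalTo
  have h := Real.hasSum_pow_div_log_of_abs_lt_one hy
  rw [← hasSum_nat_add_iff' 1]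
  simp only [Lser, coeff_mk]
  simp only [Finset.range_one, Finset.sum_singleton, Nat.cast_zero, div_zero, zero_mul, sub_zero]
  have e : (fun k : ℕ => 1 / ((k + 1 : ℕ) : ℝ) * y ^ (k + 1)) = fun n : ℕ => y ^ (n + 1) / ((n:ℝ) + 1) := by
    funext k
    push_cast; ring
  rw [e]
  exact h

noncomputable def Uval (m : ℕ) (y : ℝ) : ℝ :=
  ∑ j ∈ Finset.Icc 1 m, (1/(j:ℝ)) * y^(m-j) + (1/(m:ℝ)) * ((-Real.log (1-y) - 1) * (1-y)⁻¹) -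
    ∑ i ∈ Finset.Ico 1 m, dcoef m i * (y^i * (1-y) ^ ((i:ℝ) * (1/(m:ℝ)) - 1))

lemma User_eval (m : ℕ) (y : ℝ) (hy : |y| < 1) : EvalTo y (User m) (Uval m y) := by
  unfold User Uval
  refine ((EvalTo.sum _ _ _ fun j _ => (EvalTo.Xpow y _).smul _).add
    ((((EvalTo.L y hy).sub (EvalTo.one y)).mul (EvalTo.G y hy)).smul _)).sub
    (EvalTo.sum _ _ _ fun i _ => ((EvalTo.Xpow y i).mul (Bser_hasSum _ y hy)).smul _)

lemma Uval_bound (m : ℕ) (hm : 1 ≤ m) (y : ℝ) (hy0 : 0 < y) (hy1 : y < 1) (hv : (1-y)⁻¹ ≤ m + 1) :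
    |Uval m y - dcoef m m * y^m| ≤ y^m * (7 * (y / (1-y))) := by
  have hy : |y| < 1 := by rw [abs_of_pos hy0]; exact hy1
  have h := User_eval m y hy
  unfold EvalTo at h
  have h1 := (hasSum_nat_add_iff' (m+1)).2 h
  have e : ∑ k ∈ Finset.range (m+1), coeff k (User m) * y^k = dcoef m m * y^m := by
    rw [Finset.sum_range_succ, User_mid m hm, Finset.sum_eq_zero, zero_add]
    intro k hk
    rw [User_low m k (Finset.mem_range.1 hk), zero_mul]
  rw [e] at h1
  have hg1 := (hasSum_geometric_of_abs_lt_one hy).mul_left (3*y)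
  have hg2 : HasSum (fun q : ℕ => ((q:ℝ)+1) * y^(q+1)) (y/(1-y)^2) := by
    have := hasSum_coe_mul_geometric_of_norm_lt_one (r := y) (by simpa using hy)
    have := (hasSum_nat_add_iff' 1).2 this
    simpa using this
  have hg := (hg1.add (hg2.mul_left (2*(1/(m:ℝ))))).mul_left (y^m)
  have hb : ∀ q : ℕ, ‖coeff (q+(m+1)) (User m) * y^(q+(m+1))‖ ≤
      y^m * (3*y*y^q + 2*(1/(m:ℝ)) * (((q:ℝ)+1) * y^(q+1))) := by
    intro q
    rw [norm_mul, norm_pow, Real.norm_eq_abs, Real.norm_eq_abs, abs_of_pos hy0, add_comm q]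
    have := mul_le_mul_of_nonneg_right (User_high m q hm) (pow_pos hy0 (m+1+q)).le
    refine this.trans (le_of_eq ?_)
    rw [pow_add, pow_add, pow_add]; ring
  have := tsum_of_norm_bounded hg hb
  rw [h1.tsum_eq, Real.norm_eq_abs] at this
  refine this.trans ?_
  apply mul_le_mul_of_nonneg_left _ (pow_pos hy0 m).le
  have h1y : 0 < 1 - y := by linarith
  have hm0 : (0:ℝ) < m := by positivity
  have hm1 : (1:ℝ) ≤ m := by exact_mod_cast hm
  have e2 : 2*(1/(m:ℝ)) * (y/(1-y)^2) = (2/(m:ℝ) * (1-y)⁻¹) * (y/(1-y)) := by field_simp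
  rw [e2, show 3*y*(1-y)⁻¹ = 3*(y/(1-y)) by ring]
  have h4 : 2/(m:ℝ) * (1-y)⁻¹ ≤ 4 := by
    calc 2/(m:ℝ) * (1-y)⁻¹ ≤ 2/(m:ℝ) * (m+1) := by gcongr
      _ ≤ 4 := by rw [div_mul_eq_mul_div, div_le_iff₀ hm0]; linarith
  have h5 : 0 ≤ y/(1-y) := by positivity
  nlinarith

/-- Claim T -/
lemma claimT (m : ℕ) (hm : 1 ≤ m) (n : ℝ) (y : ℝ) (hy0 : 0 < y) (hy1 : y < 1) (hv : (1-y)⁻¹ ≤ m + 1)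
    (hn : y^m * (1-y) * n = 1) :
    |(∑ j ∈ Finset.range m, (y⁻¹)^(j+1) / ((j+1:ℕ):ℝ)) + n * Real.log y -
      (-(n/m) * Real.log n + n/m + ∑ i ∈ Finset.Icc 1 m, dcoef m i * n ^ (1 - (i:ℝ)/(m:ℝ)))| ≤ 7 * (y/(1-y)) := by
  have hb := Uval_bound m hm y hy0 hy1 hv
  have hym : 0 < y^m := pow_pos hy0 m
  have h1y : 0 < 1 - y := by linarith
  have hm0 : (m:ℝ) ≠ 0 := by positivity
  have hn' : n = (y^m)⁻¹ * (1-y)⁻¹ := by field_simp; linarith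
  have hlog : Real.log n = -(m * Real.log y) - Real.log (1-y) := by
    rw [hn', Real.log_mul (by positivity) (by positivity), Real.log_inv, Real.log_inv, Real.log_pow]; ring
  have hnpos : 0 < n := by rw [hn']; positivity
  have hpow : ∀ i ∈ Finset.Ico 1 m, n ^ (1 - (i:ℝ)/(m:ℝ)) = (y^m)⁻¹ * (y^i * (1-y) ^ ((i:ℝ) * (1/(m:ℝ)) - 1)) := by
    intro i _
    rw [Real.rpow_def_of_pos hnpos, Real.rpow_def_of_pos h1y, hlog]
    have e1 : (y^m)⁻¹ = Real.exp (-(m * Real.log y)) := by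
      rw [Real.exp_neg, mul_comm, Real.exp_mul, Real.exp_log hy0, Real.rpow_natCast]
    have e2 : (y^i) = Real.exp (i * Real.log y) := by
      rw [mul_comm, Real.exp_mul, Real.exp_log hy0, Real.rpow_natCast]
    rw [e1, e2, ← Real.exp_add, ← Real.exp_add]
    congr 1
    field_simp
    ring
  have hsum : ∑ i ∈ Finset.Icc 1 m, dcoef m i * n ^ (1 - (i:ℝ)/(m:ℝ)) =
      dcoef m m + (y^m)⁻¹ * ∑ i ∈ Finset.Ico 1 m, dcoef m i * (y^i * (1-y) ^ ((i:ℝ) * (1/(m:ℝ)) - 1)) := by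
    have : Finset.Icc 1 m = insert m (Finset.Ico 1 m) := by ext i; simp; omega
    rw [this, Finset.sum_insert (by simp), div_self hm0, sub_self, Real.rpow_zero, mul_one, Finset.mul_sum]
    congr 1
    apply Finset.sum_congr rfl
    intro i hi
    rw [hpow i hi]; ring
  have hx : (∑ j ∈ Finset.range m, (y⁻¹)^(j+1) / ((j+1:ℕ):ℝ)) = (y^m)⁻¹ * ∑ j ∈ Finset.Icc 1 m, (1/(j:ℝ)) * y^(m-j) := by
    rw [Finset.mul_sum, Finset.range_eq_Ico, Finset.sum_Ico_add' (fun j : ℕ => (y⁻¹)^j / (j:ℝ)) 0 m 1]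
    apply Finset.sum_congr (by ext; simp)
    intro j hj
    have hj := Finset.mem_Icc.1 hj
    have : y^m = y^(m-j) * y^j := by rw [← pow_add]; congr 1; omega
    rw [this, inv_pow]
    have : y^j ≠ 0 := by positivity
    have : y^(m-j) ≠ 0 := by positivity
    field_simp
  have key : (∑ j ∈ Finset.range m, (y⁻¹)^(j+1) / ((j+1:ℕ):ℝ)) + n * Real.log y -
      (-(n/m) * Real.log n + n/m + ∑ i ∈ Finset.Icc 1 m, dcoef m i * n ^ (1 - (i:ℝ)/(m:ℝ))) =
      (y^m)⁻¹ * (Uval m y - dcoef m m * y^m) := by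
    rw [hx, hsum, hlog]
    unfold Uval
    have e3 : n * Real.log y - (-(n/m) * (-(m * Real.log y) - Real.log (1-y)) + n/m) =
       (y^m)⁻¹ * ((1/(m:ℝ)) * ((-Real.log (1-y) - 1) * (1-y)⁻¹)) := by
      rw [hn']; field_simp; ring
    have e4 : (y^m)⁻¹ * (dcoef m m * y^m) = dcoef m m := by field_simp
    linear_combination e3 + e4
  rw [key, abs_mul, abs_of_pos (inv_pos.2 hym)]
  calc (y^m)⁻¹ * |Uval m y - dcoef m m * y^m| ≤ (y^m)⁻¹ * (y^m * (7 * (y / (1-y)))) := by gcongr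
    _ = 7 * (y/(1-y)) := by field_simp

end Part6


section Part7

noncomputable def Fx (m : ℕ) (x : ℝ) : ℝ := ∑ j ∈ Finset.range m, x^(j+1) / ((j+1:ℕ):ℝ)

noncomputable def gfun (m n : ℕ) (x θ : ℝ) : ℂ :=
  (∑ j ∈ Finset.range m, ((x^(j+1) / ((j+1:ℕ):ℝ) : ℝ) : ℂ) *
    (Complex.exp (((((j+1:ℕ):ℝ) * θ : ℝ) : ℂ) * Complex.I) - 1)) - (((n:ℝ) * θ : ℝ) : ℂ) * Complex.I

lemma gfun_cont (m n : ℕ) (x : ℝ) : Continuous (fun θ => gfun m n x θ) := by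
  unfold gfun
  fun_prop

lemma int_exp_delta (k n : ℕ) :
    ∫ θ in (-π)..π, Complex.exp (((k:ℂ) - n) * Complex.I * θ) = if k = n then 2 * (π:ℂ) else 0 := by
  split_ifs with h
  · subst h
    simp
    ring
  · have hne : ((k:ℂ) - n) * Complex.I ≠ 0 := by
      apply mul_ne_zero _ Complex.I_ne_zero
      rw [sub_ne_zero]
      exact_mod_cast h
    rw [integral_exp_mul_complex hne]
    have : Complex.exp (((k:ℂ) - n) * Complex.I * (π:ℝ)) = Complex.exp (((k:ℂ) - n) * Complex.I * ((-π:ℝ):ℂ)) := by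
      rw [Complex.exp_eq_exp_iff_exists_int]
      refine ⟨(k:ℤ) - n, ?_⟩
      push_cast
      ring
    rw [this]
    simp

lemma int_formula (m n : ℕ) (x : ℝ) (hx : 0 < x) :
    ∫ θ in (-π)..π, Complex.exp (gfun m n x θ) =
      ((2 * π * pc m n * x^n * Real.exp (-(Fx m x)) : ℝ) : ℂ) := by
  have key : ∀ θ : ℝ, HasSum (fun k : ℕ => ((pc m k * x^k * Real.exp (-(Fx m x)) : ℝ) : ℂ) *
      Complex.exp (((k:ℂ) - n) * Complex.I * θ)) (Complex.exp (gfun m n x θ)) := by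
    intro θ
    have h := ((pc_hasSum m ((x:ℂ) * Complex.exp (θ * Complex.I))).1).mul_right
      (Complex.exp (-(Fx m x : ℂ) - (n:ℂ) * θ * Complex.I))
    have e1 : Complex.exp (∑ j ∈ Finset.range m, ((x:ℂ) * Complex.exp (θ * Complex.I))^(j+1) / ((j+1:ℕ):ℂ)) *
       Complex.exp (-(Fx m x : ℂ) - (n:ℂ) * θ * Complex.I) = Complex.exp (gfun m n x θ) := by
      rw [← Complex.exp_add]
      congr 1
      unfold gfun Fx
      push_cast
      simp only [mul_sub, Finset.sum_sub_distrib, mul_one]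
      have : ∀ j : ℕ, ((x:ℂ) * Complex.exp (θ * Complex.I))^(j+1) / ((j:ℂ)+1) =
         (x:ℂ)^(j+1) / ((j:ℂ)+1) * Complex.exp (((j:ℂ)+1) * θ * Complex.I) := by
        intro j
        rw [mul_pow, ← Complex.exp_nat_mul]
        push_cast
        rw [mul_assoc ((j:ℂ)+1)]
        ring
      simp only [this]
      ring
    rw [e1] at h
    have e2 : (fun k : ℕ => ((pc m k * x^k * Real.exp (-(Fx m x)) : ℝ) : ℂ) *
      Complex.exp (((k:ℂ) - n) * Complex.I * θ)) = (fun k : ℕ => (pc m k : ℂ) * ((x:ℂ) * Complex.exp (θ * Complex.I))^k *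
        Complex.exp (-(Fx m x : ℂ) - (n:ℂ) * θ * Complex.I)) := by
      funext k
      rw [mul_pow, ← Complex.exp_nat_mul]
      push_cast
      have : Complex.exp (-(Fx m x : ℂ) - (n:ℂ) * θ * Complex.I) = Complex.exp (-(Fx m x : ℂ)) * Complex.exp (-((n:ℂ) * θ * Complex.I)) := by
        rw [← Complex.exp_add]; congr 1
      rw [this]
      have : Complex.exp (((k:ℂ) - n) * Complex.I * θ) = Complex.exp ((k:ℂ) * (θ * Complex.I)) * Complex.exp (-((n:ℂ) * θ * Complex.I)) := by
        rw [← Complex.exp_add]; congr 1; ring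
      rw [this]; ring
    rw [e2]; exact h
  have hs : Summable (fun k : ℕ => ‖((pc m k * x^k * Real.exp (-(Fx m x)) : ℝ) : ℂ)‖) := by
    have h := ((pc_hasSum m (x:ℂ)).2).mul_right (Real.exp (-(Fx m x)))
    have e : (fun k : ℕ => ‖((pc m k * x^k * Real.exp (-(Fx m x)) : ℝ) : ℂ)‖) =
       (fun k : ℕ => ‖(pc m k : ℂ) * (x:ℂ)^k‖ * Real.exp (-(Fx m x))) := by
      funext k
      rw [Complex.ofReal_mul, norm_mul]
      push_cast
      congr 1
      rw [Complex.norm_exp]; simp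
    rw [e]; exact h
  have hI := intervalIntegral.hasSum_integral_of_dominated_convergence (μ := MeasureTheory.volume) (a := -π) (b := π)
    (F := fun (k : ℕ) (θ : ℝ) => ((pc m k * x^k * Real.exp (-(Fx m x)) : ℝ) : ℂ) *
      Complex.exp (((k:ℂ) - n) * Complex.I * θ)) (f := fun θ => Complex.exp (gfun m n x θ))
    (fun k _ => ‖((pc m k * x^k * Real.exp (-(Fx m x)) : ℝ) : ℂ)‖)
    (fun k => by
      apply Continuous.aestronglyMeasurable
      fun_prop)
    (fun k => by
      refine Filter.Eventually.of_forall (fun θ _ => ?_)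
      rw [norm_mul]
      have : ‖Complex.exp (((k:ℂ) - n) * Complex.I * θ)‖ = 1 := by
        rw [Complex.norm_exp]
        simp
      rw [this, mul_one])
    (Filter.Eventually.of_forall (fun θ _ => hs))
    (by simp)
    (Filter.Eventually.of_forall (fun θ _ => key θ))
  have h2 := hasSum_ite_eq n (((2 * π * pc m n * x^n * Real.exp (-(Fx m x)) : ℝ) : ℂ))
  refine hI.unique ?_
  have e : (fun k : ℕ => ∫ θ in (-π)..π, ((pc m k * x^k * Real.exp (-(Fx m x)) : ℝ) : ℂ) *
      Complex.exp (((k:ℂ) - n) * Complex.I * θ)) = (fun b' => if b' = n then (((2 * π * pc m n * x^n * Real.exp (-(Fx m x)) : ℝ) : ℂ)) else 0) := by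
    funext k
    rw [intervalIntegral.integral_const_mul, int_exp_delta]
    split_ifs with h
    · subst h; push_cast; ring
    · simp
  rw [e]; exact h2

end Part7


section Part8

lemma exp_diff_bound (a c : ℂ) (s : ℝ) (ha : a.re ≤ -s) (hc : c.re ≤ -s) :
    ‖Complex.exp a - Complex.exp c‖ ≤ Real.exp (-s) * ‖a - c‖ := by
  have hconv : Convex ℝ {z : ℂ | z.re ≤ -s} := convex_halfSpace_re_le (-s)
  refine Convex.norm_image_sub_le_of_norm_deriv_le (f := Complex.exp) (s := {z : ℂ | z.re ≤ -s})
    (fun z _ => Complex.differentiable_exp z) (fun z hz => ?_) hconv hc ha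
  rw [Complex.deriv_exp, Complex.norm_exp]
  exact Real.exp_le_exp.mpr hz

lemma poly_exp1 (t : ℝ) (ht : 0 ≤ t) : t * Real.exp (-t^2) ≤ Real.exp (-t^2/2) := by
  have h : t ≤ Real.exp (t^2/2) := by
    have := Real.add_one_le_exp (t^2/2)
    nlinarith [sq_nonneg (t-1)]
  calc t * Real.exp (-t^2) ≤ Real.exp (t^2/2) * Real.exp (-t^2) := by gcongr
    _ = _ := by rw [← Real.exp_add]; congr 1; ring

lemma poly_exp2 (t : ℝ) : t^2 * Real.exp (-t^2) ≤ 2 * Real.exp (-t^2/2) := by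
  have h : t^2 ≤ 2 * Real.exp (t^2/2) := by
    have := Real.add_one_le_exp (t^2/2)
    nlinarith 
  calc t^2 * Real.exp (-t^2) ≤ (2 * Real.exp (t^2/2)) * Real.exp (-t^2) := by gcongr
    _ = _ := by rw [mul_assoc, ← Real.exp_add]; congr 2; ring

lemma poly_exp3 (t : ℝ) (ht : 0 ≤ t) : t^3 * Real.exp (-t^2) ≤ 8 * Real.exp (-t^2/2) := by
  have h : t^3 ≤ 8 * Real.exp (t^2/2) := by
    have h1 := Real.quadratic_le_exp_of_nonneg (x := t^2/2) (by positivity)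
    nlinarith [sq_nonneg (t^2-4*t), sq_nonneg (t), sq_nonneg (t^2-2*t)]
  calc t^3 * Real.exp (-t^2) ≤ (8 * Real.exp (t^2/2)) * Real.exp (-t^2) := by gcongr
    _ = _ := by rw [mul_assoc, ← Real.exp_add]; congr 2; ring

lemma local_limit (G : ℝ → ℂ) (hG : Continuous G) (N r δ A B T ε : ℝ) (hN : 0 < N) (hr : 0 < r)
    (hrN : r^2 = N/10) (hδ : 0 < δ) (hδπ : δ ≤ π) (hA : 0 ≤ A) (hB : 0 ≤ B) (hT : 0 ≤ T) (hε : 0 ≤ ε)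
    (h1 : ∀ θ, |θ| ≤ δ → ‖G θ + ((N * θ^2/2 : ℝ):ℂ)‖ ≤ A * |θ| + B * |θ|^2 + T * |θ|^3)
    (h2 : ∀ θ, |θ| ≤ δ → (G θ).re ≤ -(r^2*θ^2))
    (h3 : ∀ θ, δ < |θ| → |θ| ≤ π → ‖Complex.exp (G θ)‖ ≤ ε) :
    ‖(∫ θ in (-π)..π, Complex.exp (G θ)) - ((√(2*π/N) : ℝ):ℂ)‖ ≤
      (A/r + 2*B/r^2 + 8*T/r^3 + 1/(δ*r)) * √(20*π/N) + 2*π*ε := by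
  set K := A/r + 2*B/r^2 + 8*T/r^3 + 1/(δ*r) with hK
  have hK0 : 0 ≤ K := by positivity
  have hπ := Real.pi_pos
  rw [intervalIntegral.integral_of_le (by linarith), ← MeasureTheory.integral_indicator measurableSet_Ioc]
  have hgauss : ((√(2*π/N) : ℝ):ℂ) = ∫ θ : ℝ, ((Real.exp (-(N/2) * θ^2) : ℝ) : ℂ) := by
    rw [integral_complex_ofReal, integral_gaussian]
    congr 2
    field_simp
  have hgi : MeasureTheory.Integrable (fun θ : ℝ => ((Real.exp (-(N/2) * θ^2) : ℝ) : ℂ)) := by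
    exact (integrable_exp_neg_mul_sq (by positivity)).ofReal
  have hGi : MeasureTheory.Integrable ((Set.Ioc (-π) π).indicator (fun θ => Complex.exp (G θ))) := by
    rw [MeasureTheory.integrable_indicator_iff measurableSet_Ioc]
    exact (Continuous.integrableOn_Icc (by fun_prop)).mono_set Set.Ioc_subset_Icc_self
  rw [hgauss, ← MeasureTheory.integral_sub hGi hgi]
  have hgi2 : MeasureTheory.Integrable (fun θ : ℝ => Real.exp (-(r^2/2) * θ^2)) :=
    integrable_exp_neg_mul_sq (by positivity)
  have hci : MeasureTheory.Integrable ((Set.Ioc (-π) π).indicator (fun _ : ℝ => ε)) := by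
    rw [MeasureTheory.integrable_indicator_iff measurableSet_Ioc]
    simp
  have hI : ∫ θ : ℝ, (K * Real.exp (-(r^2/2) * θ^2) + (Set.Ioc (-π) π).indicator (fun _ : ℝ => ε) θ) =
      K * √(20*π/N) + 2*π*ε := by
    rw [MeasureTheory.integral_add (hgi2.const_mul K) hci, MeasureTheory.integral_const_mul, integral_gaussian,
      MeasureTheory.integral_indicator measurableSet_Ioc]
    congr 1
    · congr 2
      rw [hrN]; field_simp; ring
    · rw [MeasureTheory.setIntegral_const]
      simp [MeasureTheory.measureReal_def, Real.volume_Ioc]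
      rw [ENNReal.toReal_ofReal (by linarith)]
      ring_nf
      simp
  rw [← hI]
  apply MeasureTheory.norm_integral_le_of_norm_le ((hgi2.const_mul K).add hci)
  refine Filter.Eventually.of_forall (fun θ => ?_)
  have hexp : ∀ c : ℝ, Real.exp (-(c/2) * θ^2) = Real.exp (-(c*|θ|^2)/2) := by
    intro c; rw [sq_abs]; congr 1; ring
  have ht : 0 ≤ r * |θ| := by positivity
  have p1 := poly_exp1 (r*|θ|) ht
  have p2 := poly_exp2 (r*|θ|)
  have p3 := poly_exp3 (r*|θ|) ht
  have es : (r*|θ|)^2 = r^2*θ^2 := by rw [mul_pow, sq_abs]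
  rw [es] at p1 p2
  rw [es] at p3
  have eh : Real.exp (-(r^2/2) * θ^2) = Real.exp (-(r^2*θ^2)/2) := by congr 1; ring
  rw [Pi.add_apply]
  rw [eh]
  set X := Real.exp (-(r^2*θ^2)/2) with hX
  set Y := Real.exp (-(r^2*θ^2)) with hY
  have hX0 : 0 < X := Real.exp_pos _
  have hY0 : 0 < Y := Real.exp_pos _
  have hgY : Real.exp (-(N/2)*θ^2) ≤ Y := by
    apply Real.exp_le_exp.mpr
    rw [hrN]
    nlinarith [sq_nonneg θ]
  by_cases hθ : |θ| ≤ δ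
  · have hind : ‖(Set.Ioc (-π) π).indicator (fun θ => Complex.exp (G θ)) θ - ((Real.exp (-(N/2)*θ^2) : ℝ):ℂ)‖ ≤ K * X ∨ θ = -π := by
      by_cases hm : θ ∈ Set.Ioc (-π) π
      · left
        rw [Set.indicator_of_mem hm]
        have e1 : ((Real.exp (-(N/2)*θ^2) : ℝ):ℂ) = Complex.exp (((-(N*θ^2/2) : ℝ)):ℂ) := by
          rw [Complex.ofReal_exp]; congr 2; ring
        rw [e1]
        have hb := exp_diff_bound (G θ) (((-(N*θ^2/2) : ℝ)):ℂ) (r^2*θ^2) (h2 θ hθ) (by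
          rw [Complex.ofReal_re, hrN]; nlinarith [sq_nonneg θ])
        refine hb.trans ?_
        have e2 : G θ - (((-(N*θ^2/2) : ℝ)):ℂ) = G θ + ((N * θ^2/2 : ℝ):ℂ) := by
          push_cast; ring
        rw [e2]
        calc Y * ‖G θ + ((N * θ^2/2 : ℝ):ℂ)‖ ≤ Y * (A * |θ| + B * |θ|^2 + T * |θ|^3) := by
              gcongr; exact h1 θ hθ
          _ = (A/r) * ((r*|θ|) * Y) + (B/r^2) * ((r^2*θ^2) * Y) + (T/r^3) * ((r*|θ|)^3*Y) := by
              rw [← sq_abs θ]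
              field_simp
          _ ≤ (A/r) * X + (B/r^2) * (2 * X) + (T/r^3) * (8*X) := by gcongr
          _ ≤ K * X := by
              rw [hK]
              have : 0 ≤ 1/(δ*r) * X := by positivity
              nlinarith [this, show (B/r^2) * (2 * X) = 2*B/r^2*X by ring, show (T/r^3) * (8*X) = 8*T/r^3*X by ring]
      · right
        rw [Set.mem_Ioc, not_and_or] at hm
        have := abs_le.mp (hθ.trans hδπ)
        rcases hm with hm | hm
        · linarith
        · exfalso; linarith
    have hind0 : 0 ≤ (Set.Ioc (-π) π).indicator (fun _ : ℝ => ε) θ := Set.indicator_nonneg (fun _ _ => hε) θ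
    rcases hind with h | h
    · skip
      linarith
    · have hnm : θ ∉ Set.Ioc (-π) π := by rw [h]; simp
      rw [Set.indicator_of_notMem hnm, Set.indicator_of_notMem hnm]
      rw [zero_sub, norm_neg, Complex.norm_real, Real.norm_of_nonneg (Real.exp_pos _).le, add_zero]
      have hδ1 : δ = π := by
        apply le_antisymm hδπ
        rw [h, abs_neg, abs_of_pos hπ] at hθ
        exact hθ
      have hab : |θ| = δ := by rw [h, abs_neg, abs_of_pos hπ, hδ1]
      calc Real.exp (-(N/2)*θ^2) ≤ Y := hgY
        _ = (1/(δ*r)) * ((r*|θ|) * Y) := by rw [hab]; field_simp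
        _ ≤ (1/(δ*r)) * X := by gcongr
        _ ≤ K * X := by
          gcongr
          rw [hK]
          have : 0 ≤ A/r + 2*B/r^2 + 8*T/r^3 := by positivity
          linarith
  · push Not at hθ
    have hg : Real.exp (-(N/2)*θ^2) ≤ K * X := by
      calc Real.exp (-(N/2)*θ^2) ≤ Y := hgY
        _ = 1 * Y := by ring
        _ ≤ (1/δ * |θ|) * Y := by
          gcongr
          rw [div_mul_eq_mul_div, one_mul, one_le_div hδ]; exact hθ.le
        _ = (1/(δ*r)) * ((r*|θ|) * Y) := by field_simp
        _ ≤ (1/(δ*r)) * X := by gcongr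
        _ ≤ K * X := by
          gcongr
          rw [hK]
          have : 0 ≤ A/r + 2*B/r^2 + 8*T/r^3 := by positivity
          linarith
    refine (norm_sub_le _ _).trans ?_
    rw [Complex.norm_real, Real.norm_of_nonneg (Real.exp_pos _).le, add_comm]
    refine add_le_add hg ?_
    by_cases hm : θ ∈ Set.Ioc (-π) π
    · rw [Set.indicator_of_mem hm, Set.indicator_of_mem hm]
      exact h3 θ hθ (abs_le.mpr ⟨hm.1.le, hm.2⟩)
    · rw [Set.indicator_of_notMem hm, Set.indicator_of_notMem hm]; simp

end Part8


section Part9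

lemma geomM (m : ℕ) (x : ℝ) : (∑ j ∈ Finset.range m, x^(j+1)) * (x-1) = x * (x^m - 1) := by
  induction m with
  | zero => simp
  | succ k ih => rw [Finset.sum_range_succ, add_mul, ih]; ring

lemma geomW (m : ℕ) (x : ℝ) (hx : 1 < x) :
    (∑ j ∈ Finset.range m, ((m:ℝ) - ((j+1:ℕ):ℝ)) * x^(j+1)) * (x-1)^2 ≤ x^(m+1) := by
  induction m with
  | zero => simp; linarith
  | succ k ih =>
    have e : ∑ j ∈ Finset.range (k+1), (((k+1:ℕ):ℝ) - ((j+1:ℕ):ℝ)) * x^(j+1) =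
      ∑ j ∈ Finset.range k, ((k:ℝ) - ((j+1:ℕ):ℝ)) * x^(j+1) + ∑ j ∈ Finset.range k, x^(j+1) := by
      rw [Finset.sum_range_succ, ← Finset.sum_add_distrib]
      rw [sub_self, zero_mul, add_zero]
      apply Finset.sum_congr rfl
      intro j _
      push_cast; ring
    rw [e, add_mul]
    have h := geomM k x
    have : (∑ j ∈ Finset.range k, x^(j+1)) * (x-1)^2 = x * (x^k - 1) * (x-1) := by rw [← h]; ring
    rw [this]
    have : 0 ≤ x * (x-1) := by nlinarith
    have e2 : x^(k+1+1) = x^(k+1) + x * x^k*(x-1) := by ring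
    nlinarith

lemma gfun_taylor (m n : ℕ) (x θ : ℝ) (hx : 0 < x) (hθ : m * |θ| ≤ π) :
    ‖gfun m n x θ + (((n:ℝ) * m * θ^2/2 : ℝ):ℂ)‖ ≤
      |(n:ℝ) - ∑ j ∈ Finset.range m, x^(j+1)| * |θ| +
      |(n:ℝ) * m - ∑ j ∈ Finset.range m, ((j+1:ℕ):ℝ) * x^(j+1)|/2 * |θ|^2 +
      (∑ j ∈ Finset.range m, ((j+1:ℕ):ℝ)^2 * x^(j+1)) * Real.exp π * |θ|^3 := by
  set M := ∑ j ∈ Finset.range m, x^(j+1) with hM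
  set S := ∑ j ∈ Finset.range m, ((j+1:ℕ):ℝ) * x^(j+1) with hS
  have key : gfun m n x θ + (((n:ℝ) * m * θ^2/2 : ℝ):ℂ) =
     (-((((n:ℝ) - M) * θ : ℝ):ℂ) * Complex.I + ((((n:ℝ)*m - S)/2 * θ^2 : ℝ):ℂ)) +
     ∑ j ∈ Finset.range m, ((x^(j+1) / ((j+1:ℕ):ℝ) : ℝ) : ℂ) *
      (Complex.exp (((((j+1:ℕ):ℝ) * θ : ℝ) : ℂ) * Complex.I) -
        ∑ k ∈ Finset.range 3, (((((j+1:ℕ):ℝ) * θ : ℝ) : ℂ) * Complex.I)^k / (k.factorial:ℂ)) := by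
    have e : ∀ j ∈ Finset.range m, ((x^(j+1) / ((j+1:ℕ):ℝ) : ℝ) : ℂ) *
      (Complex.exp (((((j+1:ℕ):ℝ) * θ : ℝ) : ℂ) * Complex.I) -
        ∑ k ∈ Finset.range 3, (((((j+1:ℕ):ℝ) * θ : ℝ) : ℂ) * Complex.I)^k / (k.factorial:ℂ)) =
       ((x^(j+1) / ((j+1:ℕ):ℝ) : ℝ) : ℂ) * (Complex.exp (((((j+1:ℕ):ℝ) * θ : ℝ) : ℂ) * Complex.I) - 1)
        - ((x^(j+1) : ℝ):ℂ) * ((θ:ℂ) * Complex.I) + ((((j+1:ℕ):ℝ) * x^(j+1) : ℝ):ℂ) * ((θ:ℂ)^2/2) := by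
      intro j _
      have hj : ((j:ℂ)+1) ≠ 0 := by exact_mod_cast Nat.succ_ne_zero j
      have hI : Complex.I^2 = -1 := Complex.I_sq
      simp only [Finset.sum_range_succ, Finset.sum_range_zero, Nat.factorial]
      push_cast
      field_simp
      simp only [hI]
      ring
    rw [Finset.sum_congr rfl e, Finset.sum_add_distrib, Finset.sum_sub_distrib, ← Finset.sum_mul, ← Finset.sum_mul]
    unfold gfun
    rw [hM, hS]
    push_cast
    ring
  rw [key]
  have n1 : ‖-((((n:ℝ) - M) * θ : ℝ):ℂ) * Complex.I‖ = |(n:ℝ) - M| * |θ| := by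
    rw [norm_mul, norm_neg, Complex.norm_I, Complex.norm_real, mul_one, Real.norm_eq_abs, abs_mul]
  have n2 : ‖((((n:ℝ)*m - S)/2 * θ^2 : ℝ):ℂ)‖ = |(n:ℝ)*m - S|/2 * |θ|^2 := by
    rw [Complex.norm_real, Real.norm_eq_abs, abs_mul, abs_div, abs_pow]; norm_num
  refine (norm_add_le _ _).trans ?_
  refine add_le_add ((norm_add_le _ _).trans (by rw [n1, n2])) ?_
  refine (norm_sum_le _ _).trans ?_
  rw [Finset.sum_mul, Finset.sum_mul]
  apply Finset.sum_le_sum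
  intro j hj
  have hj' := Finset.mem_range.mp hj
  rw [norm_mul, Complex.norm_real, Real.norm_of_nonneg (by positivity)]
  have hb := Complex.norm_exp_sub_sum_le_norm_mul_exp (((((j+1:ℕ):ℝ) * θ : ℝ) : ℂ) * Complex.I) 3
  have hn : ‖((((j+1:ℕ):ℝ) * θ : ℝ) : ℂ) * Complex.I‖ = ((j+1:ℕ):ℝ) * |θ| := by
    rw [norm_mul, Complex.norm_I, Complex.norm_real, mul_one, Real.norm_eq_abs, abs_mul, Nat.abs_cast]
  rw [hn] at hb
  have hle : ((j+1:ℕ):ℝ) * |θ| ≤ π := by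
    refine le_trans ?_ hθ
    gcongr
    exact_mod_cast hj'
  have hexp := Real.exp_le_exp.mpr hle
  have hj0 : (0:ℝ) < ((j+1:ℕ):ℝ) := by positivity
  calc _ ≤ x^(j+1) / ((j+1:ℕ):ℝ) * ((((j+1:ℕ):ℝ) * |θ|)^3 * Real.exp (((j+1:ℕ):ℝ) * |θ|)) := by gcongr
    _ ≤ x^(j+1) / ((j+1:ℕ):ℝ) * ((((j+1:ℕ):ℝ) * |θ|)^3 * Real.exp π) := by gcongr
    _ = _ := by field_simp

lemma gfun_re (m n : ℕ) (x θ : ℝ) : (gfun m n x θ).re =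
    ∑ j ∈ Finset.range m, x^(j+1) / ((j+1:ℕ):ℝ) * (Real.cos (((j+1:ℕ):ℝ)*θ) - 1) := by
  unfold gfun
  rw [Complex.sub_re, Complex.re_sum]
  have : ((((n:ℝ) * θ : ℝ) : ℂ) * Complex.I).re = 0 := by simp
  rw [this, sub_zero]
  apply Finset.sum_congr rfl
  intro j _
  rw [Complex.re_ofReal_mul, Complex.sub_re, Complex.exp_ofReal_mul_I_re, Complex.one_re]

lemma gfun_re_le (m n : ℕ) (x θ : ℝ) (hx : 0 < x) (hθ : m * |θ| ≤ π) :
    (gfun m n x θ).re ≤ -(2/π^2 * (∑ j ∈ Finset.range m, ((j+1:ℕ):ℝ) * x^(j+1)) * θ^2) := by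
  rw [gfun_re, Finset.mul_sum, Finset.sum_mul, ← Finset.sum_neg_distrib]
  apply Finset.sum_le_sum
  intro j hj
  have hj' := Finset.mem_range.mp hj
  have hle : |((j+1:ℕ):ℝ) * θ| ≤ π := by
    rw [abs_mul, Nat.abs_cast]
    refine le_trans ?_ hθ
    gcongr
    exact_mod_cast hj'
  have := Real.cos_le_one_sub_mul_cos_sq hle
  have hj0 : (0:ℝ) < ((j+1:ℕ):ℝ) := by positivity
  calc _ ≤ x^(j+1) / ((j+1:ℕ):ℝ) * (-(2/π^2 * (((j+1:ℕ):ℝ)*θ)^2)) := by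
        gcongr; linarith
    _ = _ := by field_simp

set_option maxHeartbeats 2000000 in
lemma claimP : ∃ C : ℝ, 0 < C ∧ ∀ m n : ℕ, 1 ≤ m → m ≤ n → ∀ y : ℝ, 0 < y → y < 1 →
    y^m*(1-y)*n = 1 → (1-y)⁻¹ ≤ n/4 → y/(1-y) ≤ m/4 →
    (∀ θ : ℝ, π/m < |θ| → |θ| ≤ π → (gfun m n y⁻¹ θ).re ≤ - Real.log n) →
    |pc m n * (y⁻¹)^n * Real.exp (-(Fx m y⁻¹)) * √(2*π*n*m) - 1| ≤ C * (y/(m*(1-y)) + √((m:ℝ)/n)) := by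
  refine ⟨1000000, by norm_num, ?_⟩
  intro m n hm hmn y hy0 hy1 hn hv1 hv2 hA2
  have hπ := Real.pi_pos
  have hm0 : (0:ℝ) < m := by exact_mod_cast hm
  have hm1 : (1:ℝ) ≤ m := by exact_mod_cast hm
  have hmn' : (m:ℝ) ≤ n := by exact_mod_cast hmn
  have hn0 : (0:ℝ) < n := by linarith
  have h1y : 0 < 1 - y := by linarith
  set x := y⁻¹ with hx
  have hx0 : 0 < x := by positivity
  have hx1 : 1 < x := (one_lt_inv₀ hy0).mpr hy1
  have hxy : x * y = 1 := inv_mul_cancel₀ hy0.ne'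
  have hxm : x^m = (1-y)*n := by
    have : x^m * y^m = 1 := by rw [← mul_pow, hxy, one_pow]
    calc x^m = x^m * (y^m*(1-y)*n) := by rw [hn, mul_one]
      _ = (x^m*y^m)*((1-y)*n) := by ring
      _ = _ := by rw [this, one_mul]
  set V := y/(1-y) with hV
  have hV0 : 0 < V := by positivity
  have hv : (1-y)⁻¹ = 1 + V := by rw [hV]; field_simp; ring
  rw [hv] at hv1
  have hVx : V * (x-1) = 1 := by
    rw [hV]; field_simp; rw [mul_sub, mul_comm y x, hxy]; ring
  have hVy : (1+V)*(1-y) = 1 := by rw [← hv]; field_simp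
  have hM : ∑ j ∈ Finset.range m, x^(j+1) = n - (1+V) := by
    have h := geomM m x
    have : (∑ j ∈ Finset.range m, x^(j+1)) = V * (x * (x^m-1)) := by
      rw [← h]; linear_combination (-(∑ j ∈ Finset.range m, x^(j+1))) * hVx
    rw [this, hxm]
    have hVx2 : V * x = 1 + V := by linear_combination hVx
    linear_combination ((1-y)*n-1) * hVx2 + n * hVy
  have hW := geomW m x hx1
  have hW' : ∑ j ∈ Finset.range m, ((m:ℝ) - ((j+1:ℕ):ℝ)) * x^(j+1) ≤ n * V := by
    have e : x^(m+1) * V^2 = n * V := by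
      rw [pow_succ, hxm]
      have hVx2 : V * x = 1 + V := by linear_combination hVx
      linear_combination ((1-y)*n*V) * hVx2 + n*V*hVy
    calc _ = (∑ j ∈ Finset.range m, ((m:ℝ) - ((j+1:ℕ):ℝ)) * x^(j+1)) * (x-1)^2 * V^2 := by
          rw [mul_assoc, ← mul_pow, mul_comm (x-1) V, hVx, one_pow, mul_one]
      _ ≤ x^(m+1) * V^2 := by gcongr
      _ = _ := e
  have hW0 : 0 ≤ ∑ j ∈ Finset.range m, ((m:ℝ) - ((j+1:ℕ):ℝ)) * x^(j+1) := by
    apply Finset.sum_nonneg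
    intro j hj
    have : ((j+1:ℕ):ℝ) ≤ m := by exact_mod_cast Finset.mem_range.mp hj
    exact mul_nonneg (by linarith) (by positivity)
  set S := ∑ j ∈ Finset.range m, ((j+1:ℕ):ℝ) * x^(j+1) with hS
  have hSW : ∑ j ∈ Finset.range m, ((m:ℝ) - ((j+1:ℕ):ℝ)) * x^(j+1) = m * (n - (1+V)) - S := by
    rw [← hM, Finset.mul_sum, hS, ← Finset.sum_sub_distrib]
    apply Finset.sum_congr rfl
    intro j _; ring
  rw [hSW] at hW' hW0
  have hS1 : 0 ≤ n * m - S := by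
    have : 0 < m * (1+V) := by positivity
    linarith
  have hS2 : n*m - S ≤ m*(1+V) + n*V := by linarith
  have hSlow : n*m/2 ≤ S := by
    have a1 : m*(1+V) ≤ m*(n/4) := by gcongr
    have a2 : n*V ≤ n*(m/4) := by gcongr
    linarith
  have hT : ∑ j ∈ Finset.range m, ((j+1:ℕ):ℝ)^2 * x^(j+1) ≤ m^2 * n := by
    calc _ ≤ ∑ j ∈ Finset.range m, (m:ℝ)^2 * x^(j+1) := by
          apply Finset.sum_le_sum
          intro j hj
          have : ((j+1:ℕ):ℝ) ≤ m := by exact_mod_cast Finset.mem_range.mp hj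
          gcongr
      _ = m^2 * (n - (1+V)) := by rw [← Finset.mul_sum, hM]
      _ ≤ _ := by gcongr; linarith
  set s := √((n:ℝ)*m) with hs
  have hs0 : 0 < s := Real.sqrt_pos.mpr (by positivity)
  have hss : s^2 = n*m := Real.sq_sqrt (by positivity)
  set t := √(10:ℝ) with ht
  have ht0 : 0 < t := Real.sqrt_pos.mpr (by norm_num)
  have htt : t^2 = 10 := Real.sq_sqrt (by norm_num)
  have ht32 : t ≤ 3.2 := Real.sqrt_le_iff.mpr ⟨by norm_num, by norm_num⟩
  have hsm : (m:ℝ) ≤ s := Real.le_sqrt_of_sq_le (by rw [sq]; gcongr)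
  have hsn : s ≤ n := Real.sqrt_le_iff.mpr ⟨hn0.le, by rw [sq]; gcongr⟩
  have hq : √((m:ℝ)/n) = m/s := by
    rw [show (m:ℝ)/n = (m/s)^2 by rw [div_pow, hss]; field_simp]
    exact Real.sqrt_sq (by positivity)
  have hpi10 : π^2 ≤ 10 := by nlinarith [Real.pi_lt_d2, Real.pi_gt_three]
  have hepi : Real.exp π ≤ 55 := by
    have h1 := Real.exp_one_lt_d9
    have : Real.exp π ≤ Real.exp 1 ^ 4 := by
      rw [← Real.exp_nat_mul]; apply Real.exp_le_exp.mpr; push_cast; linarith [Real.pi_le_four]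
    refine this.trans ?_
    calc Real.exp 1 ^ 4 ≤ 2.72^4 := by gcongr; linarith
      _ ≤ 55 := by norm_num
  have hepi0 := Real.exp_pos π
  have LL := local_limit (fun θ => gfun m n x θ) (gfun_cont m n x) ((n:ℝ)*m) (s/t) (π/m) (1+V)
    ((m*(1+V)+n*V)/2) (m^2*n*Real.exp π) (1/n) (by positivity) (by positivity) (by rw [div_pow, hss, htt])
    (by positivity) (div_le_self hπ.le hm1) (by positivity) (by positivity) (by positivity) (by positivity)
    (by
      intro θ hθ
      have hθ' : m * |θ| ≤ π := by rwa [le_div_iff₀ hm0, mul_comm] at hθ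
      refine (gfun_taylor m n x θ hx0 hθ').trans ?_
      rw [hM, show (n:ℝ) - (n - (1+V)) = 1+V by ring, abs_of_pos (show 0 < 1+V by positivity), abs_of_nonneg hS1]
      gcongr)
    (by
      intro θ hθ
      have hθ' : m * |θ| ≤ π := by rwa [le_div_iff₀ hm0, mul_comm] at hθ
      refine (gfun_re_le m n x θ hx0 hθ').trans ?_
      rw [neg_le_neg_iff, div_pow, hss, htt, ← hS]
      have : (n:ℝ)*m/10 ≤ 2/π^2*S := by
        rw [div_mul_eq_mul_div, le_div_iff₀ (by positivity)]
        have : 0 < (n:ℝ)*m := by positivity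
        nlinarith
      gcongr)
    (by
      intro θ hθ hθ2
      rw [Complex.norm_exp]
      refine (Real.exp_le_exp.mpr (hA2 θ hθ hθ2)).trans ?_
      rw [Real.exp_neg, Real.exp_log hn0, one_div])
  rw [int_formula m n x hx0] at LL
  rw [← Complex.ofReal_sub, Complex.norm_real, Real.norm_eq_abs] at LL
  set P := pc m n * x^n * Real.exp (-(Fx m x)) with hP
  rw [show 2*π*pc m n * x^n * Real.exp (-(Fx m x)) = 2*π*P by rw [hP]; ring] at LL
  set l := √(2*π) with hl
  have hl0 : 0 < l := Real.sqrt_pos.mpr (by positivity)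
  have hll : l^2 = 2*π := Real.sq_sqrt (by positivity)
  have e1 : √(2*π/((n:ℝ)*m)) = l/s := by rw [Real.sqrt_div' _ (by positivity)]
  have e2 : √(20*π/((n:ℝ)*m)) = t*l/s := by
    rw [Real.sqrt_div' _ (by positivity), hl, ht, ← Real.sqrt_mul (by norm_num)]
    congr 2; ring
  have e3 : √(2*π*n*m) = l*s := by
    rw [hl, hs, ← Real.sqrt_mul (by positivity)]; congr 1; ring
  rw [e1, e2] at LL
  rw [e3, hq]
  set K := (1 + V) / (s / t) + 2 * ((m * (1 + V) + n * V) / 2) / (s / t) ^ 2 + 8 * (m ^ 2 * n * rexp π) / (s / t) ^ 3 +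
          1 / (π / m * (s / t)) with hK
  have hD : y/(m*(1-y)) = V/m := by rw [hV]; field_simp
  rw [hD]
  set D := V/m + m/s with hDD
  have hVm0 : 0 < V/m := by positivity
  have hms0 : 0 < m/s := by positivity
  have hKb : K ≤ 15000 * D := by
    have k1 : (1+V)/(s/t) ≤ t * D := by
      have a1 : 1/s ≤ m/s := by gcongr
      have a2 : V/s ≤ V/m := by gcongr
      calc (1+V)/(s/t) = t * (1/s + V/s) := by field_simp
        _ ≤ t * D := by
          rw [hDD]; exact mul_le_mul_of_nonneg_left (by linarith) ht0.le
    have k2 : 2 * ((m * (1 + V) + n * V) / 2) / (s / t) ^ 2 ≤ 20 * D := by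
      have a1 : 1/(n:ℝ) ≤ m/s := by gcongr
      have a2 : V/n ≤ V/m := by gcongr
      calc 2 * ((m * (1 + V) + n * V) / 2) / (s / t) ^ 2 = 10*(1/n + V/n + V/m) := by
            rw [div_pow, hss, htt]; field_simp
        _ ≤ 20 * D := by rw [hDD]; linarith
    have k3 : 8 * (m ^ 2 * n * rexp π) / (s / t) ^ 3 = 80*t*rexp π * (m/s) := by
      have : (s/t)^3 = n*m/10 * (s/t) := by rw [pow_succ, div_pow, hss, htt]
      rw [this]
      field_simp; norm_num
    have k4 : 1 / (π / m * (s / t)) ≤ t * (m/s) := by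
      have : 1 / (π / m * (s / t)) = t * (m/s) / π := by field_simp
      rw [this]
      exact div_le_self (by positivity) (by linarith [Real.pi_gt_three])
    have k3' : 80*t*rexp π * (m/s) ≤ 80*3.2*55 * (m/s) := by gcongr
    have k1' : t*D ≤ 3.2*D := by
      have : 0 < D := by positivity
      gcongr
    have k4' : t*(m/s) ≤ 3.2 * (m/s) := by gcongr
    have hmsD : m/s ≤ D := by linarith
    rw [hK, k3]
    linarith
  have hfin : P*(l*s) - 1 = (2*π*P - l/s) * (s/l) := by
    have : 2*π*P = l^2*P := by rw [hll]
    rw [this]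
    field_simp
  rw [hfin, abs_mul, abs_of_pos (show 0 < s/l by positivity)]
  have hl3 : l ≤ 3 := Real.sqrt_le_iff.mpr ⟨by norm_num, by linarith [Real.pi_lt_d2]⟩
  have hD0 : 0 < D := by positivity
  have hmsD : m/s ≤ D := by linarith
  calc |2*π*P - l/s| * (s/l) ≤ (K * (t*l/s) + 2*π*(1/n)) * (s/l) := by gcongr
    _ = K * t + l * (m/s) := by
        rw [← hll]
        have : s/n = m/s := by rw [div_eq_div_iff hn0.ne' hs0.ne']; linarith [hss]
        rw [← this]
        field_simp
    _ ≤ (15000*D)*3.2 + 3 * D := by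
        have hK0 : 0 ≤ K := by positivity
        gcongr
    _ ≤ 1000000 * D := by linarith

end Part9


section Part10

lemma geomC (m : ℕ) (z : ℂ) : (∑ j ∈ Finset.range m, z^(j+1)) * (z-1) = z * (z^m - 1) := by
  induction m with
  | zero => simp
  | succ k ih => rw [Finset.sum_range_succ, add_mul, ih]; ring

lemma inv_sqrt_le (κ q : ℝ) (hκ : 0 ≤ κ) (hq : 0 ≤ q) (h : 1 + κ ≤ q^2) :
    1 ≤ q * (1 - κ/(2*(1+κ))) := by
  have h1 : 0 ≤ 1 - κ/(2*(1+κ)) := by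
    rw [sub_nonneg, div_le_one (by positivity)]; linarith
  have h2 : (1 + κ) * (1 - κ/(2*(1+κ)))^2 ≥ 1 := by
    have : (1 + κ) * (1 - κ/(2*(1+κ)))^2 = 1 + κ^2/(4*(1+κ)) := by field_simp; ring
    rw [this]
    have : 0 ≤ κ^2/(4*(1+κ)) := by positivity
    linarith
  have h3 : 1 ≤ (q * (1 - κ/(2*(1+κ))))^2 := by
    rw [mul_pow]
    have := mul_le_mul_of_nonneg_right h (sq_nonneg (1 - κ/(2*(1+κ))))
    linarith
  have h4 : 0 ≤ q * (1 - κ/(2*(1+κ))) := mul_nonneg hq h1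
  nlinarith

lemma minor_arc (m n : ℕ) (hm : 1 ≤ m) (y : ℝ) (hy0 : 0 < y) (hy1 : y < 1)
    (hn : y^m*(1-y)*n = 1) (θ : ℝ) (h1 : π/m < |θ|) (h2 : |θ| ≤ π) (κ : ℝ)
    (hκ : κ = 4*y/(m^2*(1-y)^2)) :
    (gfun m n y⁻¹ θ).re ≤ -((n/(2*m)) * (κ/(1+κ)) - 2*(1-y)⁻¹/m) := by
  have hπ := Real.pi_pos
  have hm0 : (0:ℝ) < m := by exact_mod_cast hm
  have hn0 : (0:ℝ) < n := by
    rcases Nat.eq_zero_or_pos n with h | h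
    · subst h; simp at hn
    · exact_mod_cast h
  have h1y : 0 < 1 - y := by linarith
  set x := y⁻¹ with hx
  have hx0 : 0 < x := by positivity
  have hx1 : 1 < x := (one_lt_inv₀ hy0).mpr hy1
  have hxy : x * y = 1 := inv_mul_cancel₀ hy0.ne'
  have hxm : x^m = (1-y)*n := by
    have : x^m * y^m = 1 := by rw [← mul_pow, hxy, one_pow]
    calc x^m = x^m * (y^m*(1-y)*n) := by rw [hn, mul_one]
      _ = (x^m*y^m)*((1-y)*n) := by ring
      _ = _ := by rw [this, one_mul]
  set v := (1-y)⁻¹ with hv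
  have hv0 : 0 < v := by positivity
  have hvy : v * (1-y) = 1 := inv_mul_cancel₀ h1y.ne'
  have hvx : v * (x-1) = x := by
    linear_combination x * hvy + v * hxy
  have hM : ∑ j ∈ Finset.range m, x^(j+1) = n - v := by
    have h := geomM m x
    have hne : x - 1 ≠ 0 := by linarith
    apply mul_right_cancel₀ hne
    rw [h, hxm]
    linear_combination (-n*(1-y)+1) * hvx + (n*(x-1)) * hvy
  set z : ℂ := (x:ℂ) * Complex.exp (θ * Complex.I) with hz
  have hzn : ‖z‖ = x := by
    rw [hz, norm_mul, Complex.norm_exp_ofReal_mul_I, Complex.norm_real, Real.norm_of_nonneg hx0.le, mul_one]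
  have hzre : ∀ j : ℕ, (z^j).re = x^j * Real.cos (j*θ) := by
    intro j
    rw [hz, mul_pow, ← Complex.exp_nat_mul, ← Complex.ofReal_pow, Complex.re_ofReal_mul]
    rw [show (j:ℂ) * (θ * Complex.I) = ((j*θ : ℝ):ℂ) * Complex.I by push_cast; ring, Complex.exp_ofReal_mul_I_re]
  have hz1 : ‖z - 1‖^2 = (x-1)^2 + 2*x*(1-Real.cos θ) := by
    rw [← Complex.normSq_eq_norm_sq, Complex.normSq_apply]
    have a : z.re = x * Real.cos θ := by have := hzre 1; simpa using this
    have b : z.im = x * Real.sin θ := by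
      rw [hz, Complex.im_ofReal_mul, Complex.exp_ofReal_mul_I_im]
    rw [Complex.sub_re, Complex.sub_im, a, b, Complex.one_re, Complex.one_im]
    have := Real.sin_sq_add_cos_sq θ
    linear_combination x^2 * this
  have hcos := Real.cos_le_one_sub_mul_cos_sq h2
  have hθ2 : (π/m)^2 ≤ θ^2 := by
    rw [← sq_abs θ]; gcongr
  have hcos2 : 2/m^2 ≤ 1 - Real.cos θ := by
    have : 2/π^2*(π/m)^2 ≤ 2/π^2*θ^2 := by gcongr
    have e : 2/π^2*(π/m)^2 = 2/m^2 := by field_simp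
    linarith
  have hκ0 : 0 ≤ κ := by rw [hκ]; positivity
  have hx1' : 0 < x - 1 := by linarith
  have hq : 1 + κ ≤ (‖z-1‖/(x-1))^2 := by
    rw [div_pow, le_div_iff₀ (by positivity), hz1]
    have : κ * (x-1)^2 = 4*x/m^2 := by
      have : (x-1) = x*(1-y) := by linear_combination hxy
      rw [hκ, this]
      have hxyy : x^2*y = x := by rw [sq, mul_assoc, hxy, mul_one]
      field_simp
      linarith
    have h4 : 4*x/m^2 ≤ 2*x*(1-Real.cos θ) := by
      calc 4*x/m^2 = 2*x*(2/m^2) := by ring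
        _ ≤ _ := by gcongr
    nlinarith
  have hI := inv_sqrt_le κ (‖z-1‖/(x-1)) hκ0 (by positivity) hq
  set R := ∑ j ∈ Finset.range m, z^(j+1) with hR
  have hRn : ‖R‖ ≤ (n+v) * (1 - κ/(2*(1+κ))) := by
    have hg := geomC m z
    have hn1 : ‖R‖ * ‖z-1‖ ≤ x * (x^m+1) := by
      rw [← norm_mul, hg, norm_mul, hzn]
      gcongr
      refine (norm_sub_le _ _).trans ?_
      rw [norm_pow, hzn, norm_one]
    have hfac : 0 ≤ 1 - κ/(2*(1+κ)) := by
      rw [sub_nonneg, div_le_one (by positivity)]; linarith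
    calc ‖R‖ = ‖R‖ * 1 := by ring
      _ ≤ ‖R‖ * (‖z-1‖/(x-1) * (1 - κ/(2*(1+κ)))) := by gcongr
      _ = (‖R‖ * ‖z-1‖)/(x-1) * (1 - κ/(2*(1+κ))) := by ring
      _ ≤ (x * (x^m+1))/(x-1) * (1 - κ/(2*(1+κ))) := by gcongr
      _ = (n+v) * (1 - κ/(2*(1+κ))) := by
        congr 1
        rw [div_eq_iff hx1'.ne', hxm]
        linear_combination (-n*(1-y)-1) * hvx + (n*(x-1)) * hvy
  have hRre : R.re = ∑ j ∈ Finset.range m, x^(j+1) * Real.cos (((j+1:ℕ):ℝ)*θ) := by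
    rw [hR, Complex.re_sum]
    exact Finset.sum_congr rfl (fun j _ => hzre (j+1))
  have hRle : R.re ≤ ‖R‖ := Complex.re_le_norm R
  have hD : (gfun m n x θ).re ≤ (1/m) * (R.re - (n - v)) := by
    rw [gfun_re, hRre, ← hM, ← Finset.sum_sub_distrib, Finset.mul_sum]
    apply Finset.sum_le_sum
    intro j hj
    have hjm : ((j+1:ℕ):ℝ) ≤ m := by exact_mod_cast Finset.mem_range.mp hj
    have hj0 : (0:ℝ) < ((j+1:ℕ):ℝ) := by positivity
    have hc := Real.cos_le_one (((j+1:ℕ):ℝ)*θ)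
    have : x^(j+1)/m * (1 - Real.cos (((j+1:ℕ):ℝ)*θ)) ≤ x^(j+1)/((j+1:ℕ):ℝ) * (1 - Real.cos (((j+1:ℕ):ℝ)*θ)) := by
      apply mul_le_mul_of_nonneg_right _ (by linarith)
      gcongr
    have e : 1/(m:ℝ) * (x^(j+1) * Real.cos (((j+1:ℕ):ℝ)*θ) - x^(j+1)) = -(x^(j+1)/m * (1 - Real.cos (((j+1:ℕ):ℝ)*θ))) := by ring
    rw [e]
    linarith
  refine hD.trans ?_
  have hvk : 0 ≤ v * (κ/(2*(1+κ))) := by positivity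
  have e2 : κ/(2*(1+κ)) = (κ/(1+κ))/2 := by field_simp
  calc (1/m) * (R.re - (n - v)) ≤ (1/m) * (2*v - n * (κ/(2*(1+κ)))) := by
        apply mul_le_mul_of_nonneg_left _ (by positivity)
        linarith
    _ = _ := by rw [e2]; ring

end Part10


section Part11

lemma exist_y (m n : ℕ) (hm : 1 ≤ m) (h : 6*m ≤ n) :
    ∃ y : ℝ, 0 < y ∧ y < 1 ∧ y^m*(1-y)*n = 1 ∧ (1-y)⁻¹ ≤ m+1 := by
  have hm0 : (0:ℝ) < m := by exact_mod_cast hm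
  have hm1 : (1:ℝ) ≤ m := by exact_mod_cast hm
  have hn : 6*(m:ℝ) ≤ n := by exact_mod_cast h
  have hn0 : (0:ℝ) < n := by linarith
  set b : ℝ := m/(m+1) with hb
  have hb0 : 0 < b := by positivity
  have hb1 : 1 - b = 1/(m+1) := by rw [hb]; field_simp; ring
  have hbm : 1/3 ≤ b^m := by
    have h1 : (1 + 1/(m:ℝ))^m ≤ 3 := by
      calc (1 + 1/(m:ℝ))^m ≤ (Real.exp (1/m))^m := by
            gcongr; linarith [Real.add_one_le_exp (1/(m:ℝ))]
        _ = Real.exp 1 := by rw [← Real.exp_nat_mul]; congr 1; field_simp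
        _ ≤ 3 := by linarith [Real.exp_one_lt_d9]
    have h2 : b = (1+1/(m:ℝ))⁻¹ := by rw [hb]; field_simp
    rw [h2, inv_pow, one_div]
    exact inv_anti₀ (by positivity) h1
  have hcont : ContinuousOn (fun y : ℝ => y^m*(1-y)*n) (Set.Icc 0 b) := by fun_prop
  have hiv := intermediate_value_Icc hb0.le hcont
  have hmem : (1:ℝ) ∈ Set.Icc ((fun y : ℝ => y^m*(1-y)*n) 0) ((fun y : ℝ => y^m*(1-y)*n) b) := by
    constructor
    · simp [zero_pow (show m ≠ 0 by omega)]
    · simp only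
      rw [hb1]
      calc (1:ℝ) ≤ 1/3 * (1/(m+1)) * (6*m) := by
            rw [show (1:ℝ)/3 * (1/(m+1)) * (6*m) = 2*m/(m+1) by field_simp; norm_num]
            rw [one_le_div (by positivity)]; linarith
        _ ≤ b^m * (1/(m+1)) * n := by gcongr
  obtain ⟨y, hy, hye⟩ := hiv hmem
  simp only at hye
  have hy1 : y < 1 := lt_of_le_of_lt hy.2 (by
    have : 0 < 1 - b := by rw [hb1]; positivity
    linarith)
  have hy0 : 0 < y := by
    rcases hy.1.lt_or_eq with h | h
    · exact h
    · rw [← h] at hye; simp [zero_pow (show m ≠ 0 by omega)] at hye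
  refine ⟨y, hy0, hy1, hye, ?_⟩
  rw [inv_le_comm₀ (by linarith) (by positivity), ← one_div, ← hb1]
  linarith [hy.2]

noncomputable def wv (n m : ℕ) : ℝ := Real.exp (-(Real.log n / m))

lemma wv_pos (n m : ℕ) : 0 < wv n m := Real.exp_pos _

lemma wv_lt_one (n m : ℕ) (hm : 1 ≤ m) (hn : 2 ≤ n) : wv n m < 1 := by
  unfold wv
  rw [Real.exp_lt_one_iff]
  have : 0 < Real.log n := Real.log_pos (by exact_mod_cast hn)
  have : 0 < Real.log n / m := by positivity
  linarith

lemma wv_pow (n m : ℕ) (hm : 1 ≤ m) (hn : 1 ≤ n) : (wv n m)^m = 1/n := by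
  unfold wv
  have : (m:ℝ) ≠ 0 := by positivity
  rw [← Real.exp_nat_mul, show (m:ℝ) * -(Real.log n / m) = - Real.log n by field_simp, Real.exp_neg,
    Real.exp_log (by exact_mod_cast hn), one_div]

lemma one_sub_wv (n m : ℕ) : 1 - wv n m ≤ Real.log n / m := by
  unfold wv
  linarith [Real.add_one_le_exp (-(Real.log n / m))]

lemma y_props (m n : ℕ) (hm : 1 ≤ m) (hn1 : 1 ≤ n) (y : ℝ) (hy0 : 0 < y) (hy1 : y < 1)
    (hn : y^m*(1-y)*n = 1) (hv : (1-y)⁻¹ ≤ m+1) :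
    wv n m ≤ y ∧ y ≤ 2 * wv n m ∧ y/(1-y) * Real.log (n/(m+1)) ≤ m := by
  have hn0 : (0:ℝ) < n := by exact_mod_cast hn1
  have hm0 : (0:ℝ) < m := by exact_mod_cast hm
  have h1y : 0 < 1 - y := by linarith
  have hw := wv_pow n m hm hn1
  have hw0 := wv_pos n m
  have hmne : m ≠ 0 := by omega
  have hym : y^m = (1-y)⁻¹/n := by field_simp; exact hn
  have hv1 : 1 ≤ (1-y)⁻¹ := (one_le_inv₀ h1y).mpr (by linarith)
  refine ⟨?_, ?_, ?_⟩
  · rw [← pow_le_pow_iff_left₀ hw0.le hy0.le hmne, hw, hym]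
    gcongr
  · rw [← pow_le_pow_iff_left₀ hy0.le (by positivity) hmne, mul_pow, hw, hym, div_eq_mul_one_div]
    gcongr
    refine hv.trans ?_
    have : m + 1 ≤ 2^m := Nat.lt_two_pow_self
    exact_mod_cast this
  · have h1 : (n:ℝ)/(m+1) ≤ (y⁻¹)^m := by
      rw [inv_pow, hym, inv_div]
      gcongr
    have h2 : Real.log (n/(m+1)) ≤ m * (y⁻¹ - 1) := by
      calc Real.log (n/(m+1)) ≤ Real.log ((y⁻¹)^m) := Real.log_le_log (by positivity) h1
        _ = m * Real.log y⁻¹ := by rw [Real.log_pow]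
        _ ≤ m * (y⁻¹ - 1) := by
          gcongr
          exact Real.log_le_sub_one_of_pos (by positivity)
    calc y/(1-y) * Real.log (n/(m+1)) ≤ y/(1-y) * (m * (y⁻¹ - 1)) := by gcongr
      _ = m := by field_simp

noncomputable def Aerr (n m : ℕ) : ℝ :=
  Real.log (pc m n) + 1/2 * Real.log (2*π*n*m) + (n:ℝ)/m * Real.log n - (n:ℝ)/m -
    ∑ i ∈ Finset.Icc 1 m, dcoef m i * (n:ℝ)^(1-(i:ℝ)/(m:ℝ))

lemma log_abs_le (p e : ℝ) (h : |p - 1| ≤ e) (he : e ≤ 1/2) : |Real.log p| ≤ 2 * e := by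
  have h' := abs_le.mp h
  have hp : 1/2 ≤ p := by linarith
  have he0 : 0 ≤ e := (abs_nonneg _).trans h
  rw [abs_le]
  constructor
  · have h1 := Real.one_sub_inv_le_log_of_pos (show 0 < p by linarith)
    have : p⁻¹ - 1 ≤ 2 * e := by
      have e1 : p⁻¹ - 1 = (1-p) * p⁻¹ := by field_simp
      rw [e1]
      have : p⁻¹ ≤ 2 := by rw [inv_le_comm₀ (by linarith) (by norm_num)]; linarith
      have : 0 < p⁻¹ := by positivity
      nlinarith
    linarith
  · have := Real.log_le_sub_one_of_pos (show 0 < p by linarith)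
    linarith

lemma large_facts (K : ℝ) : ∃ L0 : ℝ, ∀ L : ℝ, L0 ≤ L → K ≤ L ∧ 3/2*(L+4)*(L^2+4) ≤ Real.exp (L/3) := by
  have h : Filter.Tendsto (fun L : ℝ => Real.exp ((1/3) * L) / L^4) Filter.atTop Filter.atTop := by
    have := tendsto_exp_mul_div_rpow_atTop 4 (1/3) (by norm_num)
    refine this.congr (fun L => ?_)
    norm_cast
  have h1 := (h.eventually_ge_atTop 1).and ((Filter.eventually_ge_atTop K).and (Filter.eventually_ge_atTop 16))
  obtain ⟨L0, hL0⟩ := Filter.eventually_atTop.mp h1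
  refine ⟨L0, fun L hL => ?_⟩
  obtain ⟨a, b, c⟩ := hL0 L hL
  refine ⟨b, ?_⟩
  have hL4 : (0:ℝ) < L^4 := by positivity
  rw [one_le_div hL4] at a
  rw [show L/3 = 1/3*L by ring]
  refine le_trans ?_ a
  have h1 : L + 4 ≤ 2*L := by linarith
  have h2 : L^2+4 ≤ 2*L^2 := by nlinarith
  calc 3/2*(L+4)*(L^2+4) ≤ 3/2*(2*L)*(2*L^2) := by gcongr
    _ = 6 * L^3 := by ring
    _ ≤ L * L^3 := by gcongr; linarith
    _ = L^4 := by ring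

end Part11


section Part12

lemma wfacts (n m : ℕ) (hm : 2 ≤ m) (hn : 1 ≤ n) (L a : ℝ) (hL : L = Real.log n) (ha : a = Real.exp (L/3))
    (hL1 : 1 ≤ L) (haL : L ≤ a) (hma : (m:ℝ) ≤ a^2) :
    m * a / 3 ≤ n * wv n m ∧ (m:ℝ)/n ≤ (3 * wv n m)^2 := by
  have hn0 : (0:ℝ) < n := by exact_mod_cast hn
  have hm0 : (0:ℝ) < m := by positivity
  have ha0 : 0 < a := by rw [ha]; exact Real.exp_pos _
  have ha3 : a^3 = n := by
    rw [ha, ← Real.exp_nat_mul, show ((3:ℕ):ℝ) * (L/3) = L by push_cast; ring, hL, Real.exp_log hn0]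
  have ha1 : 1 ≤ a := by linarith
  have hw0 := wv_pos n m
  rcases hm.eq_or_lt with h2 | h3
  · subst h2
    have hw := wv_pow n 2 (by norm_num) hn
    push_cast
    constructor
    · have : (n * wv n 2)^2 = a^3 := by rw [mul_pow, hw, ha3]; field_simp
      have h : (2*a/3)^2 ≤ (n * wv n 2)^2 := by rw [this]; nlinarith [sq_nonneg a]
      exact (pow_le_pow_iff_left₀ (by positivity) (by positivity) (by norm_num)).mp h
    · rw [mul_pow, hw, div_eq_mul_one_div]
      gcongr; norm_num
  · by_cases hcase : (m:ℝ) ≤ a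
    · have hw : 1/a ≤ wv n m := by
        unfold wv
        rw [ha, one_div, ← Real.exp_neg, ← hL]
        apply Real.exp_le_exp.mpr
        have : (3:ℝ) ≤ m := by exact_mod_cast h3
        have : L/m ≤ L/3 := by gcongr
        linarith
      constructor
      · calc (m:ℝ) * a / 3 ≤ a * a := by nlinarith
          _ = n * (1/a) := by rw [← ha3]; field_simp
          _ ≤ _ := by gcongr
      · calc (m:ℝ)/n ≤ a / a^3 := by rw [ha3]; gcongr
          _ = (1/a)^2 := by field_simp
          _ ≤ (wv n m)^2 := by gcongr
          _ ≤ _ := by gcongr; linarith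
    · push Not at hcase
      have hw : 1/3 ≤ wv n m := by
        unfold wv
        have h1 : L/m ≤ 1 := by rw [div_le_one hm0]; linarith
        have h2 : Real.exp (-1) ≤ Real.exp (-(Real.log n / m)) := by
          apply Real.exp_le_exp.mpr; rw [← hL]; linarith
        have h3 : 1/3 ≤ Real.exp (-1) := by
          rw [Real.exp_neg, one_div]
          exact inv_anti₀ (Real.exp_pos _) (by linarith [Real.exp_one_lt_d9])
        linarith
      constructor
      · calc (m:ℝ) * a / 3 ≤ a^2 * a / 3 := by gcongr
          _ = n * (1/3) := by rw [← ha3]; ring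
          _ ≤ _ := by gcongr
      · calc (m:ℝ)/n ≤ a^2 / a^3 := by rw [ha3]; gcongr
          _ = 1/a := by field_simp
          _ ≤ 1 := by rw [div_le_one ha0]; exact ha1
          _ ≤ _ := by nlinarith

set_option maxHeartbeats 2000000 in
lemma mainRegion : ∃ C L0 : ℝ, 0 < C ∧ ∀ n m : ℕ, 2 ≤ m → 1 ≤ n → L0 ≤ Real.log n →
    (m:ℝ) ≤ (Real.exp (Real.log n / 3))^2 → |Aerr n m| ≤ C * (wv n m / (1 - wv n m)) := by
  obtain ⟨CP, hCP, hP⟩ := claimP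
  obtain ⟨L0, hL0⟩ := large_facts (max 100 (14*CP))
  refine ⟨7*24 + 2*(CP*27), L0, by positivity, ?_⟩
  intro n m hm hn hLn hma
  set L := Real.log n with hL
  set a := Real.exp (L/3) with ha
  obtain ⟨hLK, haL⟩ := hL0 L hLn
  have hL100 : 100 ≤ L := (le_max_left _ _).trans hLK
  have hLC : 14*CP ≤ L := (le_max_right _ _).trans hLK
  have hn0 : (0:ℝ) < n := by exact_mod_cast hn
  have hm0 : (0:ℝ) < m := by positivity
  have hm2 : (2:ℝ) ≤ m := by exact_mod_cast hm
  have ha0 : 0 < a := Real.exp_pos _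
  have haL2 : 6*L^2 ≤ a := by nlinarith
  have haL1 : L ≤ a := by nlinarith
  have ha8 : 100 ≤ a := by linarith
  have ha3 : a^3 = n := by
    rw [ha, ← Real.exp_nat_mul, show ((3:ℕ):ℝ) * (L/3) = L by push_cast; ring, hL, Real.exp_log hn0]
  obtain ⟨hw1, hw2⟩ := wfacts n m hm hn L a hL ha (by linarith) haL1 hma
  have h6mn : 6*m ≤ n := by
    have : 6*(m:ℝ) ≤ n := by rw [← ha3]; nlinarith [sq_nonneg a]
    exact_mod_cast this
  have hmn : m ≤ n := by omega
  have hn2 : 2 ≤ n := by omega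
  obtain ⟨y, hy0, hy1, hye, hyv⟩ := exist_y m n (by omega) h6mn
  obtain ⟨hyw, hy2w, hVlog⟩ := y_props m n (by omega) hn y hy0 hy1 hye hyv
  have h1y : 0 < 1 - y := by linarith
  set w := wv n m with hw
  have hw0 : 0 < w := wv_pos n m
  have hwl : w < 1 := wv_lt_one n m (by omega) hn2
  have h1w : 0 < 1 - w := by linarith
  have h1wL := one_sub_wv n m
  rw [← hw, ← hL] at h1wL
  set V := y/(1-y) with hV
  have hV0 : 0 < V := by positivity
  -- log estimate
  have hlog : L/6 ≤ Real.log (n/(m+1)) := by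
    have h1 : a/2 ≤ n/(m+1) := by
      rw [le_div_iff₀ (by positivity), ← ha3]
      have : (m:ℝ)+1 ≤ 2*a^2 := by nlinarith
      calc a/2*((m:ℝ)+1) ≤ a/2*(2*a^2) := by gcongr
        _ = a^3 := by ring
    have h2 : Real.log (a/2) ≤ Real.log (n/(m+1)) := Real.log_le_log (by positivity) h1
    rw [Real.log_div ha0.ne' (by norm_num), ha, Real.log_exp] at h2
    linarith [Real.log_two_lt_d9]
  have hVL : V * (L/6) ≤ m := le_trans (by gcongr) hVlog
  have hVm : V ≤ m/4 := by
    have : V*(100/6) ≤ V*(L/6) := by gcongr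
    linarith
  have hvn : (1-y)⁻¹ ≤ n/4 := by
    refine hyv.trans ?_
    have h100 : 100 * a^2 ≤ a*a^2 := by gcongr
    have : 1 ≤ a^2 := one_le_pow₀ (by linarith)
    rw [← ha3]; linarith
  have hVw : V ≤ 24 * (w/(1-w)) := by
    by_cases hc : w ≤ 1/4
    · have hy2 : y ≤ 1/2 := by linarith
      calc V ≤ y/(1/2) := by rw [hV]; gcongr; linarith
        _ ≤ 4*w := by linarith
        _ ≤ 24*w := by linarith
        _ ≤ _ := by
          gcongr
          exact le_div_self hw0.le h1w (by linarith)
    · push Not at hc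
      have hL0' : 0 < L := by linarith
      have : V ≤ 6*m/L := by rw [le_div_iff₀ hL0']; linarith
      refine this.trans ?_
      have h3 : m*(1-w) ≤ L := by rw [le_div_iff₀ hm0] at h1wL; linarith
      rw [mul_div_assoc', div_le_div_iff₀ hL0' h1w]
      have h4 : (1/4)*L ≤ w*L := by gcongr
      linarith
  have hwv : w ≤ w/(1-w) := le_div_self hw0.le h1w (by linarith)
  have hq : √((m:ℝ)/n) ≤ 3*w := Real.sqrt_le_iff.mpr ⟨by positivity, hw2⟩
  have hqL : √((m:ℝ)/n) ≤ 1/L := by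
    apply Real.sqrt_le_iff.mpr ⟨by positivity, ?_⟩
    rw [div_pow, one_pow, div_le_div_iff₀ hn0 (by positivity), ← ha3]
    calc (m:ℝ) * L^2 ≤ a^2 * a := by gcongr; nlinarith
      _ = 1*a^3 := by ring
  -- minor arcs
  have hminor : ∀ θ : ℝ, π/m < |θ| → |θ| ≤ π → (gfun m n y⁻¹ θ).re ≤ - L := by
    intro θ hθ1 hθ2
    have h := minor_arc m n (by omega) y hy0 hy1 hye θ hθ1 hθ2 _ rfl
    refine h.trans ?_
    rw [neg_le_neg_iff]
    have hk : 4*w/(L^2+4) ≤ (4*y/(m^2*(1-y)^2))/(1+4*y/(m^2*(1-y)^2)) := by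
      have e : (4*y/(m^2*(1-y)^2))/(1+4*y/(m^2*(1-y)^2)) = 4*y/(m^2*(1-y)^2+4*y) := by
        field_simp
      rw [e]
      have h3 : m*(1-y) ≤ L := by
        rw [le_div_iff₀ hm0] at h1wL
        have : m*(1-y) ≤ m*(1-w) := by gcongr
        linarith
      have h4 : (m*(1-y))^2 ≤ L^2 := by
        have : 0 ≤ m*(1-y) := by positivity
        gcongr
      rw [mul_pow] at h4
      rw [div_le_div_iff₀ (by positivity) (by positivity)]
      have e1 : w * (m^2*(1-y)^2) ≤ y * L^2 := by gcongr
      have e2 : w*y ≤ 1*y := by gcongr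
      linarith
    have h5 : 2*(1-y)⁻¹/m ≤ 4 := by
      rw [div_le_iff₀ hm0]; linarith
    have h6 : L + 4 ≤ n/(2*m) * (4*w/(L^2+4)) := by
      have : n/(2*m) * (4*w/(L^2+4)) = (n*w) * 2/(m*(L^2+4)) := by field_simp; norm_num
      rw [this, le_div_iff₀ (by positivity)]
      calc (L+4)*(m*(L^2+4)) = (m/3)*2 * (3/2*(L+4)*(L^2+4)) := by ring
        _ ≤ (m/3)*2*a := by gcongr
        _ = (m*a/3)*2 := by ring
        _ ≤ _ := by gcongr
    have h7 : n/(2*m) * (4*w/(L^2+4)) ≤ n/(2*m) * ((4*y/(m^2*(1-y)^2))/(1+4*y/(m^2*(1-y)^2))) := by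
      gcongr
    linarith
  have hPP := hP m n (by omega) hmn y hy0 hy1 hye hvn hVm hminor
  have eV : y/(m*(1-y)) = V/m := by rw [hV]; field_simp
  rw [eV] at hPP
  have hVmL : V/m ≤ 6/L := by
    rw [div_le_div_iff₀ hm0 (by linarith)]; linarith
  have hsmall : CP * (V/m + √((m:ℝ)/n)) ≤ 1/2 := by
    calc CP * (V/m + √((m:ℝ)/n)) ≤ CP * (6/L + 1/L) := by gcongr
      _ = 7*CP/L := by ring
      _ ≤ 1/2 := by rw [div_le_div_iff₀ (by linarith) (by norm_num)]; linarith
  have hlogP := log_abs_le _ _ hPP hsmall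
  have hbig : CP * (V/m + √((m:ℝ)/n)) ≤ CP*27 * (w/(1-w)) := by
    have : V/m ≤ V := div_le_self hV0.le (by linarith)
    have h3 : V/m + √((m:ℝ)/n) ≤ 27 * (w/(1-w)) := by linarith
    calc _ ≤ CP * (27 * (w/(1-w))) := by gcongr
      _ = _ := by ring
  have hT := claimT m (by omega) (n:ℝ) y hy0 hy1 hyv hye
  rw [← hV] at hT
  have hpc := pc_pos m n (by omega : 1 ≤ m)
  have hexpand : Real.log (pc m n * (y⁻¹)^n * Real.exp (-(Fx m y⁻¹)) * √(2*π*n*m)) =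
     Real.log (pc m n) - n * Real.log y - Fx m y⁻¹ + 1/2 * Real.log (2*π*n*m) := by
    have hs0 : 0 < √(2*π*n*m) := Real.sqrt_pos.mpr (by positivity)
    rw [Real.log_mul (by positivity) hs0.ne', Real.log_mul (by positivity) (Real.exp_pos _).ne',
      Real.log_mul hpc.ne' (by positivity), Real.log_exp, Real.log_pow, Real.log_inv, Real.log_sqrt (by positivity)]
    ring
  have hA : Aerr n m = Real.log (pc m n * (y⁻¹)^n * Real.exp (-(Fx m y⁻¹)) * √(2*π*n*m)) +
     ((∑ j ∈ Finset.range m, (y⁻¹)^(j+1)/((j+1:ℕ):ℝ)) + n*Real.log y - (-(n/m)*Real.log n + n/m + ∑ i ∈ Finset.Icc 1 m, dcoef m i * (n:ℝ)^(1-(i:ℝ)/(m:ℝ)))) := by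
    rw [hexpand]
    unfold Aerr Fx
    ring
  rw [hA]
  refine (abs_add_le _ _).trans ?_
  calc _ ≤ 2 * (CP*27 * (w/(1-w))) + 7 * (24 * (w/(1-w))) := by
        refine add_le_add (hlogP.trans (by linarith)) (hT.trans (by linarith))
    _ = _ := by ring

end Part12


section Part13

lemma pc_one (n : ℕ) : pc 1 n = 1/(n.factorial:ℝ) := by
  induction n with
  | zero => rw [pc_small 1 0 le_rfl (by omega)]; simp
  | succ k ih =>
    have h := pc_rec 1 (k+1)
    simp only [Finset.sum_range_one] at h
    rw [if_pos (by omega), show k+1-(0+1) = k by omega, ih] at h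
    rw [Nat.factorial_succ]
    push_cast at h ⊢
    have : (k:ℝ)+1 ≠ 0 := by positivity
    field_simp at h ⊢
    linarith

lemma stirling_upper (n : ℕ) (hn : 1 ≤ n) :
    Real.log (Stirling.stirlingSeq n) ≤ 1/2*Real.log π + 1/(12*n) := by
  have hmono : Monotone (fun k : ℕ => Real.log (Stirling.stirlingSeq (k+1)) - 1/(12*((k+1:ℕ):ℝ))) := by
    apply monotone_nat_of_le_succ
    intro k
    have h := Stirling.log_stirlingSeq_sdiff_le (k+1)
    have e : 1/(12*((k+1:ℕ):ℝ)*(((k+1:ℕ):ℝ)+1)) = 1/(12*((k+1:ℕ):ℝ)) - 1/(12*((k+1+1:ℕ):ℝ)) := by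
      push_cast; field_simp; ring
    rw [e] at h
    linarith
  have hlim : Filter.Tendsto (fun k : ℕ => Real.log (Stirling.stirlingSeq (k+1)) - 1/(12*((k+1:ℕ):ℝ)))
      Filter.atTop (nhds (Real.log (√π) - 0)) := by
    apply Filter.Tendsto.sub
    · apply Filter.Tendsto.log _ (by positivity)
      exact Stirling.tendsto_stirlingSeq_sqrt_pi.comp (Filter.tendsto_add_atTop_nat 1)
    · have h := (tendsto_one_div_add_atTop_nhds_zero_nat (𝕜 := ℝ)).const_mul (1/12)
      rw [mul_zero] at h
      refine h.congr (fun k => ?_)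
      push_cast; field_simp
  have h := hmono.ge_of_tendsto hlim (n-1)
  simp only [show n-1+1 = n by omega] at h
  rw [Real.log_sqrt (by positivity)] at h
  linarith

lemma case_one (n : ℕ) (hn : 2 ≤ n) : |Aerr n 1| ≤ 1 * (wv n 1 / (1 - wv n 1)) := by
  have hn0 : (0:ℝ) < n := by positivity
  have hw : wv n 1 = 1/n := by
    have := wv_pow n 1 le_rfl (by omega)
    rwa [pow_one] at this
  have hA : Aerr n 1 = 1/2*Real.log π - Real.log (Stirling.stirlingSeq n) := by
    unfold Aerr
    rw [pc_one, Stirling.log_stirlingSeq_formula, Real.log_div hn0.ne' (Real.exp_pos _).ne', Real.log_exp]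
    have hd : dcoef 1 1 = 0 := by unfold dcoef; simp
    simp [hd]
    rw [Real.log_mul (by positivity) hn0.ne', Real.log_mul (by norm_num) (by positivity), Real.log_mul (by norm_num) hn0.ne']
    ring
  have h1 := stirling_upper n (by omega)
  have h2 : 1/2*Real.log π ≤ Real.log (Stirling.stirlingSeq n) := by
    have := Real.log_le_log (by positivity) (Stirling.sqrt_pi_le_stirlingSeq (n := n) (by omega))
    rw [Real.log_sqrt (by positivity)] at this
    linarith
  have hwl : wv n 1 < 1 := wv_lt_one n 1 le_rfl hn
  have h3 : wv n 1 ≤ wv n 1/(1-wv n 1) := le_div_self (wv_pos n 1).le (by linarith) (by linarith [wv_pos n 1])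
  have h4 : 1/(12*(n:ℝ)) ≤ 1/n := by gcongr; linarith
  rw [hA, abs_le]
  constructor <;> linarith

end Part13


section Part14

lemma harm_le (k i : ℕ) (h : k ≤ i) (hi : 1 ≤ i) : ∑ t ∈ Finset.range k, 1/((t:ℝ)+1) ≤ 1 + Real.log i := by
  have h1 := harmonic_le_one_add_log k
  have e : ((harmonic k : ℚ):ℝ) = ∑ t ∈ Finset.range k, 1/((t:ℝ)+1) := by
    unfold harmonic; push_cast; simp
  rw [e] at h1
  refine h1.trans ?_
  rcases Nat.eq_zero_or_pos k with h0 | h0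
  · subst h0; simp
    exact Real.log_nonneg (by exact_mod_cast hi)
  · have : Real.log k ≤ Real.log i := Real.log_le_log (by exact_mod_cast h0) (by exact_mod_cast h)
    linarith

lemma gco_bound (a : ℝ) (ha : 0 ≤ a) (i n : ℕ) (hi : 1 ≤ i) (hin : i ≤ n) (h : (i:ℝ)*a ≤ 1) :
    gco a i * (n:ℝ)^(1-(i:ℝ)*a) ≤ 3 * (n/i) := by
  have hi0 : (0:ℝ) < i := by exact_mod_cast hi
  have hn0 : (0:ℝ) < n := by exact_mod_cast (by omega : 0 < n)
  set α := (i:ℝ)*a with hα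
  have hα0 : 0 ≤ α := by positivity
  have hf : (i.factorial:ℝ) = i * ∏ t ∈ Finset.range (i-1), ((t:ℝ)+1) := by
    obtain ⟨j, rfl⟩ : ∃ k, i = k + 1 := ⟨i-1, by omega⟩
    rw [Nat.factorial_succ, Nat.add_sub_cancel, ← Finset.prod_range_add_one_eq_factorial]
    push_cast; ring
  have hP0 : 0 < ∏ t ∈ Finset.range (i-1), ((t:ℝ)+1) := Finset.prod_pos (fun t _ => by positivity)
  have hg : gco a i ≤ 1/i * Real.exp (α * (1 + Real.log i)) := by
    unfold gco
    rw [hf, ← hα]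
    have : ∏ t ∈ Finset.range (i-1), (α + ((t:ℝ)+1)) ≤ (∏ t ∈ Finset.range (i-1), ((t:ℝ)+1)) * Real.exp (α * (1 + Real.log i)) := by
      calc ∏ t ∈ Finset.range (i-1), (α + ((t:ℝ)+1)) ≤ ∏ t ∈ Finset.range (i-1), (((t:ℝ)+1) * Real.exp (α * (1/((t:ℝ)+1)))) := by
            apply Finset.prod_le_prod
            · intro t _; positivity
            · intro t _
              have := Real.add_one_le_exp (α * (1/((t:ℝ)+1)))
              calc α + ((t:ℝ)+1) = ((t:ℝ)+1) * (α * (1/((t:ℝ)+1)) + 1) := by field_simp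
                _ ≤ _ := by gcongr
        _ = (∏ t ∈ Finset.range (i-1), ((t:ℝ)+1)) * Real.exp (α * ∑ t ∈ Finset.range (i-1), 1/((t:ℝ)+1)) := by
            rw [Finset.prod_mul_distrib, ← Real.exp_sum, Finset.mul_sum]
        _ ≤ _ := by
            gcongr
            exact harm_le (i-1) i (by omega) hi
    rw [div_le_iff₀ (by positivity)]
    refine this.trans (le_of_eq ?_)
    field_simp
  have hlog : Real.log i ≤ Real.log n := Real.log_le_log hi0 (by exact_mod_cast hin)
  have he : Real.exp (α * (1 + Real.log i)) * (n:ℝ)^(1-α) ≤ 3 * n := by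
    rw [Real.rpow_def_of_pos hn0, ← Real.exp_add]
    calc _ ≤ Real.exp (1 + Real.log n) := by
          apply Real.exp_le_exp.mpr
          have : α * Real.log i ≤ α * Real.log n := by gcongr
          nlinarith
      _ = Real.exp 1 * n := by rw [Real.exp_add, Real.exp_log hn0]
      _ ≤ 3 * n := by gcongr; linarith [Real.exp_one_lt_d9]
  calc gco a i * (n:ℝ)^(1-α) ≤ (1/i * Real.exp (α * (1 + Real.log i))) * (n:ℝ)^(1-α) := by gcongr
    _ = 1/i * (Real.exp (α * (1 + Real.log i)) * (n:ℝ)^(1-α)) := by ring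
    _ ≤ 1/i * (3*n) := by gcongr
    _ = _ := by ring

lemma dsum_bound (n m : ℕ) (hm : 1 ≤ m) (hmn : m ≤ n) :
    |∑ i ∈ Finset.Icc 1 m, dcoef m i * (n:ℝ)^(1-(i:ℝ)/(m:ℝ))| ≤ 6*(n/m)*(1+Real.log n) + 1 := by
  have hm0 : (0:ℝ) < m := by exact_mod_cast hm
  have hn0 : (0:ℝ) < n := by exact_mod_cast (by omega : 0 < n)
  obtain ⟨k, rfl⟩ : ∃ k, m = k + 1 := ⟨m-1, by omega⟩
  have hsplit : ∑ i ∈ Finset.Icc 1 (k+1), dcoef (k+1) i * (n:ℝ)^(1-(i:ℝ)/((k+1:ℕ):ℝ)) =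
    ∑ t ∈ Finset.range k, dcoef (k+1) (t+1) * (n:ℝ)^(1-((t+1:ℕ):ℝ)/((k+1:ℕ):ℝ)) + dcoef (k+1) (k+1) := by
    rw [← Finset.Ico_succ_right_eq_Icc, Finset.sum_Ico_eq_sum_range]
    have : Order.succ (k+1) - 1 = k + 1 := by simp
    rw [this, Finset.sum_range_succ]
    congr 1
    · apply Finset.sum_congr rfl; intro t _; rw [add_comm 1 t]
    · rw [add_comm 1 k, div_self hm0.ne', sub_self, Real.rpow_zero, mul_one]
  rw [hsplit]
  refine (abs_add_le _ _).trans (add_le_add ?_ ?_)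
  · have hterm : ∀ t ∈ Finset.range k, |dcoef (k+1) (t+1) * (n:ℝ)^(1-((t+1:ℕ):ℝ)/((k+1:ℕ):ℝ))| ≤
        3*(n/((k+1:ℕ):ℝ)) * (1/((t:ℝ)+1) + 1/(((k-1-t:ℕ):ℝ)+1)) := by
      intro t ht
      have ht' := Finset.mem_range.mp ht
      have hle : ((t+1:ℕ):ℝ) ≤ ((k+1:ℕ):ℝ) := by exact_mod_cast (by omega : t+1 ≤ k+1)
      rw [dcoef_eq (k+1) (t+1) (by omega) (by omega)]
      have hb := gco_bound (1/((k+1:ℕ):ℝ)) (by positivity) (t+1) n (by omega) (by omega) (by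
        rw [mul_one_div, div_le_one hm0]; exact hle)
      rw [mul_one_div] at hb
      have hg0 := gco_nonneg (1/((k+1:ℕ):ℝ)) (by positivity) (t+1)
      have hsub : ((k+1:ℕ):ℝ) - ((t+1:ℕ):ℝ) = ((k-1-t:ℕ):ℝ)+1 := by
        have : k + 1 = (k-1-t) + 1 + (t+1) := by omega
        rw [sub_eq_iff_eq_add]
        exact_mod_cast this
      rw [hsub]
      have hs0 : (0:ℝ) < ((k-1-t:ℕ):ℝ)+1 := by positivity
      have hr0 : 0 ≤ (n:ℝ)^(1-((t+1:ℕ):ℝ)/((k+1:ℕ):ℝ)) := Real.rpow_nonneg hn0.le _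
      rw [abs_of_nonneg (by positivity)]
      calc _ = (gco (1/((k+1:ℕ):ℝ)) (t+1) * (n:ℝ)^(1-((t+1:ℕ):ℝ)/((k+1:ℕ):ℝ))) / (((k-1-t:ℕ):ℝ)+1) := by ring
        _ ≤ (3*(n/((t+1:ℕ):ℝ))) / (((k-1-t:ℕ):ℝ)+1) := by gcongr
        _ = _ := by
          have e : ((k+1:ℕ):ℝ) = (((k-1-t:ℕ):ℝ)+1) + ((t:ℝ)+1) := by
            rw [← hsub]; push_cast; ring
          have ht0 : (0:ℝ) < (t:ℝ)+1 := by positivity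
          rw [e, Nat.cast_succ]
          field_simp
    refine (Finset.abs_sum_le_sum_abs _ _).trans ((Finset.sum_le_sum hterm).trans ?_)
    rw [← Finset.mul_sum, Finset.sum_add_distrib]
    rw [Finset.sum_range_reflect (fun t : ℕ => 1/((t:ℝ)+1)) k]
    have := harm_le k n (by omega) (by omega)
    calc _ ≤ 3*(n/((k+1:ℕ):ℝ)) * ((1+Real.log n) + (1+Real.log n)) := by gcongr
      _ = _ := by ring
  · unfold dcoef
    rw [if_pos rfl, abs_mul, abs_neg, abs_of_pos (by positivity), abs_of_nonneg (Finset.sum_nonneg (fun j _ => by positivity))]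
    have : ∑ j ∈ Finset.Icc 2 (k+1), (1:ℝ)/(j:ℝ) ≤ ((k+1:ℕ):ℝ) := by
      calc ∑ j ∈ Finset.Icc 2 (k+1), (1:ℝ)/(j:ℝ) ≤ ∑ j ∈ Finset.Icc 2 (k+1), (1:ℝ) := by
            apply Finset.sum_le_sum
            intro j hj
            have := (Finset.mem_Icc.mp hj).1
            rw [div_le_one (by positivity)]
            exact_mod_cast (by omega : 1 ≤ j)
        _ ≤ _ := by
            simp only [Finset.sum_const, Nat.card_Icc, nsmul_eq_mul, mul_one]
            exact_mod_cast (by omega : k+1+1-2 ≤ k+1)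
    calc 1/((k+1:ℕ):ℝ) * ∑ j ∈ Finset.Icc 2 (k+1), (1:ℝ)/(j:ℝ) ≤ 1/((k+1:ℕ):ℝ) * ((k+1:ℕ):ℝ) := by gcongr
      _ = 1 := by field_simp

lemma trivial_bound (n m : ℕ) (hm : 1 ≤ m) (hmn : m ≤ n) (hn : 2 ≤ n) :
    |Aerr n m| ≤ 50 * (n/m * Real.log n) := by
  have hm0 : (0:ℝ) < m := by exact_mod_cast hm
  have hn0 : (0:ℝ) < n := by exact_mod_cast (by omega : 0 < n)
  have hmn' : (m:ℝ) ≤ n := by exact_mod_cast hmn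
  set u := (n:ℝ)/m with hu
  have hu1 : 1 ≤ u := by rw [hu, one_le_div hm0]; exact hmn'
  set L := Real.log n with hL
  have hL2 : 1/2 ≤ L := by
    have : Real.log 2 ≤ L := Real.log_le_log (by norm_num) (by exact_mod_cast hn)
    linarith [Real.log_two_gt_d9]
  have hLu : L ≤ u * L := by nlinarith
  have huL : u ≤ 2*(u*L) := by nlinarith
  have h1 := log_pc_lower m n n hm (by omega) le_rfl
  rw [← hu, ← hL] at h1
  have h2 : Real.log (pc m n) ≤ 0 := Real.log_nonpos (pc_nonneg m n hm) (pc_le_one m n hm)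
  have h3 : Real.log (2*π*n*m) ≤ 2 + 2*L := by
    have : Real.log (2*π*n*m) ≤ Real.log (Real.exp 2 * n * n) := by
      apply Real.log_le_log (by positivity)
      gcongr
      have : Real.exp 2 = Real.exp 1 * Real.exp 1 := by rw [← Real.exp_add]; norm_num
      rw [this]
      nlinarith [Real.exp_one_gt_d9, Real.pi_lt_d2]
    have e : Real.log (Real.exp 2 * n * n) = 2 + L + L := by
      rw [Real.log_mul (by positivity) hn0.ne', Real.log_mul (Real.exp_pos _).ne' hn0.ne', Real.log_exp]
    rw [e] at this
    linarith
  have h4 : 0 ≤ Real.log (2*π*n*m) := by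
    apply Real.log_nonneg
    have a1 : (1:ℝ) ≤ n := by exact_mod_cast (by omega : 1 ≤ n)
    have a2 : (1:ℝ) ≤ m := by exact_mod_cast hm
    have a3 : (1:ℝ) ≤ 2*π := by linarith [Real.pi_gt_three]
    calc (1:ℝ) = 1*1*1 := by ring
      _ ≤ 2*π*n*m := by gcongr
  have h5 := abs_le.mp (dsum_bound n m hm hmn)
  rw [← hu, ← hL] at h5
  unfold Aerr
  rw [← hu, ← hL, abs_le]
  have huL0 : 0 ≤ u*L := by positivity
  constructor <;> nlinarith

end Part14

section Part15

lemma combine : ∃ C : ℝ, 0 < C ∧ ∀ n m : ℕ, 1 ≤ m → m < n →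
    |Aerr n m| ≤ C * (wv n m / (1 - wv n m)) := by
  obtain ⟨C1, L1, hC1, hmain⟩ := mainRegion
  obtain ⟨L2, hL2⟩ := large_facts 100
  set L0 := max (max L1 L2) 1 with hL0
  have hL01 : 1 ≤ L0 := le_max_right _ _
  refine ⟨1 + C1 + 150 + 50 * (Real.exp L0 * L0 * Real.exp L0), by positivity, ?_⟩
  intro n m hm hmn
  have hn : 2 ≤ n := by omega
  have hm0 : (0:ℝ) < m := by exact_mod_cast hm
  have hm1 : (1:ℝ) ≤ m := by exact_mod_cast hm
  have hn0 : (0:ℝ) < n := by exact_mod_cast (by omega : 0 < n)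
  have hw := wv_pos n m
  have hw1 := wv_lt_one n m hm hn
  have hw1' : 0 < 1 - wv n m := by linarith
  set R := wv n m / (1 - wv n m) with hR
  have hR0 : 0 < R := by positivity
  have hK0 : 0 ≤ 50 * (Real.exp L0 * L0 * Real.exp L0) := by positivity
  have mono : ∀ c : ℝ, c ≤ 1 + C1 + 150 + 50 * (Real.exp L0 * L0 * Real.exp L0) → |Aerr n m| ≤ c * R →
      |Aerr n m| ≤ (1 + C1 + 150 + 50 * (Real.exp L0 * L0 * Real.exp L0)) * R := by
    intro c hc h
    exact h.trans (mul_le_mul_of_nonneg_right hc hR0.le)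
  have htriv := trivial_bound n m hm hmn.le hn
  set L := Real.log n with hL
  have hLpos : 0 < L := Real.log_pos (by exact_mod_cast (by omega : 1 < n))
  have hexpL : Real.exp L = n := Real.exp_log hn0
  rcases Nat.lt_or_ge m 2 with hm2 | hm2
  · have : m = 1 := by omega
    subst this
    exact mono 1 (by linarith) (case_one n hn)
  rcases le_or_gt L0 L with hLL | hLL
  · set a := Real.exp (L/3) with ha
    rcases le_or_gt (m:ℝ) (a^2) with hma | hma
    · exact mono C1 (by linarith) (hmain n m hm2 (by omega)
        (le_trans (le_trans (le_max_left _ _) (le_max_left _ _)) hLL) hma)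
    · apply mono 150 (by linarith)
      obtain ⟨hL100, hbig⟩ := hL2 L (le_trans (le_trans (le_max_right _ _) (le_max_left _ _)) hLL)
      have hna : (n:ℝ) = a^3 := by
        rw [← hexpL, ha, ← Real.exp_nat_mul]
        congr 1
        push_cast
        ring
      have ha0 : 0 < a := Real.exp_pos _
      have haL : L^2 ≤ a := by nlinarith [sq_nonneg L]
      have hLa : L ≤ a := by nlinarith
      have haa : a ≤ a^2 := by nlinarith
      have hLm : L ≤ m := by linarith
      have hLm' : L/m ≤ 1 := by rw [div_le_one hm0]; exact hLm
      have hw3 : 1/3 ≤ wv n m := by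
        have h1 : Real.exp (-1) ≤ wv n m := by
          unfold wv
          apply Real.exp_le_exp.mpr
          linarith
        have h2 : 1/3 ≤ Real.exp (-1) := by
          rw [Real.exp_neg, ← one_div]
          apply one_div_le_one_div_of_le (Real.exp_pos _)
          linarith [Real.exp_one_lt_d9]
        linarith
      have h1w := one_sub_wv n m
      have hRb : a^2 / L ≤ 3 * R := by
        have : (1/3) / (L/m) ≤ R := by
          rw [hR]
          gcongr
        have e : (1/3) / (L/m) = (1/3) * (m / L) := by field_simp
        rw [e] at this
        have h3 : a^2/L ≤ m/L := by gcongr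
        linarith
      have hub : (n:ℝ)/m * L ≤ a^2/L := by
        have h1 : (n:ℝ)/m ≤ a := by
          rw [div_le_iff₀ hm0, hna]
          nlinarith
        have h2 : a * L ≤ a^2/L := by
          rw [le_div_iff₀ hLpos]
          nlinarith
        have h3 : (n:ℝ)/m * L ≤ a * L := mul_le_mul_of_nonneg_right h1 hLpos.le
        linarith
      linarith
  · apply mono (50 * (Real.exp L0 * L0 * Real.exp L0)) (by linarith)
    have hwl : 1 ≤ Real.exp L0 * R := by
      have h1 : Real.exp (-L0) ≤ wv n m := by
        unfold wv
        apply Real.exp_le_exp.mpr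
        have : L / m ≤ L := div_le_self hLpos.le hm1
        linarith
      have h2 : wv n m ≤ R := by
        rw [hR, le_div_iff₀ hw1']
        nlinarith
      calc (1:ℝ) = Real.exp L0 * Real.exp (-L0) := by rw [← Real.exp_add]; simp
        _ ≤ Real.exp L0 * R := by gcongr; linarith
    have hu : (n:ℝ)/m * L ≤ Real.exp L0 * L0 := by
      have h1 : (n:ℝ)/m ≤ Real.exp L0 := by
        have : (n:ℝ)/m ≤ n := div_le_self hn0.le hm1
        have h2 : Real.exp L ≤ Real.exp L0 := Real.exp_le_exp.mpr hLL.le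
        linarith
      gcongr
    have h0 : 0 ≤ Real.exp L0 * L0 := by positivity
    calc |Aerr n m| ≤ 50 * (n/m * L) := htriv
      _ ≤ 50 * (Real.exp L0 * L0) := by linarith
      _ ≤ 50 * (Real.exp L0 * L0) * (Real.exp L0 * R) := le_mul_of_one_le_right (by linarith) hwl
      _ = _ := by ring

end Part15


/-- There exists an absolute constant `C > 0` such that for all integers
`n > m ≥ 1`, writing `u = n/m`, there is a real `E` with
`|E| ≤ C·(n^{−1/m}/(1 − n^{−1/m}) + (m/n)/(1 − (m/n)^{1/m}))` such that
`|p_{n,m}·√(2π·n·m)·exp(u·log n − u − ∑_{i=1}^m d_{m,i}·n^{1−i/m} − E) − 1| ≤ C/max{log u, n^{1/m}}`. -/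
theorem stmt3 :
    ∃ C : ℝ, 0 < C ∧ ∀ n m : ℕ, 1 ≤ m → m < n → ∀ u : ℝ, u = (n : ℝ) / (m : ℝ) →
      ∃ E : ℝ,
        |E| ≤ C * ((n : ℝ) ^ (-(1 : ℝ) / (m : ℝ)) / (1 - (n : ℝ) ^ (-(1 : ℝ) / (m : ℝ))) +
          ((m : ℝ) / (n : ℝ)) / (1 - ((m : ℝ) / (n : ℝ)) ^ ((1 : ℝ) / (m : ℝ)))) ∧
        |permProb n m * Real.sqrt (2 * Real.pi * (n : ℝ) * (m : ℝ)) *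
            Real.exp (u * Real.log n - u -
              (∑ i ∈ Finset.Icc 1 m, dcoef m i * (n : ℝ) ^ (1 - (i : ℝ) / (m : ℝ))) - E) - 1| ≤
          C / max (Real.log u) ((n : ℝ) ^ ((1 : ℝ) / (m : ℝ))) := by
  obtain ⟨C, hC, h⟩ := combine
  refine ⟨C, hC, ?_⟩
  intro n m hm hmn u hu
  have hm0 : (0:ℝ) < m := by exact_mod_cast hm
  have hn0 : (0:ℝ) < n := by exact_mod_cast (by omega : 0 < n)
  have hmn' : (m:ℝ) / n ≤ 1 := by
    rw [div_le_one hn0]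
    exact_mod_cast hmn.le
  have hwe : (n : ℝ) ^ (-(1 : ℝ) / (m : ℝ)) = wv n m := by
    rw [Real.rpow_def_of_pos hn0]
    unfold wv
    congr 1
    ring
  refine ⟨Aerr n m, ?_, ?_⟩
  · rw [hwe]
    have h1 : 0 ≤ ((m : ℝ) / (n : ℝ)) / (1 - ((m : ℝ) / (n : ℝ)) ^ ((1 : ℝ) / (m : ℝ))) := by
      apply div_nonneg (by positivity)
      have := Real.rpow_le_one (by positivity : 0 ≤ (m:ℝ)/n) hmn' (by positivity : 0 ≤ (1:ℝ)/m)
      linarith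
    refine (h n m hm hmn).trans ?_
    apply mul_le_mul_of_nonneg_left _ hC.le
    linarith
  · have hp := pc_pos m n hm
    have hq : 0 < 2 * Real.pi * (n : ℝ) * (m : ℝ) := by positivity
    have e1 : permProb n m = Real.exp (Real.log (pc m n)) := by
      rw [permProb_eq n m hm, Real.exp_log hp]
    have e2 : Real.sqrt (2 * Real.pi * (n : ℝ) * (m : ℝ)) =
        Real.exp (1/2 * Real.log (2 * Real.pi * (n : ℝ) * (m : ℝ))) := by
      rw [Real.sqrt_eq_rpow, Real.rpow_def_of_pos hq, mul_comm]
    have e3 : permProb n m * Real.sqrt (2 * Real.pi * (n : ℝ) * (m : ℝ)) *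
            Real.exp (u * Real.log n - u -
              (∑ i ∈ Finset.Icc 1 m, dcoef m i * (n : ℝ) ^ (1 - (i : ℝ) / (m : ℝ))) - Aerr n m) = 1 := by
      rw [e1, e2, ← Real.exp_add, ← Real.exp_add, Real.exp_eq_one_iff, hu]
      unfold Aerr
      ring
    rw [e3, sub_self, abs_zero]
    apply div_nonneg hC.le
    exact le_trans (Real.rpow_nonneg hn0.le _) (le_max_right _ _)
end

section
/- There exist constants c, C, δ > 0 and an integer N such that for all integers n ≥ N and all integers m with 2 ≤ m ≤ δ·log n, writing u = n/m, one has c·u·n^{−1/m} ≤ log p_{n,m} − u·(1 − log n) ≤ C·u·n^{−1/m}. -/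
open Real

open scoped Nat in
lemma card_term (n : ℕ) (c : Multiset ℕ) (hs : c.sum ≤ n) (h2 : ∀ a ∈ c, 2 ≤ a) :
    ((Finset.univ.filter (fun g : Equiv.Perm (Fin n) => g.cycleType = c)).card : ℝ) *
      (((n - c.sum)! : ℝ) * (c.prod : ℝ) * ∏ x ∈ c.toFinset, ((c.count x)! : ℝ)) = (n ! : ℝ) := by
  have h := Equiv.Perm.card_of_cycleType_mul_eq (Fin n) c
  rw [if_pos (by simpa using ⟨hs, h2⟩)] at h
  simp only [Fintype.card_fin] at h
  have h' := congrArg (fun x : ℕ => (x : ℝ)) h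
  simp only [Nat.cast_mul, Nat.cast_prod] at h'
  exact h'

lemma permProb_eq_s4 (n m : ℕ) : permProb n m =
    ((Finset.univ.filter (fun g : Equiv.Perm (Fin n) => ∀ c ∈ g.cycleType, c ≤ m)).card : ℝ) /
      (Nat.factorial n : ℝ) := by
  unfold permProb
  rw [Nat.card_eq_fintype_card, Fintype.card_subtype]

lemma permProb_pos (n m : ℕ) : 0 < permProb n m := by
  rw [permProb_eq_s4]
  apply div_pos
  · norm_cast
    apply Finset.card_pos.mpr
    exact ⟨1, by simp⟩
  · positivity

def cmap (n M : ℕ) (c : Multiset ℕ) : Fin (M + 1) → ℕ :=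
  fun i => if (i : ℕ) = 0 then n - c.sum else c.count ((i : ℕ) + 1)

lemma prod_toFinset_eq (M : ℕ) (c : Multiset ℕ) (h2 : ∀ a ∈ c, 2 ≤ a) (hm : ∀ a ∈ c, a ≤ M + 1)
    (f : ℕ → ℕ → ℝ) (hf : ∀ x, f x 0 = 1) :
    ∏ x ∈ c.toFinset, f x (c.count x) = ∏ i : Fin M, f ((i : ℕ) + 2) (c.count ((i : ℕ) + 2)) := by
  rw [Fin.prod_univ_eq_prod_range (fun i => f (i + 2) (c.count (i + 2))) M]
  rw [← Finset.prod_image (s := Finset.range M) (g := fun i => i + 2)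
    (f := fun x => f x (c.count x)) (by intro a _ b _ h; simpa using h)]
  apply Finset.prod_subset
  · intro x hx
    have hx' := Multiset.mem_toFinset.mp hx
    have := h2 x hx'
    have := hm x hx'
    simp only [Finset.mem_image, Finset.mem_range]
    exact ⟨x - 2, by omega, by omega⟩
  · intro x _ hx
    rw [Multiset.count_eq_zero_of_notMem (by simpa using hx), hf]

open scoped Nat in
lemma term_eq (n M : ℕ) (z : ℝ) (c : Multiset ℕ) (hs : c.sum ≤ n)
    (h2 : ∀ a ∈ c, 2 ≤ a) (hm : ∀ a ∈ c, a ≤ M + 1) :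
    ((Finset.univ.filter (fun g : Equiv.Perm (Fin n) => g.cycleType = c)).card : ℝ) / (n ! : ℝ)
      * z ^ n = ∏ i : Fin (M + 1),
        (z ^ ((i : ℕ) + 1) / (((i : ℕ) + 1 : ℕ) : ℝ)) ^ (cmap n M c i) / ((cmap n M c i)! : ℝ) := by
  have h := card_term n c hs h2
  rw [Fin.prod_univ_succ]
  have e1 := prod_toFinset_eq M c h2 hm (fun x k => (z ^ x / (x : ℝ)) ^ k / (k ! : ℝ)) (by simp)
  have e2 : ∏ x ∈ c.toFinset, ((z ^ x / (x : ℝ)) ^ (c.count x) / ((c.count x)! : ℝ))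
      = z ^ c.sum / ((c.prod : ℝ) * ∏ x ∈ c.toFinset, ((c.count x)! : ℝ)) := by
    rw [Finset.prod_div_distrib]
    simp_rw [div_pow]
    rw [Finset.prod_div_distrib, Finset.prod_multiset_count, Finset.sum_multiset_count]
    push_cast
    rw [← Finset.prod_pow_eq_pow_sum, div_div]
    congr 1
    apply Finset.prod_congr rfl
    intro x _
    rw [← pow_mul, smul_eq_mul, mul_comm]
  have e3 : ∏ i : Fin M, (z ^ ((i.succ : ℕ) + 1) / (((i.succ : ℕ) + 1 : ℕ) : ℝ)) ^ (cmap n M c i.succ)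
      / ((cmap n M c i.succ)! : ℝ) = z ^ c.sum / ((c.prod : ℝ) * ∏ x ∈ c.toFinset, ((c.count x)! : ℝ)) := by
    rw [← e2, e1]
    apply Finset.prod_congr rfl
    intro i _
    simp only [cmap, Fin.val_succ]
    rw [if_neg (by omega)]
  rw [e3]
  have hpr : (c.prod : ℝ) ≠ 0 := by
    norm_cast
    intro h0
    have := h2 0 (Multiset.prod_eq_zero_iff.mp h0)
    omega
  have hP : ∏ x ∈ c.toFinset, ((c.count x)! : ℝ) ≠ 0 :=
    Finset.prod_ne_zero_iff.mpr fun x _ => by positivity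
  have hf : ((n - c.sum)! : ℝ) ≠ 0 := by positivity
  have hz : z ^ n = z ^ (n - c.sum) * z ^ c.sum := by rw [← pow_add]; congr 1; omega
  have hq : ((Finset.univ.filter (fun g : Equiv.Perm (Fin n) => g.cycleType = c)).card : ℝ) ≠ 0 := by
    intro h0
    rw [h0, zero_mul] at h
    have : (n ! : ℝ) ≠ 0 := by positivity
    exact this h.symm
  simp only [cmap, Fin.val_zero, if_true, zero_add, pow_one, Nat.cast_one, div_one]
  rw [hz, ← h]
  field_simp

open scoped Nat in
lemma permProb_upper (n M : ℕ) (z : ℝ) (hz : 0 < z) :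
    permProb n (M + 1) * z ^ n ≤ exp (∑ i ∈ Finset.range (M + 1), z ^ (i + 1) / ((i + 1 : ℕ) : ℝ)) := by
  rw [permProb_eq_s4, ← Fin.sum_univ_eq_sum_range (fun i => z ^ (i + 1) / ((i + 1 : ℕ) : ℝ)), Real.exp_sum]
  set S := Finset.univ.filter (fun g : Equiv.Perm (Fin n) => ∀ c ∈ g.cycleType, c ≤ M + 1) with hS
  have hprop : ∀ c ∈ S.image Equiv.Perm.cycleType, c.sum ≤ n ∧ (∀ a ∈ c, 2 ≤ a) ∧ ∀ a ∈ c, a ≤ M + 1 := by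
    intro c hc
    obtain ⟨g, hg, rfl⟩ := Finset.mem_image.mp hc
    refine ⟨?_, fun a ha => Equiv.Perm.two_le_of_mem_cycleType ha, by simpa [hS] using hg⟩
    have := g.sum_cycleType_le
    simpa using this
  calc (S.card : ℝ) / (n ! : ℝ) * z ^ n
      = ∑ c ∈ S.image Equiv.Perm.cycleType, ((Finset.univ.filter (fun g : Equiv.Perm (Fin n) => g.cycleType = c)).card : ℝ) / (n ! : ℝ) * z ^ n := by
        rw [Finset.card_eq_sum_card_image Equiv.Perm.cycleType S, ← Finset.sum_mul, ← Finset.sum_div]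
        push_cast
        congr 2
        apply Finset.sum_congr rfl
        intro c hc
        congr 2
        ext g
        simp only [hS, Finset.mem_filter, Finset.mem_univ, true_and, and_iff_right_iff_imp]
        rintro rfl
        exact (hprop _ hc).2.2
    _ = ∑ c ∈ S.image Equiv.Perm.cycleType, ∏ i : Fin (M + 1),
        (z ^ ((i : ℕ) + 1) / (((i : ℕ) + 1 : ℕ) : ℝ)) ^ (cmap n M c i) / ((cmap n M c i)! : ℝ) := by
        apply Finset.sum_congr rfl
        intro c hc
        obtain ⟨a, b, d⟩ := hprop c hc
        exact term_eq n M z c a b d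
    _ = ∑ a ∈ (S.image Equiv.Perm.cycleType).image (cmap n M), ∏ i : Fin (M + 1),
        (z ^ ((i : ℕ) + 1) / (((i : ℕ) + 1 : ℕ) : ℝ)) ^ (a i) / ((a i)! : ℝ) := by
        rw [Finset.sum_image (s := S.image Equiv.Perm.cycleType) (g := cmap n M)]
        intro c hc d hd hcd
        obtain ⟨-, c2, cm⟩ := hprop c hc
        obtain ⟨-, d2, dm⟩ := hprop d hd
        ext x
        by_cases hx : 2 ≤ x ∧ x ≤ M + 1
        · have := congrFun hcd ⟨x - 1, by omega⟩
          simp only [cmap] at this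
          rw [if_neg (by omega), if_neg (by omega), show x - 1 + 1 = x by omega] at this
          exact this
        · rw [Multiset.count_eq_zero_of_notMem fun h => hx ⟨c2 x h, cm x h⟩,
            Multiset.count_eq_zero_of_notMem fun h => hx ⟨d2 x h, dm x h⟩]
    _ ≤ ∑ a ∈ Fintype.piFinset (fun _ : Fin (M + 1) => Finset.range (n + 1)), ∏ i : Fin (M + 1),
        (z ^ ((i : ℕ) + 1) / (((i : ℕ) + 1 : ℕ) : ℝ)) ^ (a i) / ((a i)! : ℝ) := by
        apply Finset.sum_le_sum_of_subset_of_nonneg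
        · intro a ha
          obtain ⟨c, hc, rfl⟩ := Finset.mem_image.mp ha
          obtain ⟨cs, c2, -⟩ := hprop c hc
          rw [Fintype.mem_piFinset]
          intro i
          rw [Finset.mem_range]
          simp only [cmap]
          split_ifs
          · omega
          · have h1 := Multiset.count_le_card (i + 1 : ℕ) c
            have h3 := Multiset.card_nsmul_le_sum (s := c) (a := 1) (fun x hx => by have := c2 x hx; omega)
            simp at h3
            omega
        · intro a _ _
          positivity
    _ = ∏ i : Fin (M + 1), ∑ k ∈ Finset.range (n + 1),
        (z ^ ((i : ℕ) + 1) / (((i : ℕ) + 1 : ℕ) : ℝ)) ^ k / (k ! : ℝ) := by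
        rw [Finset.prod_univ_sum]
    _ ≤ _ := by
        apply Finset.prod_le_prod
        · intro i _; positivity
        · intro i _
          exact Real.sum_le_exp_of_nonneg (by positivity) _

/-- lower bound from a single cycle type -/
lemma permProb_lower (n m a k : ℕ) (hm : 2 ≤ m) (h : m * a + (m - 1) * k = n) :
    1 ≤ permProb n m * ((Nat.factorial a : ℝ) * (Nat.factorial k : ℝ) * (m : ℝ) ^ (a + k)) := by
  have key : ∀ c : Multiset ℕ, c.sum ≤ n → (∀ x ∈ c, 2 ≤ x) → (∀ x ∈ c, x ≤ m) → 
      1 ≤ permProb n m * ((Nat.factorial (n - c.sum) : ℝ) * (c.prod : ℝ) *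
        ∏ x ∈ c.toFinset, (Nat.factorial (c.count x) : ℝ)) := by
    intro c hs h2 hcm
    have h1 := card_term n c hs h2
    have hn : (0 : ℝ) < Nat.factorial n := by positivity
    rw [permProb_eq_s4, div_mul_eq_mul_div, le_div_iff₀ hn, one_mul, ← h1]
    refine mul_le_mul_of_nonneg_right (Nat.cast_le.mpr (Finset.card_le_card ?_)) (by positivity)
    intro g hg
    simp only [Finset.mem_filter, Finset.mem_univ, true_and] at hg ⊢
    subst hg
    exact hcm
  have hp := permProb_pos n m
  by_cases h2 : m = 2
  · subst h2
    refine (key (Multiset.replicate a 2) (by simp; omega) (by simp [Multiset.mem_replicate]) (by simp [Multiset.mem_replicate])).trans ?_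
    have e : n - (Multiset.replicate a 2).sum = k := by simp; omega
    rw [e]
    apply mul_le_mul_of_nonneg_left _ hp.le
    have : ∏ x ∈ (Multiset.replicate a 2).toFinset, (Nat.factorial ((Multiset.replicate a 2).count x) : ℝ) ≤ Nat.factorial a := by
      rcases Nat.eq_zero_or_pos a with rfl | ha
      · simp
      · rw [Multiset.toFinset_replicate, if_neg (by omega)]; simp
    calc _ ≤ (Nat.factorial k : ℝ) * (((Multiset.replicate a 2).prod : ℕ) : ℝ) * Nat.factorial a := by gcongr
      _ = (Nat.factorial a : ℝ) * (Nat.factorial k : ℝ) * 2 ^ a := by simp; ring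
      _ ≤ _ := by push_cast; gcongr <;> norm_num
  · set c := Multiset.replicate a m + Multiset.replicate k (m - 1) with hc
    have hsum : c.sum = n := by simp [hc]; rw [← h]; ring
    refine (key c hsum.le ?_ ?_).trans ?_
    · intro x hx; simp [hc, Multiset.mem_replicate] at hx; omega
    · intro x hx; simp [hc, Multiset.mem_replicate] at hx; omega
    apply mul_le_mul_of_nonneg_left _ hp.le
    have hle : ∏ x ∈ c.toFinset, (Nat.factorial (c.count x) : ℝ) ≤ (Nat.factorial a : ℝ) * Nat.factorial k := by
      have : c.toFinset ⊆ {m, m - 1} := by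
        intro x hx; rw [Multiset.mem_toFinset, hc, Multiset.mem_add, Multiset.mem_replicate, Multiset.mem_replicate] at hx; simp; omega
      rw [Finset.prod_subset this]
      · rw [Finset.prod_pair (by omega)]
        simp [hc, Multiset.count_replicate]
        rw [if_neg (by omega), if_neg (by omega)]; simp
      · intro x _ hx
        rw [Multiset.count_eq_zero_of_notMem (by simpa using hx)]; simp
    have hpr : (c.prod : ℝ) ≤ (m : ℝ) ^ (a + k) := by
      norm_cast
      simp only [hc, Multiset.prod_add, Multiset.prod_replicate]
      rw [pow_add]
      gcongr
      omega
    rw [hsum]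
    simp only [Nat.sub_self, Nat.factorial_zero, Nat.cast_one, one_mul]
    rw [mul_comm]
    gcongr

lemma log_fact_le (b : ℕ) : Real.log (Nat.factorial b) ≤ b * Real.log b - b + Real.log b + 1 := by
  induction b with
  | zero => simp
  | succ b ih =>
    rcases Nat.eq_zero_or_pos b with rfl | hb
    · simp
    have hb' : (0 : ℝ) < b := by exact_mod_cast hb
    rw [Nat.factorial_succ]
    push_cast
    rw [Real.log_mul (by positivity) (by positivity)]
    have h := Real.one_sub_inv_le_log_of_pos (x := ((b : ℝ) + 1) / b) (by positivity)
    rw [Real.log_div (by positivity) (by positivity)] at h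
    have h2 : ((b : ℝ) + 1) * (1 - (((b : ℝ) + 1) / b)⁻¹) = 1 := by field_simp; ring
    have h3 := mul_le_mul_of_nonneg_left h (show (0 : ℝ) ≤ b + 1 by positivity)
    rw [h2] at h3
    nlinarith

lemma sum_bound (z : ℝ) (hz : 4 ≤ z) (k : ℕ) :
    ∑ i ∈ Finset.range (k + 1), z ^ (i + 1) / ((i + 1 : ℕ) : ℝ) ≤ 2 * (z ^ (k + 1) / ((k + 1 : ℕ) : ℝ)) := by
  induction k with
  | zero => simp; linarith
  | succ k ih =>
    rw [Finset.sum_range_succ]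
    have : 2 * (z ^ (k + 1) / ((k + 1 : ℕ) : ℝ)) ≤ z ^ (k + 1 + 1) / ((k + 1 + 1 : ℕ) : ℝ) := by
      rw [← mul_div_assoc, div_le_div_iff₀ (by positivity) (by positivity), pow_succ z (k + 1)]
      have hp : 0 < z ^ (k + 1) := by positivity
      push_cast
      have hk : (0 : ℝ) ≤ k := by positivity
      have : 2 * ((k : ℝ) + 1 + 1) ≤ z * (k + 1) := by nlinarith
      calc 2 * z ^ (k + 1) * ((k : ℝ) + 1 + 1) = z ^ (k + 1) * (2 * ((k : ℝ) + 1 + 1)) := by ring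
        _ ≤ z ^ (k + 1) * (z * (k + 1)) := by gcongr
        _ = _ := by ring
    linarith

lemma upper_part (n m : ℕ) (hn : 1 ≤ n) (hm : 2 ≤ m) (z : ℝ) (hz4 : 4 ≤ z)
    (hzm : z ^ m = n) (hlz : Real.log z = Real.log n / m) :
    Real.log (permProb n m) - (n : ℝ) / m * (1 - Real.log n) ≤ 4 * ((n : ℝ) / m) * z⁻¹ := by
  obtain ⟨k, rfl⟩ : ∃ k, m = k + 1 + 1 := ⟨m - 2, by omega⟩
  have hz : 0 < z := by linarith
  have h := permProb_upper n (k + 1) z hz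
  have hp := permProb_pos n (k + 1 + 1)
  have h1 := Real.log_le_log (by positivity) h
  rw [Real.log_exp, Real.log_mul (by positivity) (by positivity), Real.log_pow, hlz,
    Finset.sum_range_succ, hzm] at h1
  have h2 := sum_bound z hz4 k
  have hn' : (0 : ℝ) < n := by exact_mod_cast hn
  have h3 : z ^ (k + 1) = n * z⁻¹ := by rw [← hzm, pow_succ z (k + 1)]; field_simp
  rw [h3] at h2
  have h4 : 2 * ((n : ℝ) * z⁻¹ / ((k + 1 : ℕ) : ℝ)) ≤ 4 * ((n : ℝ) / ((k + 1 + 1 : ℕ) : ℝ)) * z⁻¹ := by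
    have : (1 : ℝ) / ((k + 1 : ℕ) : ℝ) ≤ 2 / ((k + 1 + 1 : ℕ) : ℝ) := by
      rw [div_le_div_iff₀ (by positivity) (by positivity)]
      push_cast
      have : (0 : ℝ) ≤ k := by positivity
      linarith
    calc 2 * ((n : ℝ) * z⁻¹ / ((k + 1 : ℕ) : ℝ)) = 2 * n * z⁻¹ * (1 / ((k + 1 : ℕ) : ℝ)) := by ring
      _ ≤ 2 * n * z⁻¹ * (2 / ((k + 1 + 1 : ℕ) : ℝ)) := by gcongr
      _ = _ := by ring
  have h5 : (n : ℝ) / ((k + 1 + 1 : ℕ) : ℝ) * (1 - Real.log n) =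
    n / ((k + 1 + 1 : ℕ) : ℝ) - n * (Real.log n / ((k + 1 + 1 : ℕ) : ℝ)) := by ring
  rw [h5]
  linarith

set_option maxHeartbeats 2000000 in
lemma lower_part (n m : ℕ) (hn : 1 ≤ n) (hm : 2 ≤ m) (z : ℝ) (hz4 : 4 ≤ z)
    (hlz : Real.log z = Real.log n / m) (hL : 100 ≤ Real.log n)
    (hmL : (m : ℝ) ≤ Real.log n) (W : ℝ) (hW : W = (n : ℝ) / m * z⁻¹)
    (hWL : 2 * Real.log n ^ 2 ≤ W) :
    1 / 16 * W ≤ Real.log (permProb n m) - (n : ℝ) / m * (1 - Real.log n) := by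
  set L := Real.log n with hLdef
  have hz : 0 < z := by linarith
  have hn' : (0 : ℝ) < n := by exact_mod_cast hn
  have hm2 : (2 : ℝ) ≤ m := by exact_mod_cast hm
  have hm' : (0 : ℝ) < m := by linarith
  have hWpos : 0 < W := by rw [hW]; positivity
  have hWu : W ≤ n / m := by
    rw [hW]
    have : z⁻¹ ≤ 1 := inv_le_one_of_one_le₀ (by linarith)
    calc (n : ℝ) / m * z⁻¹ ≤ n / m * 1 := by gcongr
      _ = _ := by ring
  have hun : (n : ℝ) / m ≤ n := div_le_self hn'.le (by linarith)
  set b := ⌊((n : ℝ) + W / 8) / m⌋₊ with hb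
  have hb1 : (b : ℝ) * m ≤ n + W / 8 := by
    rw [← le_div_iff₀ hm']
    exact Nat.floor_le (by positivity)
  have hb2 : (n : ℝ) + W / 8 < (b + 1) * m := by
    rw [← div_lt_iff₀ hm']
    exact Nat.lt_floor_add_one _
  have hWbig : 48 * L + 32 ≤ W := by nlinarith
  have hnb : n ≤ b * m := by
    have : (n : ℝ) ≤ b * m := by linarith
    exact_mod_cast this
  obtain ⟨k, hk⟩ := Nat.exists_eq_add_of_le hnb
  have hkR : (b : ℝ) * m = n + k := by exact_mod_cast hk
  have hk1 : (k : ℝ) ≤ W / 8 := by linarith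
  have hk2 : W / 8 - m ≤ k := by linarith
  have hkpos : (0 : ℝ) < k := by linarith
  have hub : (n : ℝ) / m ≤ b := by
    rw [div_le_iff₀ hm', hkR]; linarith
  have hkb : k ≤ b := by
    have : (k : ℝ) ≤ b := by linarith
    exact_mod_cast this
  obtain ⟨a, ha⟩ := Nat.exists_eq_add_of_le hkb
  have haR : (b : ℝ) = k + a := by exact_mod_cast ha
  have hsum : m * a + (m - 1) * k = n := by
    obtain ⟨j, rfl⟩ : ∃ j, m = j + 1 := ⟨m - 1, by omega⟩
    rw [ha] at hk
    simp only [Nat.add_sub_cancel]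
    nlinarith
  have hbpos : (0 : ℝ) < b := lt_of_lt_of_le (by positivity) hub
  have hkn : (k : ℝ) ≤ n := by linarith
  have hbn : (b : ℝ) ≤ n := by
    have : (b : ℝ) * 2 ≤ b * m := by gcongr
    linarith
  have hp := permProb_pos n m
  have h0 := Real.log_le_log one_pos (permProb_lower n m a k hm hsum)
  rw [Real.log_one, Real.log_mul (by positivity) (by positivity),
    Real.log_mul (by positivity) (by positivity), Real.log_mul (by positivity) (by positivity),
    Real.log_pow] at h0
  push_cast at h0
  have fa := log_fact_le a
  have fk := log_fact_le k
  have hlb : Real.log b ≤ L := Real.log_le_log hbpos hbn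
  have hlk : Real.log k ≤ L := Real.log_le_log hkpos hkn
  have hlbpos : 0 ≤ Real.log b := Real.log_natCast_nonneg b
  have hla : Real.log a ≤ Real.log b := by
    rcases Nat.eq_zero_or_pos a with h | h
    · rw [h]; simpa using hlbpos
    · exact Real.log_le_log (by exact_mod_cast h) (by linarith)
  have haa : (a : ℝ) * Real.log a ≤ a * Real.log b := by gcongr
  have hbm : Real.log b + Real.log m ≤ L + k / n := by
    rw [← Real.log_mul hbpos.ne' hm'.ne', hkR]
    have : (n : ℝ) + k = n * (1 + k / n) := by field_simp
    rw [this, Real.log_mul hn'.ne' (by positivity)]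
    have := Real.log_le_sub_one_of_pos (x := 1 + (k : ℝ) / n) (by positivity)
    linarith
  have hlog8 : 2 ≤ Real.log 8 := by
    rw [Real.le_log_iff_exp_le (by norm_num)]
    have h1 := Real.exp_one_lt_d9
    have h2 : Real.exp 2 = Real.exp 1 * Real.exp 1 := by rw [← Real.exp_add]; norm_num
    have h3 := Real.exp_pos 1
    rw [h2]; nlinarith
  have hbk : 2 + L / m ≤ Real.log b - Real.log k := by
    have h8 : 8 * z * k ≤ b := by
      refine le_trans ?_ hub
      calc 8 * z * k ≤ 8 * z * (W / 8) := by gcongr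
        _ = n / m := by rw [hW]; field_simp
    have := Real.log_le_log (by positivity) h8
    rw [Real.log_mul (by positivity) hkpos.ne', Real.log_mul (by norm_num) hz.ne', hlz] at this
    linarith
  have hbu : (b : ℝ) = n / m + k / m := by
    rw [← add_div, eq_div_iff hm'.ne', hkR]
  have q1 : (b : ℝ) * (Real.log b + Real.log m) ≤ b * (L + k / n) := by gcongr
  have q2 : (k : ℝ) * (2 + L / m) ≤ k * (Real.log b - Real.log k) := by gcongr
  have q3 : (b : ℝ) * (k / n) ≤ k := by
    calc (b : ℝ) * (k / n) ≤ n * (k / n) := by gcongr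
      _ = k := by field_simp
  have q4 : (b : ℝ) * L = n / m * L + k * (L / m) := by rw [hbu]; ring
  have q5 : Real.log a + Real.log k ≤ 2 * L := by linarith
  have q6 : (a : ℝ) * Real.log b = b * Real.log b - k * Real.log b := by rw [haR]; ring
  have q7 : ((a : ℝ) + k) * Real.log m = b * Real.log m := by rw [haR]; ring
  rw [q7] at h0
  linarith

/-- There exist constants `c, C, δ > 0` and `N` such that for all `n ≥ N`
and `2 ≤ m ≤ δ·log n`, writing `u = n/m`, one has
`c·u·n^{−1/m} ≤ log p_{n,m} − u·(1 − log n) ≤ C·u·n^{−1/m}`. -/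
theorem stmt4 :
    ∃ c C δ : ℝ, 0 < c ∧ 0 < C ∧ 0 < δ ∧ ∃ N : ℕ, ∀ n : ℕ, N ≤ n → ∀ m : ℕ, 2 ≤ m →
      (m : ℝ) ≤ δ * Real.log n → ∀ u : ℝ, u = (n : ℝ) / (m : ℝ) →
      c * u * (n : ℝ) ^ (-(1 : ℝ) / (m : ℝ)) ≤
          Real.log (permProb n m) - u * (1 - Real.log n) ∧
        Real.log (permProb n m) - u * (1 - Real.log n) ≤
          C * u * (n : ℝ) ^ (-(1 : ℝ) / (m : ℝ)) := by
  refine ⟨1 / 16, 4, 1 / 2, by norm_num, by norm_num, by norm_num, ?_⟩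
  have e1 : ∀ᶠ n : ℕ in Filter.atTop, 100 ≤ Real.log n :=
    (Real.tendsto_log_atTop.comp tendsto_natCast_atTop_atTop).eventually_ge_atTop 100
  have e2 : ∀ᶠ n : ℕ in Filter.atTop, Real.log n ^ 6 ≤ n := by
    have h := (Real.isLittleO_pow_log_id_atTop (n := 6)).bound one_pos
    have h' := tendsto_natCast_atTop_atTop (R := ℝ) |>.eventually h
    filter_upwards [h'] with n hn
    simp only [id, one_mul, Real.norm_eq_abs, Nat.abs_cast] at hn
    exact (le_abs_self _).trans hn
  obtain ⟨N, hN⟩ := Filter.eventually_atTop.mp (e1.and e2)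
  refine ⟨N, ?_⟩
  rintro n hnN m hm hmL u rfl
  obtain ⟨hL, hL6⟩ := hN n hnN
  have hn : 1 ≤ n := by
    rcases Nat.eq_zero_or_pos n with h | h
    · rw [h] at hL; norm_num at hL
    · exact h
  have hn' : (0 : ℝ) < n := by exact_mod_cast hn
  have hm2 : (2 : ℝ) ≤ m := by exact_mod_cast hm
  have hm' : (0 : ℝ) < m := by linarith
  set z : ℝ := (n : ℝ) ^ ((1 : ℝ) / m) with hzdef
  have hz : 0 < z := Real.rpow_pos_of_pos hn' _
  have hlz : Real.log z = Real.log n / m := by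
    rw [hzdef, Real.log_rpow hn']; ring
  have hzm : z ^ m = n := by
    rw [hzdef, ← Real.rpow_natCast, ← Real.rpow_mul hn'.le, one_div_mul_cancel hm'.ne', Real.rpow_one]
  have hzinv : (n : ℝ) ^ (-(1 : ℝ) / (m : ℝ)) = z⁻¹ := by
    rw [hzdef, neg_div, Real.rpow_neg hn'.le]
  have hz4 : 4 ≤ z := by
    have h1 : 2 ≤ Real.log z := by
      rw [hlz, le_div_iff₀ hm']; linarith
    have h2 := Real.add_one_le_exp (1 : ℝ)
    have h3 : Real.exp 2 = Real.exp 1 * Real.exp 1 := by rw [← Real.exp_add]; norm_num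
    have h4 := Real.exp_le_exp.mpr h1
    rw [Real.exp_log hz] at h4
    nlinarith
  have hWL : 2 * Real.log n ^ 2 ≤ (n : ℝ) / m * z⁻¹ := by
    have hz2 : z * z ≤ n := by
      rw [← hzm, ← sq]
      exact pow_le_pow_right₀ (by linarith) hm
    set L := Real.log n
    have hnz : L ^ 3 * z ≤ n := by
      apply (pow_le_pow_iff_left₀ (by positivity) hn'.le two_ne_zero).mp
      calc (L ^ 3 * z) ^ 2 = L ^ 6 * (z * z) := by ring
        _ ≤ (n : ℝ) * n := by gcongr
        _ = (n : ℝ) ^ 2 := by ring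
    rw [← div_eq_mul_inv, div_div, le_div_iff₀ (by positivity)]
    calc 2 * L ^ 2 * (m * z) ≤ 2 * L ^ 2 * ((1 / 2 * L) * z) := by gcongr
      _ = L ^ 3 * z := by ring
      _ ≤ n := hnz
  rw [hzinv]
  refine ⟨?_, upper_part n m hn hm z hz4 hzm hlz⟩
  rw [mul_assoc]
  exact lower_part n m hn hm z hz4 hlz hL (by linarith) _ rfl hWL
end
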